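/- arXiv:1403.5024 — 2 statements merged into one kernel-verified Lean document; each statement's English description precedes it below -/
import Mathlib

section
/- Let ℂ̂ = ℂ ∪ {∞} denote the one-point compactification of ℂ (a topological 2-sphere). Let Γ ⊆ ℂ̂ be a union of finitely many pairwise disjoint Jordan curves, let L ⊆ ℂ̂ be a compact subset, and let D be a Jordan domain containing L. Then there exists an integer N ≥ 0 such that for any two distinct points z₁, z₂ ∈ L there exists a Jordan arc δ ⊆ D joining z₁ to z₂ for which the intersection δ ∩ Γ is a finite set with at most N points. -/
noncomputable section

/-- A Jordan curve in the Riemann sphere `ℂ̂ = OnePoint ℂ`: the image of the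
unit circle under an injective continuous map. -/
def IsJordanCurveS (C : Set (OnePoint ℂ)) : Prop :=
  ∃ f : (Metric.sphere (0 : ℂ) 1 : Set ℂ) → OnePoint ℂ,
    Continuous f ∧ Function.Injective f ∧ Set.range f = C

/-- A Jordan arc in `ℂ̂` joining `z₁` to `z₂`: the image of an injective
continuous map from `[0,1]` sending `0 ↦ z₁` and `1 ↦ z₂`. -/
def IsJordanArcS (δ : Set (OnePoint ℂ)) (z₁ z₂ : OnePoint ℂ) : Prop :=
  ∃ f : ℝ → OnePoint ℂ, ContinuousOn f (Set.Icc 0 1) ∧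
    Set.InjOn f (Set.Icc 0 1) ∧ f '' Set.Icc 0 1 = δ ∧ f 0 = z₁ ∧ f 1 = z₂

/-!
Near each of its points a Jordan curve is an arc, and among any three points of a small disc off
the arc two are joined off the arc in a slightly larger disc: for three such points `x`, `y`, `w` a
nontrivial product of powers of `(z - x) / (z - y)` and `(z - w) / (z - y)` has a continuous
logarithm on the arc and the boundary circle, so these cannot separate all three points. Hence
`ℂ̂ \ Γ` is finitely connected at every point, which makes each point of `Γ` accessible from the
nearby components of `ℂ̂ \ Γ`, and every point of `D` has a neighbourhood in which all points are
joined to it by paths in `D` meeting `Γ` at most twice. Connectedness of `D` and compactness of `L`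
give a uniform bound, and a path between two distinct points contains an arc between them.
-/

section

open Set Metric Topology unitInterval Filter

section Logarithms

variable {X : Type*} [TopologicalSpace X] {g g₁ g₂ : X → ℂ} {K A S : Set X}

/-- `g` has a continuous logarithm on `K`. -/
def HasLogOn (g : X → ℂ) (K : Set X) : Prop :=
  ∃ u : X → ℂ, ContinuousOn u K ∧ EqOn (fun z => Complex.exp (u z)) g K

lemma HasLogOn.congr (h : HasLogOn g₁ K) (heq : EqOn g₁ g₂ K) : HasLogOn g₂ K :=
  let ⟨u, hu, hug⟩ := h
  ⟨u, hu, hug.trans heq⟩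

lemma HasLogOn.mono (h : HasLogOn g K) (hS : S ⊆ K) : HasLogOn g S :=
  let ⟨u, hu, hug⟩ := h
  ⟨u, hu.mono hS, hug.mono hS⟩

lemma HasLogOn.div (h₁ : HasLogOn g₁ K) (h₂ : HasLogOn g₂ K) :
    HasLogOn (fun z => g₁ z / g₂ z) K := by
  obtain ⟨u, hu, hug⟩ := h₁
  obtain ⟨v, hv, hvg⟩ := h₂
  exact ⟨fun z => u z - v z, hu.sub hv, fun z hz => by
    simp only [Complex.exp_sub, ← hug hz, ← hvg hz]⟩

lemma hasLogOn_univ [SimplyConnectedSpace X] [LocallyPathConnectedSpace X] (hg : Continuous g)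
    (hg0 : ∀ z, g z ≠ 0) : HasLogOn g univ := by
  obtain ⟨x₀⟩ : Nonempty X := inferInstance
  obtain ⟨u, ⟨-, hu⟩, -⟩ := Complex.isCoveringMapOn_exp.existsUnique_continuousMap_lifts
    (⟨g, hg⟩ : C(X, ℂ)) (a₀ := x₀) (Complex.exp_log (hg0 x₀)) hg0
  exact ⟨u, u.continuous.continuousOn, fun z _ => congrFun hu z⟩

lemma hasLogOn_range_of_isEmbedding {γ : I → X} (hγ : IsEmbedding γ)
    (hg : ContinuousOn g (range γ)) (hg0 : ∀ z ∈ range γ, g z ≠ 0) : HasLogOn g (range γ) := by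
  obtain ⟨u, hu, hug⟩ := hasLogOn_univ (X := ℝ) (g := g ∘ γ ∘ projIcc 0 1 zero_le_one)
    (hg.comp_continuous (hγ.continuous.comp continuous_projIcc) fun t => mem_range_self _)
    fun t => hg0 _ (mem_range_self _)
  have hinv (t : I) : Function.invFun γ (γ t) = t := Function.leftInverse_invFun hγ.injective t
  refine ⟨fun z => u (Function.invFun γ z : I), ?_, ?_⟩
  · rw [← image_univ, hγ.isInducing.continuousOn_image_iff]
    refine (continuousOn_univ.1 hu |>.comp continuous_subtype_val).continuousOn.congr fun t _ => ?_
    simp only [Function.comp_apply, hinv]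
  · rintro _ ⟨t, rfl⟩
    simp only [hinv, hug (mem_univ _), Function.comp_apply, projIcc_val]

lemma exists_continuousOn_union_eqOn {f₁ f₂ : X → ℂ} (hA : IsClosed A) (hS : IsClosed S)
    (h₁ : ContinuousOn f₁ A) (h₂ : ContinuousOn f₂ S) (h : EqOn f₁ f₂ (A ∩ S)) :
    ∃ f : X → ℂ, ContinuousOn f (A ∪ S) ∧ EqOn f f₁ A ∧ EqOn f f₂ S := by
  classical
  have heqA : EqOn (A.piecewise f₁ f₂) f₁ A := piecewise_eqOn A f₁ f₂
  have heqS : EqOn (A.piecewise f₁ f₂) f₂ S := fun z hz => by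
    by_cases hzA : z ∈ A
    · exact (heqA hzA).trans (h ⟨hzA, hz⟩)
    · exact piecewise_eqOn_compl A f₁ f₂ hzA
  exact ⟨_, (h₁.congr heqA).union_of_isClosed (h₂.congr heqS) hA hS, heqA, heqS⟩

lemma HasLogOn.exists_int_of_inter (hA : HasLogOn g A) (hS : HasLogOn g S) :
    ∃ (u v : X → ℂ) (n : X → ℤ), ContinuousOn u A ∧ ContinuousOn v S ∧
      EqOn (fun z => Complex.exp (u z)) g A ∧ EqOn (fun z => Complex.exp (v z)) g S ∧
      ∀ z ∈ A ∩ S, u z = v z + n z * (2 * Real.pi * Complex.I) := by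
  obtain ⟨u, hu, hug⟩ := hA
  obtain ⟨v, hv, hvg⟩ := hS
  have hn (z : X) : ∃ n : ℤ, z ∈ A ∩ S → u z = v z + n * (2 * Real.pi * Complex.I) := by
    by_cases hz : z ∈ A ∩ S
    · obtain ⟨n, hn⟩ := Complex.exp_eq_exp_iff_exists_int.1 ((hug hz.1).trans (hvg hz.2).symm)
      exact ⟨n, fun _ => hn⟩
    · exact ⟨0, fun h => absurd h hz⟩
  choose n hn using hn
  exact ⟨u, v, n, hu, hv, hug, hvg, hn⟩

-- On `A ∩ S` two logarithms of `gᵢ` differ by `2πi nᵢ`; a combination is single-valued as soon as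
-- `s n₁ + t n₂` takes the same value at `p` and `q`, one linear condition on `(s, t)`.
lemma HasLogOn.exists_zpow_mul_zpow_union (hA : IsClosed A) (hS : IsClosed S) {p q : X}
    (hAS : A ∩ S ⊆ {p, q}) (h₁A : HasLogOn g₁ A) (h₁S : HasLogOn g₁ S) (h₂A : HasLogOn g₂ A)
    (h₂S : HasLogOn g₂ S) :
    ∃ s t : ℤ, (s ≠ 0 ∨ t ≠ 0) ∧ HasLogOn (fun z => g₁ z ^ s * g₂ z ^ t) (A ∪ S) := by
  obtain ⟨u₁, v₁, n₁, hu₁, hv₁, hug₁, hvg₁, huv₁⟩ := h₁A.exists_int_of_inter h₁S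
  obtain ⟨u₂, v₂, n₂, hu₂, hv₂, hug₂, hvg₂, huv₂⟩ := h₂A.exists_int_of_inter h₂S
  obtain ⟨s, t, hst, hdep⟩ : ∃ s t : ℤ, (s ≠ 0 ∨ t ≠ 0) ∧
      s * n₁ p + t * n₂ p = s * n₁ q + t * n₂ q := by
    by_cases h : n₂ p = n₂ q
    · exact ⟨0, 1, .inr one_ne_zero, by simp [h]⟩
    · exact ⟨n₂ q - n₂ p, n₁ p - n₁ q, .inl (sub_ne_zero.2 (Ne.symm h)), by ring⟩
  have hconst : ∀ z ∈ A ∩ S, s * n₁ z + t * n₂ z = s * n₁ p + t * n₂ p := fun z hz => by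
    rcases hAS hz with rfl | rfl
    exacts [rfl, hdep.symm]
  obtain ⟨w, hw, hwA, hwS⟩ := exists_continuousOn_union_eqOn (f₁ := fun z => s * u₁ z + t * u₂ z)
    (f₂ := fun z => s * v₁ z + t * v₂ z +
      ((s * n₁ p + t * n₂ p : ℤ) : ℂ) * (2 * Real.pi * Complex.I))
    hA hS (by fun_prop) (by fun_prop) fun z hz => by
      simp only [← hconst z hz, huv₁ z hz, huv₂ z hz]
      push_cast
      ring
  refine ⟨s, t, hst, w, hw, ?_⟩
  rintro z (hz | hz)
  · simp only [hwA hz, Complex.exp_add, Complex.exp_int_mul, ← hug₁ hz, ← hug₂ hz]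
  · simp only [hwS hz, Complex.exp_add, Complex.exp_int_mul, Complex.exp_two_pi_mul_I,
      one_zpow, mul_one, ← hvg₁ hz, ← hvg₂ hz]

end Logarithms

section Winding

lemma hasLogOn_sub_div_sub_of_disjoint_ball {c : ℂ} {r : ℝ} {S : Set ℂ}
    (hS : Disjoint (ball c r) S) {x y : ℂ} (hx : x ∈ ball c r) (hy : y ∈ ball c r) :
    HasLogOn (fun z => (z - x) / (z - y)) S := by
  have hne : ∀ z ∈ S, z - c ≠ 0 := fun z hz h =>
    hS.ne_of_mem (mem_ball_self (pos_of_mem_ball hx)) hz (sub_eq_zero.1 h).symm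
  have hlog : ∀ w ∈ ball c r, HasLogOn (fun z => 1 - (w - c) / (z - c)) S := fun w hw => by
    have hslit : ∀ z ∈ S, 1 - (w - c) / (z - c) ∈ Complex.slitPlane := fun z hz => by
      have hz' : r ≤ ‖z - c‖ := by
        simpa [dist_eq_norm] using fun h : z ∈ ball c r => hS.ne_of_mem h hz rfl
      rw [sub_eq_add_neg]
      refine Complex.mem_slitPlane_of_norm_lt_one ?_
      rw [norm_neg, norm_div, div_lt_one (norm_pos_iff.2 (hne z hz))]
      exact (mem_ball_iff_norm.1 hw).trans_le hz'
    exact ⟨fun z => Complex.log (1 - (w - c) / (z - c)), ContinuousOn.clog (continuousOn_const.sub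
      (continuousOn_const.div (by fun_prop) hne)) hslit,
      fun z hz => Complex.exp_log (Complex.slitPlane_ne_zero (hslit z hz))⟩
  refine ((hlog x hx).div (hlog y hy)).congr fun z hz => ?_
  have h0 := hne z hz
  have hfactor (w : ℂ) : 1 - (w - c) / (z - c) = (z - w) / (z - c) := by
    field_simp
    ring
  simp only [hfactor, div_div_div_cancel_right₀ h0]

lemma eq_zero_of_hasLogOn_zpow_sphere {a : ℂ} {R : ℝ} (hR : 0 < R) {l : ℤ}
    (h : HasLogOn (fun z => (z - a) ^ l) (sphere a R)) : l = 0 := by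
  obtain ⟨u, hu, hug⟩ := h
  have hmem (t : ℝ) : circleMap a R t ∈ sphere a R := circleMap_mem_sphere a hR.le t
  let k : ℝ → ℂ := fun t => u (circleMap a R t) - l * (t * Complex.I)
  have hk : Continuous k :=
    (hu.comp_continuous (continuous_circleMap a R) hmem).sub (by fun_prop)
  have hexp (t : ℝ) : Complex.exp (k t) = (R : ℂ) ^ l := by
    simp only [k, Complex.exp_sub, hug (hmem t), circleMap_sub_center, circleMap_zero, mul_zpow,
      Complex.exp_int_mul]
    exact mul_div_cancel_right₀ _ (zpow_ne_zero _ (Complex.exp_ne_zero _))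
  have hconst : k (2 * Real.pi) = k 0 :=
    congrFun (IsCoveringMap.eq_of_comp_eq Complex.isCoveringMap_exp hk
      (continuous_const (y := k 0)) (funext fun t => Subtype.ext (by simp [hexp])) 0 rfl) _
  have hper : circleMap a R (2 * Real.pi) = circleMap a R 0 := by
    simpa using periodic_circleMap a R 0
  simpa [k, hper, Complex.I_ne_zero, Real.pi_ne_zero] using hconst

lemma eq_zero_of_hasLogOn_frontier {U : Set ℂ} (hU : IsOpen U) (hb : Bornology.IsBounded U)
    {a : ℂ} (ha : a ∈ U) {h : ℂ → ℂ} (hh : ContinuousOn h (closure U))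
    (h0 : ∀ z ∈ closure U, h z ≠ 0) {l : ℤ}
    (hlog : HasLogOn (fun z => (z - a) ^ l / h z) (frontier U)) : l = 0 := by
  obtain ⟨u, hu, hug⟩ := hlog
  obtain ⟨v, hv⟩ := ContinuousMap.exists_restrict_eq isClosed_frontier
    (⟨(frontier U).domRestrict u, hu.domRestrict⟩ : C(frontier U, ℂ))
  have hvu : ∀ z ∈ frontier U, v z = u z := fun z hz => DFunLike.congr_fun hv ⟨z, hz⟩
  have hne : ∀ z ∈ Uᶜ, z - a ≠ 0 := fun z hz h => hz (sub_eq_zero.1 h ▸ ha)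
  obtain ⟨F, hF, hFin, hFout⟩ := exists_continuousOn_union_eqOn
    (f₁ := fun z => Complex.exp (v z) * h z) (f₂ := fun z => (z - a) ^ l)
    isClosed_closure hU.isClosed_compl (by fun_prop)
    (ContinuousOn.zpow₀ (by fun_prop) l fun z hz => .inl (hne z hz)) fun z hz => by
      have hz' : z ∈ frontier U := hU.frontier_eq ▸ hz
      simp only [hvu z hz', hug hz', div_mul_cancel₀ _ (h0 z hz.1)]
  have hcover : closure U ∪ Uᶜ = univ :=
    univ_subset_iff.1 (union_compl_self U ▸ union_subset_union_left _ subset_closure)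
  have hF0 (z : ℂ) : F z ≠ 0 := by
    rcases hcover.ge (mem_univ z) with hz | hz
    · exact hFin hz ▸ mul_ne_zero (Complex.exp_ne_zero _) (h0 z hz)
    · exact hFout hz ▸ zpow_ne_zero _ (hne z hz)
  obtain ⟨R, hR, hUR⟩ := hb.subset_ball_lt 0 a
  have hsphere : sphere a R ⊆ Uᶜ := fun z hz hzU => sphere_disjoint_ball.ne_of_mem hz (hUR hzU) rfl
  exact eq_zero_of_hasLogOn_zpow_sphere hR
    (((hasLogOn_univ (continuousOn_univ.1 (hcover ▸ hF)) hF0).mono (subset_univ _)).congr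
      (hFout.mono hsphere))

end Winding

section Separation

lemma frontier_pathComponentIn_subset {X : Type*} [TopologicalSpace X] [LocallyPathConnectedSpace X]
    {F : Set X} (hF : IsOpen F) (x : X) : frontier (pathComponentIn F x) ⊆ frontier F := by
  rw [hF.frontier_eq, (hF.pathComponentIn x).frontier_eq]
  rintro y ⟨hy, hxy⟩
  refine ⟨closure_mono pathComponentIn_subset hy, fun hyF => hxy ?_⟩
  obtain ⟨w, hyw, hxw⟩ :=
    mem_closure_iff.1 hy _ (hF.pathComponentIn y) (mem_pathComponentIn_self hyF)
  exact JoinedIn.trans hxw (JoinedIn.symm hyw)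

-- A path component of `F` containing `x` but neither `y` nor `w` would have `(z - x) ^ s` of
-- winding number zero along its frontier.
lemma joinedIn_or_joinedIn_of_hasLogOn {F : Set ℂ} (hF : IsOpen F) (hb : Bornology.IsBounded F)
    {x y w : ℂ} (hx : x ∈ F) (hy : y ∈ F) (hw : w ∈ F) {s m n : ℤ} (hs : s ≠ 0)
    (hlog : HasLogOn (fun z => (z - x) ^ s / ((z - y) ^ m * (z - w) ^ n)) (frontier F)) :
    JoinedIn F x y ∨ JoinedIn F x w := by
  by_contra! hcon
  have hfr := frontier_pathComponentIn_subset hF x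
  have hne : ∀ p ∈ F, ¬ JoinedIn F x p → ∀ z ∈ closure (pathComponentIn F x), z - p ≠ 0 := by
    intro p hp hxp z hz h
    obtain rfl := sub_eq_zero.1 h
    have hzF : z ∈ frontier F := hfr ((hF.pathComponentIn x).frontier_eq ▸ ⟨hz, hxp⟩)
    exact (hF.frontier_eq ▸ hzF).2 hp
  have hney := hne y hy hcon.1
  have hnew := hne w hw hcon.2
  exact hs <| eq_zero_of_hasLogOn_frontier (hF.pathComponentIn x) (hb.subset pathComponentIn_subset)
    (mem_pathComponentIn_self hx)
    ((ContinuousOn.zpow₀ (by fun_prop) m fun z hz => .inl (hney z hz)).mul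
      (ContinuousOn.zpow₀ (by fun_prop) n fun z hz => .inl (hnew z hz)))
    (fun z hz => mul_ne_zero (zpow_ne_zero _ (hney z hz)) (zpow_ne_zero _ (hnew z hz)))
    (hlog.mono hfr)

lemma joinedIn_of_hasLogOn_zpow_mul_zpow {F : Set ℂ} (hF : IsOpen F) (hb : Bornology.IsBounded F)
    {x y w : ℂ} (hx : x ∈ F) (hy : y ∈ F) (hw : w ∈ F) {s t : ℤ} (hst : s ≠ 0 ∨ t ≠ 0)
    (hlog : HasLogOn (fun z => ((z - x) / (z - y)) ^ s * ((z - w) / (z - y)) ^ t) (frontier F)) :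
    JoinedIn F x y ∨ JoinedIn F x w ∨ JoinedIn F y w := by
  have hney : ∀ z ∈ frontier F, z - y ≠ 0 := fun z hz h =>
    (hF.frontier_eq ▸ hz).2 (sub_eq_zero.1 h ▸ hy)
  rcases hst with hs | ht
  · refine (joinedIn_or_joinedIn_of_hasLogOn hF hb hx hy hw hs
      (m := s + t) (n := -t) (hlog.congr fun z hz => ?_)).imp_right .inl
    simp only [div_eq_mul_inv, mul_zpow, inv_zpow, zpow_add₀ (hney z hz), zpow_neg, mul_inv,
      inv_inv]
    ring
  · refine .inr ((joinedIn_or_joinedIn_of_hasLogOn hF hb hw hx hy ht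
      (m := -s) (n := s + t) (hlog.congr fun z hz => ?_)).imp .symm .symm)
    simp only [div_eq_mul_inv, mul_zpow, inv_zpow, zpow_add₀ (hney z hz), zpow_neg, mul_inv,
      inv_inv]
    ring

lemma frontier_ball_diff_subset (c : ℂ) (r : ℝ) {K : Set ℂ} (hK : IsClosed K) :
    frontier (ball c r \ K) ⊆ K ∪ sphere c r := by
  rw [(isOpen_ball.sdiff hK).frontier_eq]
  rintro z ⟨hz, hzF⟩
  have hz' : z ∈ closedBall c r := closure_ball_subset_closedBall (closure_mono sdiff_subset hz)
  by_cases hzK : z ∈ K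
  · exact .inl hzK
  · exact .inr ((mem_closedBall.1 hz').antisymm (not_lt.1 fun h => hzF ⟨h, hzK⟩))

lemma hasLogOn_sub_div_sub_range {γ : I → ℂ} (hγ : IsEmbedding γ) {x y : ℂ} (hx : x ∉ range γ)
    (hy : y ∉ range γ) : HasLogOn (fun z => (z - x) / (z - y)) (range γ) := by
  have hne {p : ℂ} (hp : p ∉ range γ) : ∀ z ∈ range γ, z - p ≠ 0 := fun z hz h =>
    hp (sub_eq_zero.1 h ▸ hz)
  exact hasLogOn_range_of_isEmbedding hγ (.div (by fun_prop) (by fun_prop) (hne hy))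
    fun z hz => div_ne_zero (hne hx z hz) (hne hy z hz)

lemma joinedIn_of_three_points {c : ℂ} {r r' : ℝ} (hr : r' ≤ r) {γ : I → ℂ} (hγ : Continuous γ)
    (hinj : Function.Injective γ) (hγr : range γ ⊆ ball c r) {R : Set ℂ} (hR : IsClosed R)
    (hRc : Disjoint (ball c r') R) (hγR : ∀ t, γ t ∈ R → t = 0 ∨ t = 1) {x y w : ℂ}
    (hx : x ∈ ball c r' \ (range γ ∪ R)) (hy : y ∈ ball c r' \ (range γ ∪ R))
    (hw : w ∈ ball c r' \ (range γ ∪ R)) :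
    JoinedIn (ball c r \ (range γ ∪ R)) x y ∨ JoinedIn (ball c r \ (range γ ∪ R)) x w ∨
      JoinedIn (ball c r \ (range γ ∪ R)) y w := by
  have hemb : IsClosedEmbedding γ := hγ.isClosedEmbedding hinj
  have hK : IsClosed (range γ ∪ R) := hemb.isClosed_range.union hR
  have hF : IsOpen (ball c r \ (range γ ∪ R)) := isOpen_ball.sdiff hK
  have hsub := sdiff_subset_sdiff_left (t := range γ ∪ R) (ball_subset_ball (x := c) hr)
  have hdisj : Disjoint (ball c r') (R ∪ sphere c r) := hRc.union_right
    (sphere_disjoint_ball.mono_right (ball_subset_ball hr)).symm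
  have hinter : range γ ∩ (R ∪ sphere c r) ⊆ {γ 0, γ 1} := by
    rintro _ ⟨⟨t, rfl⟩, ht | ht⟩
    · rcases hγR t ht with rfl | rfl
      exacts [.inl rfl, .inr rfl]
    · exact absurd rfl (sphere_disjoint_ball.ne_of_mem ht (hγr (mem_range_self t)))
  have hA {p q : ℂ} (hp : p ∈ ball c r' \ (range γ ∪ R)) (hq : q ∈ ball c r' \ (range γ ∪ R)) :=
    hasLogOn_sub_div_sub_range hemb.isEmbedding (fun h => hp.2 (.inl h)) (fun h => hq.2 (.inl h))
  have hS {p q : ℂ} (hp : p ∈ ball c r' \ (range γ ∪ R)) (hq : q ∈ ball c r' \ (range γ ∪ R)) :=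
    hasLogOn_sub_div_sub_of_disjoint_ball hdisj hp.1 hq.1
  obtain ⟨s, t, hst, hlog⟩ := HasLogOn.exists_zpow_mul_zpow_union hemb.isClosed_range
    (hR.union isClosed_sphere) hinter (hA hx hy) (hS hx hy) (hA hw hy) (hS hw hy)
  rw [← union_assoc] at hlog
  exact joinedIn_of_hasLogOn_zpow_mul_zpow hF (isBounded_ball.subset sdiff_subset) (hsub hx)
    (hsub hy) (hsub hw) hst (hlog.mono (frontier_ball_diff_subset c r hK))

lemma exists_finite_of_three {X : Type*} (S : Set X) {r : X → X → Prop}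
    (h : ∀ x ∈ S, ∀ y ∈ S, ∀ w ∈ S, r x y ∨ r x w ∨ r y w) :
    ∃ B : Set X, B.Finite ∧ ∀ x ∈ S, ∃ b ∈ B, r b x := by
  by_cases hsep : ∃ x ∈ S, ∃ y ∈ S, ¬ r x y
  · obtain ⟨x, hx, y, hy, hxy⟩ := hsep
    refine ⟨{x, y}, toFinite _, fun w hw => ?_⟩
    rcases (h x hx y hy w hw).resolve_left hxy with hxw | hyw
    exacts [⟨x, .inl rfl, hxw⟩, ⟨y, .inr rfl, hyw⟩]
  · push Not at hsep
    rcases S.eq_empty_or_nonempty with rfl | ⟨x, hx⟩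
    · exact ⟨∅, finite_empty, by simp⟩
    · exact ⟨{x}, finite_singleton x, fun y hy => ⟨x, rfl, hsep x hx y hy⟩⟩

end Separation

section LocalArcs

variable {X Y : Type*} [TopologicalSpace X] [TopologicalSpace Y]

/-- A Jordan curve in a topological space. -/
def IsJordanCurve (C : Set X) : Prop :=
  ∃ f : sphere (0 : ℂ) 1 → X, Continuous f ∧ Function.Injective f ∧ range f = C

/-- Near `p`, the set `G` is an arc: inside any neighbourhood of `p` there is an arc whose
complement in `G` stays away from `p` and accumulates on the arc only at its two ends. The arc is
given by its parametrisation `γ`, the rest of `G` by a closed set `R` that may contain the ends. -/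
def IsLocallyArcAt (G : Set X) (p : X) : Prop :=
  ∀ V ∈ 𝓝 p, ∃ (γ : I → X) (R : Set X), Continuous γ ∧ Function.Injective γ ∧ range γ ⊆ V ∧
    IsClosed R ∧ p ∉ R ∧ (∀ t, γ t ∈ R → t = 0 ∨ t = 1) ∧ range γ ∪ R = G

/-- `Ω` is finitely connected at `p` (a point usually on its boundary): inside any neighbourhood of
`p`, finitely many path components of `Ω` cover the part of `Ω` close to `p`. -/
def IsFinitelyConnectedAt (Ω : Set X) (p : X) : Prop :=
  ∀ V ∈ 𝓝 p, ∃ B : Set X, B.Finite ∧ ∀ᶠ x in 𝓝[Ω] p, ∃ b ∈ B, JoinedIn (V ∩ Ω) b x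

lemma eq_or_eq_of_circleExp_mem_image {ε θ : ℝ} (hε : ε ≤ Real.pi) (hθ : θ ∈ Icc (-ε) ε)
    (h : Circle.exp θ ∈ Circle.exp '' Icc ε (2 * Real.pi - ε)) : θ = -ε ∨ θ = ε := by
  obtain ⟨s, hs, hsθ⟩ := h
  refine or_iff_not_imp_left.2 fun hne => hθ.2.antisymm ?_
  rcases (hθ.1.trans hθ.2).eq_or_lt with hε0 | hε0
  · linarith [hθ.1]
  have hsθ' := Circle.exp_injOn_Ioc (a := -ε) (b := 2 * Real.pi - ε) (by linarith)
    ⟨hε0.trans_le hs.1, hs.2⟩ ⟨hθ.1.lt_of_ne' hne, hθ.2.trans (by linarith)⟩ hsθ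
  exact hsθ' ▸ hs.1

lemma isLocallyArcAt_univ_circle : IsLocallyArcAt (univ : Set Circle) 1 := by
  intro V hV
  obtain ⟨η, hη, hηV⟩ := Metric.nhds_basis_closedBall.mem_iff.1
    (Circle.exp.continuous.continuousAt.preimage_mem_nhds (x := 0) (by simpa using hV))
  obtain ⟨ε, hε, hεη⟩ := exists_between (lt_min hη Real.pi_pos)
  have hεπ : ε < Real.pi := hεη.trans_le (min_le_right _ _)
  let a : I → ℝ := fun t => AffineMap.lineMap (-ε) ε (t : ℝ)
  have ha_inj {s t : I} (h : a s = a t) : s = t :=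
    Subtype.ext (AffineMap.lineMap_injective ℝ (by linarith : -ε ≠ ε) h)
  have ha_range : range a = Icc (-ε) ε := by
    rw [← segment_eq_Icc (by linarith), segment_eq_image_lineMap, image_eq_range]
  have ha (t : I) : a t ∈ Icc (-ε) ε := ha_range ▸ mem_range_self t
  refine ⟨fun t => Circle.exp (a t), Circle.exp '' Icc ε (2 * Real.pi - ε), by fun_prop,
    fun s t hst => ha_inj (Circle.exp_injOn_Icc (by linarith) (ha s) (ha t) hst),
    range_subset_iff.2 fun t => hηV ?_, (isCompact_Icc.image Circle.exp.continuous).isClosed,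
    fun h => ?_, fun t ht => ?_, ?_⟩
  · rw [mem_closedBall_zero_iff]
    exact (abs_le.2 (ha t)).trans (hεη.le.trans (min_le_left _ _))
  · rw [← Circle.exp_zero] at h
    rcases eq_or_eq_of_circleExp_mem_image hεπ.le ⟨by linarith, hε.le⟩ h with h0 | h0 <;> linarith
  · refine (eq_or_eq_of_circleExp_mem_image hεπ.le (ha t) ht).imp ?_ ?_ <;> intro h <;>
      exact ha_inj (h.trans (by simp [a]))
  · have hIcc := Circle.periodic_exp.image_Icc Real.two_pi_pos (-ε)
    rw [show (fun t => Circle.exp (a t)) = Circle.exp ∘ a from rfl, range_comp, ha_range,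
      ← image_union, Icc_union_Icc_eq_Icc (by linarith) (by linarith), ← neg_add_eq_sub, hIcc,
      Circle.exp_surjective.range_eq]

lemma IsLocallyArcAt.image {φ : X → Y} (hφ : IsClosedEmbedding φ) {G : Set X} {c : X}
    (h : IsLocallyArcAt G c) : IsLocallyArcAt (φ '' G) (φ c) := by
  intro V hV
  obtain ⟨γ, R, hγ, hinj, hγV, hR, hcR, hγR, rfl⟩ := h _ (hφ.continuous.continuousAt hV)
  refine ⟨φ ∘ γ, φ '' R, hφ.continuous.comp hγ, hφ.injective.comp hinj,
    range_subset_iff.2 fun t => hγV (mem_range_self t), hφ.isClosedMap R hR,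
    fun hc => hcR (hφ.injective.mem_set_image.1 hc),
    fun t ht => hγR t (hφ.injective.mem_set_image.1 ht), ?_⟩
  rw [image_union, range_comp]

lemma IsJordanCurve.isLocallyArcAt [T2Space X] {C : Set X} (hC : IsJordanCurve C) {p : X}
    (hp : p ∈ C) : IsLocallyArcAt C p := by
  obtain ⟨f, hf, hinj, rfl⟩ := hC
  obtain ⟨z, rfl⟩ := hp
  let e : Circle ≃ₜ sphere (0 : ℂ) 1 := Homeomorph.mulLeft (⟨z, z.2⟩ : Circle)
  have he : e 1 = z := Subtype.ext (mul_one _)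
  have hfe : IsClosedEmbedding (f ∘ e) := (hf.comp e.continuous).isClosedEmbedding
    (hinj.comp e.injective)
  have := isLocallyArcAt_univ_circle.image hfe
  rwa [image_univ, e.surjective.range_comp f, Function.comp_apply, he] at this

lemma IsLocallyArcAt.preimage {j : X → Y} (hj : IsOpenEmbedding j) {G : Set Y} {c : X}
    (h : IsLocallyArcAt G (j c)) : IsLocallyArcAt (j ⁻¹' G) c := by
  intro V hV
  obtain ⟨γ, R, hγ, hinj, hγV, hR, hcR, hγR, hG⟩ := h (j '' V) (hj.image_mem_nhds.2 hV)
  choose γ' hγ'V hγ' using fun t => hγV (mem_range_self t)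
  have hcomp : j ∘ γ' = γ := funext hγ'
  refine ⟨γ', j ⁻¹' R, hj.isInducing.continuous_iff.2 (hcomp ▸ hγ), fun s t hst => hinj ?_,
    range_subset_iff.2 hγ'V, hR.preimage hj.continuous, hcR, fun t ht => hγR t (hγ' t ▸ ht), ?_⟩
  · rw [← hγ', ← hγ', hst]
  · rw [← hG, preimage_union, ← hcomp, range_comp, preimage_image_eq _ hj.injective]

lemma IsLocallyArcAt.isFinitelyConnectedAt_compl_complex {G : Set ℂ} {p : ℂ}
    (h : IsLocallyArcAt G p) : IsFinitelyConnectedAt Gᶜ p := by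
  intro V hV
  obtain ⟨r, hr, hrV⟩ := Metric.mem_nhds_iff.1 hV
  obtain ⟨γ, R, hγ, hinj, hγr, hR, hpR, hγR, rfl⟩ := h (ball p r) (ball_mem_nhds p hr)
  obtain ⟨ρ, hρ, hρR⟩ := Metric.mem_nhds_iff.1 (hR.isOpen_compl.mem_nhds hpR)
  obtain ⟨B, hB, hBS⟩ := exists_finite_of_three (ball p (min r ρ) \ (range γ ∪ R))
    (r := JoinedIn (ball p r \ (range γ ∪ R))) fun x hx y hy w hw =>
      joinedIn_of_three_points (min_le_left r ρ) hγ hinj hγr hR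
        (subset_compl_iff_disjoint_right.1 ((ball_subset_ball (min_le_right r ρ)).trans hρR))
        hγR hx hy hw
  refine ⟨B, hB, ?_⟩
  filter_upwards [mem_nhdsWithin_of_mem_nhds (ball_mem_nhds p (lt_min hr hρ)), self_mem_nhdsWithin]
    with x hx hxG
  obtain ⟨b, hb, hbx⟩ := hBS x ⟨hx, hxG⟩
  exact ⟨b, hb, hbx.mono (inter_subset_inter_left _ hrV)⟩

lemma IsFinitelyConnectedAt.of_preimage {j : X → Y} (hj : IsOpenEmbedding j) {Ω : Set Y} {c : X}
    (h : IsFinitelyConnectedAt (j ⁻¹' Ω) c) : IsFinitelyConnectedAt Ω (j c) := by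
  intro V hV
  obtain ⟨B, hB, hBx⟩ := h (j ⁻¹' V) (hj.continuous.continuousAt hV)
  refine ⟨j '' B, hB.image j, ?_⟩
  rw [← hj.map_nhdsWithin_preimage_eq, eventually_map]
  filter_upwards [hBx] with x ⟨b, hb, hbx⟩
  exact ⟨j b, mem_image_of_mem j hb,
    (hbx.map hj.continuous).mono (image_subset_iff.2 subset_rfl)⟩

lemma not_injective_of_one_lt_rank {E : Type*} [NormedAddCommGroup E] [NormedSpace ℝ E]
    (hE : 1 < Module.rank ℝ E) {k : E → ℝ} (hk : Continuous k) : ¬ Function.Injective k := by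
  intro hinj
  have : Nontrivial E := (rank_pos_iff_nontrivial (R := ℝ)).1 (zero_lt_one.trans hE)
  obtain ⟨a, b, hab⟩ : ∃ a b, k a < k b := by
    obtain ⟨x, y, hxy⟩ := exists_pair_ne E
    rcases (hinj.ne hxy).lt_or_gt with h | h
    exacts [⟨x, y, h⟩, ⟨y, x, h⟩]
  obtain ⟨m, ham, hmb⟩ := exists_between hab
  obtain ⟨w, rfl⟩ := mem_range_of_exists_le_of_exists_ge hk ⟨a, ham.le⟩ ⟨b, hmb.le⟩
  have hord := ((isConnected_compl_singleton_of_one_lt_rank hE w).isPreconnected.image k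
    hk.continuousOn).ordConnected
  obtain ⟨v, hvw, hv⟩ := hord.out (mem_image_of_mem k (ne_of_apply_ne k ham.ne))
    (mem_image_of_mem k (ne_of_apply_ne k hmb.ne')) ⟨ham.le, hmb.le⟩
  exact hvw (hinj hv)

lemma exists_isOpenEmbedding_range_subset [ChartedSpace (EuclideanSpace ℝ (Fin 2)) X] {p : X}
    {V : Set X} (hV : V ∈ 𝓝 p) : ∃ j : ℂ → X, IsOpenEmbedding j ∧ j 0 = p ∧ range j ⊆ V := by
  let e := chartAt (EuclideanSpace ℝ (Fin 2)) p
  have hp : p ∈ e.source := mem_chart_source _ p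
  have hnhds : e.target ∩ e.symm ⁻¹' V ∈ 𝓝 (e p) :=
    inter_mem (e.open_target.mem_nhds (e.map_source hp)) (e.symm.continuousAt (e.map_source hp) (by
      rwa [e.left_inv hp]))
  obtain ⟨r, hr, hrV⟩ := Metric.mem_nhds_iff.1 hnhds
  let u := OpenPartialHomeomorph.univBall (e p) r
  have hu (v) : u v ∈ ball (e p) r := OpenPartialHomeomorph.univBall_target (e p) hr ▸
    u.map_source (by simp [u])
  have hue : (u.trans e.symm).source = univ := by
    ext v
    simp [u, (hrV (hu v)).1]
  let i := Complex.orthonormalBasisOneI.repr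
  refine ⟨(u.trans e.symm) ∘ i, (u.trans e.symm).isOpenEmbedding hue |>.comp
    i.toHomeomorph.isOpenEmbedding, ?_, ?_⟩
  · simp [u, e.left_inv hp]
  · rintro _ ⟨z, rfl⟩
    exact (hrV (hu (i z))).2

section Surface

variable [ChartedSpace (EuclideanSpace ℝ (Fin 2)) X]

lemma IsLocallyArcAt.mem_closure_compl [T2Space X] {G : Set X} {p : X} (h : IsLocallyArcAt G p) :
    p ∈ closure Gᶜ := by
  rw [closure_compl, mem_compl_iff, mem_interior_iff_mem_nhds]
  intro hG
  obtain ⟨γ, R, hγ, hinj, -, hR, hpR, -, rfl⟩ := h univ univ_mem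
  obtain ⟨j, hj, -, hjG⟩ := exists_isOpenEmbedding_range_subset
    (inter_mem hG (hR.isOpen_compl.mem_nhds hpR))
  have hjγ (z : ℂ) : j z ∈ range γ :=
    (hjG (mem_range_self z)).1.resolve_right (hjG (mem_range_self z)).2
  choose k hk using hjγ
  have hcomp : γ ∘ k = j := funext hk
  refine not_injective_of_one_lt_rank (k := fun z => (k z : ℝ))
    (by simp [Complex.rank_real_complex]) ?_ ?_
  · exact continuous_subtype_val.comp
      ((hγ.isClosedEmbedding hinj).isInducing.continuous_iff.2 (hcomp ▸ hj.continuous))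
  · exact Subtype.val_injective.comp (hcomp ▸ hj.injective).of_comp

lemma IsLocallyArcAt.isFinitelyConnectedAt_compl {G : Set X} {p : X} (h : IsLocallyArcAt G p) :
    IsFinitelyConnectedAt Gᶜ p := by
  obtain ⟨j, hj, rfl, -⟩ := exists_isOpenEmbedding_range_subset (univ_mem (f := 𝓝 p))
  exact .of_preimage hj (h.preimage hj).isFinitelyConnectedAt_compl_complex

end Surface

end LocalArcs

section FiniteConnectedness

variable {X : Type*} [TopologicalSpace X] {Ω : Set X} {z : X}

lemma IsFinitelyConnectedAt.inter_nhds (h : IsFinitelyConnectedAt Ω z) {D : Set X} (hD : D ∈ 𝓝 z) :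
    IsFinitelyConnectedAt (D ∩ Ω) z := by
  intro V hV
  obtain ⟨B, hB, hBx⟩ := h (V ∩ D) (inter_mem hV hD)
  simp only [inter_assoc] at hBx
  exact ⟨B, hB, hBx.filter_mono (nhdsWithin_mono z inter_subset_right)⟩

lemma isFinitelyConnectedAt_of_mem_nhds [LocallyPathConnectedSpace X] (hΩ : Ω ∈ 𝓝 z) :
    IsFinitelyConnectedAt Ω z := fun V hV =>
  ⟨{z}, finite_singleton z, by
    filter_upwards [mem_nhdsWithin_of_mem_nhds (pathComponentIn_mem_nhds (inter_mem hV hΩ))]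
      with x hx using ⟨z, rfl, hx⟩⟩

lemma exists_nhds_inter_compl_eq_compl_iUnion {ι : Type*} {C : ι → Set X} (hC : LocallyFinite C)
    (hcl : ∀ i, IsClosed (C i)) (hdisj : Pairwise fun i j => Disjoint (C i) (C j)) {i : ι}
    (hz : z ∈ C i) : ∃ O ∈ 𝓝 z, O ∩ (C i)ᶜ = (⋃ i, C i)ᶜ := by
  have hclosed : IsClosed (⋃ j : {j // j ≠ i}, C j) :=
    (hC.comp_injective Subtype.val_injective).isClosed_iUnion fun j => hcl j
  refine ⟨_, hclosed.isOpen_compl.mem_nhds ?_, ?_⟩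
  · simp only [mem_compl_iff, mem_iUnion, not_exists]
    exact fun j hj => (hdisj j.2).notMem_of_mem_left hj hz
  · rw [← compl_union]
    congr 1
    ext x
    simp only [mem_union, mem_iUnion, Subtype.exists, exists_prop]
    grind

lemma IsFinitelyConnectedAt.eventually_mem_closure (hz : IsFinitelyConnectedAt Ω z) {V : Set X}
    (hV : V ∈ 𝓝 z) : ∀ᶠ x in 𝓝[Ω] z, z ∈ closure (pathComponentIn (V ∩ Ω) x) := by
  obtain ⟨B, hB, hBV⟩ := hz V hV
  have hfar : ∀ᶠ x in 𝓝 z, ∀ b ∈ B, x ∈ closure (pathComponentIn (V ∩ Ω) b) →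
      z ∈ closure (pathComponentIn (V ∩ Ω) b) :=
    hB.eventually_all.2 fun b _ => by
      by_cases hzb : z ∈ closure (pathComponentIn (V ∩ Ω) b)
      · exact .of_forall fun _ _ => hzb
      · filter_upwards [isClosed_closure.isOpen_compl.mem_nhds hzb] with x hx hxb
        exact absurd hxb hx
  filter_upwards [hBV, eventually_nhdsWithin_of_eventually_nhds hfar] with x ⟨b, hb, hbx⟩ hx
  rw [pathComponentIn_congr hbx]
  exact hx b hb (subset_closure hbx)

lemma IsFinitelyConnectedAt.exists_joinedIn_mem_closure (hz : IsFinitelyConnectedAt Ω z) {x : X}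
    {V V' : Set X} (hV' : V' ∈ 𝓝 z) (hx : z ∈ closure (pathComponentIn (V ∩ Ω) x)) :
    ∃ y, JoinedIn (V ∩ Ω) x y ∧ z ∈ closure (pathComponentIn (V' ∩ Ω) y) := by
  obtain ⟨y, hxy, hy⟩ := ((mem_closure_iff_frequently.1 hx).and_eventually
    (eventually_nhdsWithin_iff.1 (hz.eventually_mem_closure hV'))).exists
  exact ⟨y, hxy, hy hxy.target_mem.2⟩

end FiniteConnectedness

section Accessibility

variable {X : Type*} [TopologicalSpace X]

lemma exists_continuous_ray (y : ℕ → X) {V : ℕ → Set X} (hV : Antitone V)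
    (h : ∀ n, JoinedIn (V n) (y n) (y (n + 1))) :
    ∃ g : ℝ → X, Continuous g ∧ g 0 = y 0 ∧ ∀ n : ℕ, ∀ t : ℝ, n ≤ t → g t ∈ V n := by
  choose α hα using h
  let g : ℝ → X := fun t => (α ⌊t⌋₊).extend (t - ⌊t⌋₊)
  have hfloor {n : ℕ} {t : ℝ} (ht : ⌊t⌋₊ = n) : g t = (α n).extend (t - n) := by rw [← ht]
  have hg (n : ℕ) : EqOn g (fun t => (α n).extend (t - n)) (Icc n (n + 1)) := fun t ht => by
    rcases ht.2.eq_or_lt with rfl | htn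
    · rw [← Nat.cast_succ, hfloor (Nat.floor_natCast _)]
      simp
    · exact hfloor ((Nat.floor_eq_iff (n.cast_nonneg.trans ht.1)).2 ⟨ht.1, htn⟩)
  have hneg : EqOn g (fun _ => y 0) (Iic 0) := fun t (ht : t ≤ 0) => by
    simpa [hfloor (Nat.floor_of_nonpos ht)] using Path.extend_of_le_zero (α 0) ht
  have hIic (n : ℕ) : ContinuousOn g (Iic n) := by
    induction n with
    | zero => simpa using continuousOn_const.congr hneg
    | succ n ih =>
      rw [Nat.cast_succ, ← Iic_union_Icc_eq_Iic (show (n : ℝ) ≤ n + 1 by simp)]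
      refine ih.union_of_isClosed (ContinuousOn.congr ?_ (hg n)) isClosed_Iic isClosed_Icc
      fun_prop
  refine ⟨g, continuous_iff_continuousAt.2 fun t => ?_, hneg self_mem_Iic, fun n t ht => ?_⟩
  · obtain ⟨n, hn⟩ := exists_nat_gt t
    exact (hIic n).continuousAt (Iic_mem_nhds hn)
  · refine hV (Nat.le_floor ht) ?_
    have : t - ⌊t⌋₊ ∈ Icc (0 : ℝ) 1 :=
      ⟨sub_nonneg.2 (Nat.floor_le (n.cast_nonneg.trans ht)), by linarith [Nat.lt_floor_add_one t]⟩
    simpa only [g, Path.extend_apply _ this] using hα _ _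

lemma joinedIn_insert_of_tendsto {g : ℝ → X} (hg : Continuous g) {z : X}
    (hz : Tendsto g atTop (𝓝 z)) {S : Set X} (hS : ∀ t, 0 ≤ t → g t ∈ S) :
    JoinedIn (insert z S) (g 0) z := by
  let f : ℝ → X := Function.update (fun s => g (s⁻¹ - 1)) 0 z
  have hf0 : f 0 = z := Function.update_self ..
  have hf {s : ℝ} (hs : s ≠ 0) : f s = g (s⁻¹ - 1) := Function.update_of_ne hs ..
  refine (JoinedIn.ofLine (f := f) ?_ hf0 (by simp [hf]) ?_).symm
  · refine continuousOn_update_iff.2 ⟨?_, fun _ => ?_⟩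
    · exact hg.comp_continuousOn ((continuousOn_inv₀.mono fun s hs => hs.2).sub continuousOn_const)
    · refine hz.comp (tendsto_atTop_add_const_right _ (-1) (tendsto_inv_nhdsGT_zero.mono_left ?_))
      exact nhdsWithin_mono 0 fun s hs => hs.1.1.lt_of_ne' hs.2
  · rintro _ ⟨s, hs, rfl⟩
    rcases hs.1.eq_or_lt with rfl | hs0
    · exact .inl hf0
    · rw [hf hs0.ne']
      exact .inr (hS _ (sub_nonneg.2 ((one_le_inv₀ hs0).2 hs.2)))

lemma IsFinitelyConnectedAt.joinedIn_insert [FirstCountableTopology X] {Ω : Set X} {x z : X}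
    (hz : IsFinitelyConnectedAt Ω z) (hx : z ∈ closure (pathComponentIn Ω x)) :
    JoinedIn (insert z Ω) x z := by
  obtain ⟨U, hU⟩ := (𝓝 z).exists_antitone_basis
  obtain ⟨x₀, hxx₀, hx₀⟩ : ∃ y, JoinedIn Ω x y ∧ z ∈ closure (pathComponentIn (U 0 ∩ Ω) y) := by
    simpa using hz.exists_joinedIn_mem_closure (V := univ) (hU.mem 0) (by simpa using hx)
  choose! s hs hsU using fun (n : ℕ) y => hz.exists_joinedIn_mem_closure (x := y) (V := U n)
    (hU.mem (n + 1))
  let y : ℕ → X := fun n => Nat.rec x₀ s n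
  have hy (n : ℕ) : z ∈ closure (pathComponentIn (U n ∩ Ω) (y n)) := by
    induction n with
    | zero => exact hx₀
    | succ n ih => exact hsU n _ ih
  obtain ⟨g, hg, hg0, hgU⟩ := exists_continuous_ray y (V := fun n => U n ∩ Ω)
    (fun m n hmn => inter_subset_inter_left Ω (hU.antitone hmn)) fun n => hs n _ (hy n)
  have hgz : Tendsto g atTop (𝓝 z) := hU.tendsto_right_iff.2 fun n _ =>
    (eventually_ge_atTop (n : ℝ)).mono fun t ht => (hgU n t ht).1
  have hjoin := joinedIn_insert_of_tendsto hg hgz fun t ht => (hgU 0 t (by simpa using ht)).2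
  rw [hg0] at hjoin
  exact (hxx₀.mono (subset_insert z Ω)).trans hjoin

end Accessibility

section JoinedInUpTo

variable {X : Type*} [TopologicalSpace X] {D G : Set X} {m n : ℕ} {x y z : X}

/-- Some path in `D` from `x` to `y` meets `G` in at most `n` points. -/
def JoinedInUpTo (D G : Set X) (n : ℕ) (x y : X) : Prop :=
  ∃ γ : Path x y, range γ ⊆ D ∧ (range γ ∩ G).encard ≤ n

namespace JoinedInUpTo

lemma symm (h : JoinedInUpTo D G n x y) : JoinedInUpTo D G n y x := by
  obtain ⟨γ, hD, hG⟩ := h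
  exact ⟨γ.symm, by rwa [Path.symm_range], by rwa [Path.symm_range]⟩

lemma trans (hxy : JoinedInUpTo D G m x y) (hyz : JoinedInUpTo D G n y z) :
    JoinedInUpTo D G (m + n) x z := by
  obtain ⟨γ, hγD, hγG⟩ := hxy
  obtain ⟨δ, hδD, hδG⟩ := hyz
  refine ⟨γ.trans δ, ?_, ?_⟩
  · rw [Path.trans_range]
    exact union_subset hγD hδD
  · rw [Path.trans_range, union_inter_distrib_right, Nat.cast_add]
    exact (encard_union_le _ _).trans (add_le_add hγG hδG)

lemma mono (h : JoinedInUpTo D G m x y) (hmn : m ≤ n) : JoinedInUpTo D G n x y := by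
  obtain ⟨γ, hD, hG⟩ := h
  exact ⟨γ, hD, hG.trans (Nat.cast_le.2 hmn)⟩

end JoinedInUpTo

lemma joinedInUpTo_one_of_joinedIn_insert (h : JoinedIn (insert z (D \ G)) x y) (hz : z ∈ D) :
    JoinedInUpTo D G 1 x y := by
  obtain ⟨γ, hγ⟩ := h
  have hrange : range γ ⊆ insert z (D \ G) := range_subset_iff.2 hγ
  refine ⟨γ, hrange.trans (insert_subset hz sdiff_subset), ?_⟩
  rw [Nat.cast_one, ← encard_singleton z]
  refine encard_le_encard fun w ⟨hw, hwG⟩ => ?_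
  exact (hrange hw).resolve_right fun h => h.2 hwG

variable [FirstCountableTopology X]

lemma IsFinitelyConnectedAt.eventually_joinedInUpTo_one (h : IsFinitelyConnectedAt (D \ G) z)
    (hz : z ∈ D) : ∀ᶠ x in 𝓝 z, x ∈ D \ G → JoinedInUpTo D G 1 x z :=
  (eventually_nhdsWithin_iff.1 (h.eventually_mem_closure univ_mem)).mono fun x hx hxD =>
    joinedInUpTo_one_of_joinedIn_insert (h.joinedIn_insert (by simpa using hx hxD)) hz

lemma eventually_joinedInUpTo_two (hfin : ∀ p ∈ D, IsFinitelyConnectedAt (D \ G) p)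
    (hdense : D ⊆ closure (D \ G)) (hz : z ∈ D) : ∀ᶠ x in 𝓝[D] z, JoinedInUpTo D G 2 x z := by
  refine eventually_nhdsWithin_iff.2 ?_
  filter_upwards [((hfin z hz).eventually_joinedInUpTo_one hz).eventually_nhds] with x hx hxD
  obtain ⟨y, hy, hyz, hyx⟩ := ((mem_closure_iff_frequently.1 (hdense hxD)).and_eventually
    (hx.and ((hfin x hxD).eventually_joinedInUpTo_one hxD))).exists
  exact (hyx hy).symm.trans (hyz hy)

lemma exists_joinedInUpTo_of_isPreconnected (hD : IsPreconnected D)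
    (hfin : ∀ p ∈ D, IsFinitelyConnectedAt (D \ G) p) (hdense : D ⊆ closure (D \ G)) (hx : x ∈ D)
    (hy : y ∈ D) : ∃ n, JoinedInUpTo D G n x y := by
  refine hD.induction₂ (fun x y => ∃ n, JoinedInUpTo D G n x y) (fun z hz => ?_) ?_ ?_ hx hy
  · exact (eventually_joinedInUpTo_two hfin hdense hz).mono fun x hx => ⟨2, hx.symm⟩
  · rintro x y z - - - ⟨m, hm⟩ ⟨n, hn⟩
    exact ⟨m + n, hm.trans hn⟩
  · rintro x y - - ⟨n, hn⟩
    exact ⟨n, hn.symm⟩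

lemma exists_forall_joinedInUpTo (hD : IsPreconnected D)
    (hfin : ∀ p ∈ D, IsFinitelyConnectedAt (D \ G) p) (hdense : D ⊆ closure (D \ G)) {L : Set X}
    (hL : IsCompact L) (hLD : L ⊆ D) : ∃ n, ∀ x ∈ L, ∀ y ∈ L, JoinedInUpTo D G n x y := by
  rcases L.eq_empty_or_nonempty with rfl | ⟨z, hz⟩
  · simp
  obtain ⟨n, hn⟩ : ∃ n, ∀ x ∈ L, JoinedInUpTo D G n x z := by
    refine hL.induction_on (p := fun S => ∃ n, ∀ x ∈ S, JoinedInUpTo D G n x z) (by simp)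
      (fun S T hST ⟨n, hn⟩ => ⟨n, fun x hx => hn x (hST hx)⟩) ?_ fun x hx => ?_
    · rintro S T ⟨m, hm⟩ ⟨n, hn⟩
      refine ⟨max m n, fun x hx => hx.elim (fun hx => ?_) fun hx => ?_⟩
      · exact (hm x hx).mono (le_max_left m n)
      · exact (hn x hx).mono (le_max_right m n)
    · obtain ⟨m, hm⟩ :=
        exists_joinedInUpTo_of_isPreconnected hD hfin hdense (hLD hx) (hLD hz)
      refine ⟨_, nhdsWithin_mono x hLD (eventually_joinedInUpTo_two hfin hdense (hLD hx)),
        2 + m, fun y hy => ?_⟩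
      exact JoinedInUpTo.trans hy hm
  exact ⟨n + n, fun x hx y hy => (hn x hx).trans (hn y hy).symm⟩

end JoinedInUpTo

section PrevNext

lemma isCodirectedOrder_of_isChain {α : Type*} {c : Set (Set α)} (hc : IsChain (· ⊆ ·) c) :
    IsCodirectedOrder c :=
  ⟨fun K L => (hc.total K.2 L.2).elim (fun h => ⟨K, le_rfl, h⟩) fun h => ⟨L, h, le_rfl⟩⟩

variable {α : Type*} [CompleteLinearOrder α] {K : Set α} {a b t : α}

/-- The last point of `K` before `t`, equal to `t` if `t ∈ K`. The junk value `⊥` is avoided by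
taking `K` closed with `⊥ ∈ K`. -/
def prevIn (K : Set α) (t : α) : α := sSup (K ∩ Iic t)

/-- The first point of `K` after `t`, equal to `t` if `t ∈ K`. The junk value `⊤` is avoided by
taking `K` closed with `⊤ ∈ K`. -/
def nextIn (K : Set α) (t : α) : α := sInf (K ∩ Ici t)

lemma prevIn_mono : Monotone (prevIn K) := fun _ _ hst =>
  sSup_le_sSup (inter_subset_inter_right K (Iic_subset_Iic.2 hst))

lemma prevIn_mono_left : Monotone (prevIn · t : Set α → α) := fun _ _ hKL =>
  sSup_le_sSup (inter_subset_inter_left _ hKL)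

lemma nextIn_anti_left : Antitone (nextIn · t : Set α → α) := fun _ _ hKL =>
  prevIn_mono_left (α := αᵒᵈ) hKL

lemma prevIn_of_mem (ht : t ∈ K) : prevIn K t = t :=
  IsGreatest.csSup_eq ⟨⟨ht, le_rfl⟩, fun _ hs => hs.2⟩

lemma nextIn_of_mem (ht : t ∈ K) : nextIn K t = t := prevIn_of_mem (α := αᵒᵈ) ht

lemma prevIn_le (K : Set α) (t : α) : prevIn K t ≤ t := sSup_le fun _ hs => hs.2

lemma le_nextIn (K : Set α) (t : α) : t ≤ nextIn K t := prevIn_le (α := αᵒᵈ) K t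

lemma le_prevIn (ha : a ∈ K) (hat : a ≤ t) : a ≤ prevIn K t := le_sSup ⟨ha, hat⟩

lemma nextIn_le (hb : b ∈ K) (htb : t ≤ b) : nextIn K t ≤ b := sInf_le ⟨hb, htb⟩

lemma prevIn_sdiff_Ioo_of_mem (ha : a ∈ K) (ht : t ∈ Ioo a b) : prevIn (K \ Ioo a b) t = a :=
  IsGreatest.csSup_eq ⟨⟨⟨ha, fun h => h.1.false⟩, ht.1.le⟩, fun _ hs =>
    not_lt.1 fun has => hs.1.2 ⟨has, hs.2.trans_lt ht.2⟩⟩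

lemma nextIn_sdiff_Ioo_of_mem (hb : b ∈ K) (ht : t ∈ Ioo a b) : nextIn (K \ Ioo a b) t = b :=
  IsLeast.csInf_eq ⟨⟨⟨hb, fun h => h.2.false⟩, ht.2.le⟩, fun _ hs =>
    not_lt.1 fun hsb => hs.1.2 ⟨ht.1.trans_le hs.2, hsb⟩⟩

variable [TopologicalSpace α] [OrderTopology α]

lemma prevIn_mem (hK : IsClosed K) (hbot : ⊥ ∈ K) (t : α) : prevIn K t ∈ K :=
  ((hK.inter isClosed_Iic).csSup_mem ⟨⊥, hbot, bot_le⟩ (OrderTop.bddAbove _)).1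

lemma nextIn_mem (hK : IsClosed K) (htop : ⊤ ∈ K) (t : α) : nextIn K t ∈ K :=
  prevIn_mem (α := αᵒᵈ) hK htop t

lemma prevIn_sdiff_Ioo_of_notMem (hK : IsClosed K) (hbot : ⊥ ∈ K) (hb : b ∈ K) (ht : t ∉ Ioo a b) :
    prevIn (K \ Ioo a b) t = prevIn K t := by
  refine (prevIn_mono_left sdiff_subset).antisymm (le_prevIn ⟨prevIn_mem hK hbot t, fun h => ht ?_⟩
    (prevIn_le K t))
  exact ⟨h.1.trans_le (prevIn_le K t), not_le.1 fun hbt => (le_prevIn hb hbt).not_gt h.2⟩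

lemma nextIn_sdiff_Ioo_of_notMem (hK : IsClosed K) (htop : ⊤ ∈ K) (ha : a ∈ K) (ht : t ∉ Ioo a b) :
    nextIn (K \ Ioo a b) t = nextIn K t := by
  refine le_antisymm (nextIn_le ⟨nextIn_mem hK htop t, fun h => ht ?_⟩ (le_nextIn K t))
    (nextIn_anti_left sdiff_subset)
  exact ⟨not_le.1 fun hta => (nextIn_le ha hta).not_gt h.1, (le_nextIn K t).trans_lt h.2⟩

lemma continuousWithinAt_prevIn (hK : IsClosed K) (htop : ⊤ ∈ K) (t : α) :
    ContinuousWithinAt (prevIn K) (Ici t) t := by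
  by_cases ht : t ∈ K
  · have hlim : Tendsto id (𝓝[≥] t) (𝓝 t) := tendsto_id.mono_left nhdsWithin_le_nhds
    rw [ContinuousWithinAt, prevIn_of_mem ht]
    exact tendsto_of_tendsto_of_tendsto_of_le_of_le' tendsto_const_nhds hlim
      (eventually_nhdsWithin_of_forall fun s hs => le_prevIn ht hs)
      (.of_forall (prevIn_le K))
  · have htn : t < nextIn K t := (le_nextIn K t).lt_of_ne fun h =>
      ht (h ▸ nextIn_mem hK htop t)
    refine tendsto_const_nhds.congr' ?_
    filter_upwards [Ico_mem_nhdsGE htn] with s hs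
    refine (prevIn_mono hs.1).antisymm (sSup_le fun r hr => le_prevIn hr.1 ?_)
    by_contra! htr
    exact ((nextIn_le hr.1 htr.le).trans hr.2).not_gt hs.2

lemma continuousWithinAt_nextIn (hK : IsClosed K) (hbot : ⊥ ∈ K) (t : α) :
    ContinuousWithinAt (nextIn K) (Iic t) t :=
  continuousWithinAt_prevIn (α := αᵒᵈ) hK hbot t

lemma tendsto_prevIn_sInter {c : Set (Set α)} (hc : IsChain (· ⊆ ·) c) (hne : c.Nonempty)
    (hcl : ∀ K ∈ c, IsClosed K) (hbot : ∀ K ∈ c, ⊥ ∈ K) (t : α) :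
    Tendsto (fun K : c => prevIn (K : Set α) t) atBot (𝓝 (prevIn (⋂₀ c) t)) := by
  have : Nonempty c := hne.to_subtype
  have := isCodirectedOrder_of_isChain hc
  have hlim : Tendsto (fun K : c => prevIn (K : Set α) t) atBot (𝓝 (⨅ K : c, prevIn K t)) :=
    tendsto_atBot_iInf fun K L h => prevIn_mono_left h
  suffices prevIn (⋂₀ c) t = ⨅ K : c, prevIn K t by rwa [this]
  refine (le_iInf fun K => prevIn_mono_left (sInter_subset_of_mem K.2)).antisymm
    (le_prevIn (fun K hK => ?_) (iInf_le_of_le (Classical.arbitrary c) (prevIn_le _ t)))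
  refine (hcl K hK).mem_of_tendsto hlim ?_
  filter_upwards [eventually_le_atBot (⟨K, hK⟩ : c)] with L hL
  exact hL (prevIn_mem (hcl L L.2) (hbot L L.2) t)

lemma tendsto_nextIn_sInter {c : Set (Set α)} (hc : IsChain (· ⊆ ·) c) (hne : c.Nonempty)
    (hcl : ∀ K ∈ c, IsClosed K) (htop : ∀ K ∈ c, ⊤ ∈ K) (t : α) :
    Tendsto (fun K : c => nextIn (K : Set α) t) atBot (𝓝 (nextIn (⋂₀ c) t)) :=
  tendsto_prevIn_sInter (α := αᵒᵈ) hc hne hcl htop t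

end PrevNext

section PathReduction

variable {α : Type*} [CompleteLinearOrder α] [TopologicalSpace α] [OrderTopology α]
  {X : Type*} {f : α → X} {K : Set α}

/-- The function `f` takes the same value at the two ends of each gap of the closed set `K`, so
that cutting out the gaps turns it into a continuous function `f ∘ prevIn K`. -/
structure CanSkipGaps (f : α → X) (K : Set α) : Prop where
  isClosed : IsClosed K
  bot_mem : ⊥ ∈ K
  top_mem : ⊤ ∈ K
  apply_prevIn_eq (t : α) : f (prevIn K t) = f (nextIn K t)

namespace CanSkipGaps

lemma sdiff_Ioo (h : CanSkipGaps f K) {a b : α} (ha : a ∈ K) (hb : b ∈ K) (hab : f a = f b) :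
    CanSkipGaps f (K \ Ioo a b) where
  isClosed := h.isClosed.sdiff isOpen_Ioo
  bot_mem := ⟨h.bot_mem, fun hbot => not_lt_bot hbot.1⟩
  top_mem := ⟨h.top_mem, fun htop => not_top_lt htop.2⟩
  apply_prevIn_eq t := by
    by_cases ht : t ∈ Ioo a b
    · rw [prevIn_sdiff_Ioo_of_mem ha ht, nextIn_sdiff_Ioo_of_mem hb ht, hab]
    · rw [prevIn_sdiff_Ioo_of_notMem h.isClosed h.bot_mem hb ht,
        nextIn_sdiff_Ioo_of_notMem h.isClosed h.top_mem ha ht, h.apply_prevIn_eq]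

lemma ordConnected_preimage_of_minimal (h : Minimal (CanSkipGaps f) K) (x : X) :
    ((f ∘ prevIn K) ⁻¹' {x}).OrdConnected := by
  have hK (t : α) : prevIn K t ∈ K := prevIn_mem h.prop.isClosed h.prop.bot_mem t
  refine ⟨fun s hs t ht u hu => ?_⟩
  have hu' : prevIn K u ∉ Ioo (prevIn K s) (prevIn K t) := (h.le_of_le
    (h.prop.sdiff_Ioo (hK s) (hK t) (hs.trans ht.symm)) sdiff_subset (hK u)).2
  rcases (prevIn_mono hu.1 : prevIn K s ≤ prevIn K u).eq_or_lt with hsu | hsu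
  · exact (congrArg f hsu).symm.trans hs
  · have htu := (prevIn_mono hu.2).antisymm (not_lt.1 fun hut => hu' ⟨hsu, hut⟩)
    exact (congrArg f htu).trans ht

variable [TopologicalSpace X]

lemma continuous_comp_prevIn (h : CanSkipGaps f K) (hf : Continuous f) :
    Continuous (f ∘ prevIn K) := by
  refine continuous_iff_continuousAt.2 fun t => continuousAt_iff_continuous_left_right.2 ⟨?_, ?_⟩
  · rw [show f ∘ prevIn K = f ∘ nextIn K from funext h.apply_prevIn_eq]
    exact hf.continuousAt.comp_continuousWithinAt
      (continuousWithinAt_nextIn h.isClosed h.bot_mem t)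
  · exact hf.continuousAt.comp_continuousWithinAt
      (continuousWithinAt_prevIn h.isClosed h.top_mem t)

lemma sInter [T2Space X] (hf : Continuous f) {c : Set (Set α)} (hc : IsChain (· ⊆ ·) c)
    (hne : c.Nonempty) (h : ∀ K ∈ c, CanSkipGaps f K) : CanSkipGaps f (⋂₀ c) where
  isClosed := isClosed_sInter fun K hK => (h K hK).isClosed
  bot_mem K hK := (h K hK).bot_mem
  top_mem K hK := (h K hK).top_mem
  apply_prevIn_eq t := by
    have := hne.to_subtype
    have := isCodirectedOrder_of_isChain hc
    have hprev := (hf.tendsto _).comp (tendsto_prevIn_sInter hc hne (fun K hK => (h K hK).isClosed)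
      (fun K hK => (h K hK).bot_mem) t)
    have hnext := (hf.tendsto _).comp (tendsto_nextIn_sInter hc hne (fun K hK => (h K hK).isClosed)
      (fun K hK => (h K hK).top_mem) t)
    exact tendsto_nhds_unique (hprev.congr fun K : c => (h K K.2).apply_prevIn_eq t) hnext

lemma exists_minimal [T2Space X] (hf : Continuous f) : ∃ K, Minimal (CanSkipGaps f) K := by
  refine zorn_superset {K | CanSkipGaps f K} fun c hcf hc => ?_
  rcases c.eq_empty_or_nonempty with rfl | hne
  · refine ⟨univ, ⟨isClosed_univ, mem_univ _, mem_univ _, fun t => ?_⟩, by simp⟩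
    rw [prevIn_of_mem (mem_univ t), nextIn_of_mem (mem_univ t)]
  · exact ⟨⋂₀ c, .sInter hf hc hne hcf, fun K => sInter_subset_of_mem⟩

end CanSkipGaps

lemma exists_path_ordConnected_preimage [TopologicalSpace X] [T2Space X] {x y : X} (γ : Path x y) :
    ∃ δ : Path x y, range δ ⊆ range γ ∧ ∀ z, (δ ⁻¹' {z}).OrdConnected := by
  obtain ⟨K, hK⟩ := CanSkipGaps.exists_minimal γ.continuous
  refine ⟨⟨⟨γ ∘ prevIn K, hK.prop.continuous_comp_prevIn γ.continuous⟩, ?_, ?_⟩,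
    range_comp_subset_range (prevIn K) γ, CanSkipGaps.ordConnected_preimage_of_minimal hK⟩
  · exact (congrArg γ (prevIn_of_mem hK.prop.bot_mem)).trans γ.source
  · exact (congrArg γ (prevIn_of_mem hK.prop.top_mem)).trans γ.target

end PathReduction

section Arcs

lemma continuous_infDist_image_Iic {X : Type*} [PseudoMetricSpace X] {F : I → X}
    (hF : Continuous F) :
    Continuous fun q : I × I => infDist (F q.1) (F '' Iic q.2) := by
  have himage (t : I) : F '' Iic t = range fun s => F (s ⊓ t) := by
    ext x
    constructor
    · rintro ⟨s, hs, rfl⟩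
      exact ⟨s, congrArg F (inf_eq_left.2 hs)⟩
    · rintro ⟨s, rfl⟩
      exact ⟨s ⊓ t, mem_Iic.2 inf_le_right, rfl⟩
  have hinf (q : I × I) : infDist (F q.1) (F '' Iic q.2) =
      sInf ((fun s => dist (F q.1) (F (s ⊓ q.2))) '' univ) := by
    rw [infDist_eq_iInf, himage, iInf, ← image_eq_range, ← range_comp, image_univ]
    rfl
  simp only [hinf]
  exact isCompact_univ.continuous_sInf (by fun_prop)

variable {X : Type*} {F : I → X}

lemma image_Iic_eq_of_ordConnected (hconn : ∀ x, (F ⁻¹' {x}).OrdConnected) {a b : I} (hab : a ≤ b)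
    (h : F a = F b) : F '' Iic a = F '' Iic b := by
  refine (image_mono (Iic_subset_Iic.2 hab)).antisymm ?_
  rintro _ ⟨s, hs, rfl⟩
  rcases le_total s a with hsa | has
  · exact mem_image_of_mem F hsa
  · exact ⟨a, self_mem_Iic, ((hconn (F b)).out h rfl ⟨has, hs⟩ ▸ h : F a = F s)⟩

-- `h t = -∫ u in 0..1, dist (F u, F '' [0, t])` increases exactly when the image `F '' [0, t]`
-- grows.
lemma exists_monotone_eq_iff [MetricSpace X] (hF : Continuous F)
    (hconn : ∀ x, (F ⁻¹' {x}).OrdConnected) :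
    ∃ h : I → ℝ, Continuous h ∧ Monotone h ∧ ∀ a b, h a = h b ↔ F a = F b := by
  let d : I → ℝ → ℝ := fun t u => infDist (F (projIcc 0 1 zero_le_one u)) (F '' Iic t)
  have hd : Continuous d.uncurry := by
    have hproj : Continuous fun q : I × ℝ => (projIcc (0 : ℝ) 1 zero_le_one q.2, q.1) := by fun_prop
    simpa only [d, Function.uncurry_def, Function.comp_def] using
      (continuous_infDist_image_Iic hF).comp hproj
  have hdt (t : I) : Continuous (d t) := hd.uncurry_left t
  have hanti (u : ℝ) : Antitone (d · u) := fun s t hst =>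
    infDist_le_infDist_of_subset (image_mono (Iic_subset_Iic.2 hst)) (nonempty_Iic.image F)
  let h : I → ℝ := fun t => -∫ u in 0..1, d t u
  have hmono : Monotone h := fun s t hst => neg_le_neg <|
    intervalIntegral.integral_mono zero_le_one ((hdt t).intervalIntegrable 0 1)
      ((hdt s).intervalIntegrable 0 1) fun u => hanti u hst
  have hlt {a b : I} (hab : a < b) (hne : F a ≠ F b) : h a < h b := by
    refine neg_lt_neg (intervalIntegral.integral_lt_integral_of_continuousOn_of_le_of_exists_lt
      zero_lt_one (hdt b).continuousOn (hdt a).continuousOn (fun u _ => hanti u hab.le)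
      ⟨b, b.2, ?_⟩)
    have hFb : F b ∉ F '' Iic a := by
      rintro ⟨s, hs, hsb⟩
      exact hne ((hconn (F b)).out hsb rfl ⟨hs, hab.le⟩)
    simp only [d, projIcc_val]
    rw [infDist_zero_of_mem (mem_image_of_mem F self_mem_Iic)]
    exact ((isClosed_Iic.isCompact.image hF).isClosed.notMem_iff_infDist_pos
      (nonempty_Iic.image F)).1 hFb
  have hiff {a b : I} (hab : a ≤ b) : h a = h b ↔ F a = F b := by
    refine ⟨fun heq => ?_, fun heq => ?_⟩
    · by_contra hne
      exact (hlt (hab.lt_of_ne (ne_of_apply_ne F hne)) hne).ne heq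
    · simp only [h, d, image_Iic_eq_of_ordConnected hconn hab heq]
  refine ⟨h, ?_, hmono, fun a b => ?_⟩
  · exact (intervalIntegral.continuous_parametric_intervalIntegral_of_continuous' hd 0 1).neg
  · rcases le_total a b with hab | hba
    · exact hiff hab
    · rw [eq_comm, hiff hba, eq_comm]

lemma exists_path_injective [TopologicalSpace X] [TopologicalSpace.MetrizableSpace X]
    {x y : X} (γ : Path x y) (hxy : x ≠ y) :
    ∃ δ : Path x y, Function.Injective δ ∧ range δ ⊆ range γ := by
  let := TopologicalSpace.metrizableSpaceMetric X
  obtain ⟨F, hFγ, hconn⟩ := exists_path_ordConnected_preimage γ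
  obtain ⟨h, hh, hmono, hiff⟩ := exists_monotone_eq_iff F.continuous hconn
  have h01 : h 0 < h 1 := (hmono zero_le_one).lt_of_ne (by simpa [hiff] using hxy)
  let H : C(I, I) := ⟨fun t => iccHomeoI (h 0) (h 1) h01 ⟨h t, hmono t.2.1, hmono t.2.2⟩,
    (iccHomeoI (h 0) (h 1) h01).continuous.comp (hh.subtype_mk _)⟩
  have hHiff (a b : I) : H a = H b ↔ F a = F b :=
    (iccHomeoI _ _ h01).injective.eq_iff.trans (Subtype.ext_iff.trans (hiff a b))
  have hH : IsQuotientMap H := by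
    refine .of_surjective_continuous ((iccHomeoI _ _ h01).surjective.comp fun s => ?_) H.continuous
    obtain ⟨t, ht⟩ := mem_range_of_exists_le_of_exists_ge hh ⟨0, s.2.1⟩ ⟨1, s.2.2⟩
    exact ⟨t, Subtype.ext ht⟩
  have hfac : Function.FactorsThrough F.toContinuousMap H := fun a b => (hHiff a b).1
  let δ : C(I, X) := hH.lift F.toContinuousMap hfac
  have hδ (t : I) : δ (H t) = F t := DFunLike.congr_fun (hH.lift_comp F.toContinuousMap hfac) t
  have hH0 : H 0 = 0 := Subtype.ext (by simp [H])
  have hH1 : H 1 = 1 := Subtype.ext (by simp [H, div_self (sub_pos.2 h01).ne'])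
  have hδ0 : δ 0 = x := by rw [← hH0, hδ, F.source]
  have hδ1 : δ 1 = y := by rw [← hH1, hδ, F.target]
  refine ⟨⟨δ, hδ0, hδ1⟩, hH.surjective.forall₂.2 fun a b hab => ?_, ?_⟩
  · exact (hHiff a b).2 ((hδ a).symm.trans (Eq.trans hab (hδ b)))
  · exact range_subset_iff.2 (hH.surjective.forall.2 fun t => hFγ ⟨t, (hδ t).symm⟩)

end Arcs

section JordanCurves

lemma IsJordanCurve.isCompact {X : Type*} [TopologicalSpace X] {C : Set X} (hC : IsJordanCurve C) :
    IsCompact C := by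
  obtain ⟨f, hf, -, rfl⟩ := hC
  exact isCompact_range hf

lemma IsJordanCurve.isOpen_connectedComponentIn_compl {X : Type*} [TopologicalSpace X] [T2Space X]
    [LocallyConnectedSpace X] {C : Set X} (hC : IsJordanCurve C) (x : X) :
    IsOpen (connectedComponentIn Cᶜ x) :=
  hC.isCompact.isClosed.isOpen_compl.connectedComponentIn

variable {X ι : Type*} [TopologicalSpace X] [ChartedSpace (EuclideanSpace ℝ (Fin 2)) X]
  {C : ι → Set X}

lemma isFinitelyConnectedAt_compl_iUnion_jordanCurve [T2Space X] (hC : ∀ i, IsJordanCurve (C i))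
    (hfin : LocallyFinite C) (hdisj : Pairwise fun i j => Disjoint (C i) (C j)) (p : X) :
    IsFinitelyConnectedAt (⋃ i, C i)ᶜ p := by
  have hclosed (i : ι) : IsClosed (C i) := (hC i).isCompact.isClosed
  by_cases hp : p ∈ ⋃ i, C i
  · obtain ⟨i, hi⟩ := mem_iUnion.1 hp
    obtain ⟨O, hO, hOC⟩ := exists_nhds_inter_compl_eq_compl_iUnion hfin hclosed hdisj hi
    rw [← hOC]
    exact ((hC i).isLocallyArcAt hi).isFinitelyConnectedAt_compl.inter_nhds hO
  · have := ChartedSpace.locallyPathConnectedSpace (EuclideanSpace ℝ (Fin 2)) X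
    exact isFinitelyConnectedAt_of_mem_nhds
      ((hfin.isClosed_iUnion hclosed).isOpen_compl.mem_nhds hp)

lemma dense_compl_iUnion_jordanCurve [T2Space X] (hC : ∀ i, IsJordanCurve (C i))
    (hfin : LocallyFinite C) (hdisj : Pairwise fun i j => Disjoint (C i) (C j)) :
    Dense (⋃ i, C i)ᶜ := fun p => by
  by_cases hp : p ∈ ⋃ i, C i
  · obtain ⟨i, hi⟩ := mem_iUnion.1 hp
    obtain ⟨O, hO, hOC⟩ := exists_nhds_inter_compl_eq_compl_iUnion hfin
      (fun i => (hC i).isCompact.isClosed) hdisj hi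
    rw [← hOC]
    exact mem_closure_iff_frequently.2 <|
      ((mem_closure_iff_frequently.1 ((hC i).isLocallyArcAt hi).mem_closure_compl).and_eventually
        hO).mono fun _ => And.symm
  · exact subset_closure hp

theorem jordan_arc_bounded_intersections_general [TopologicalSpace.MetrizableSpace X]
    (hC : ∀ i, IsJordanCurve (C i)) (hfin : LocallyFinite C)
    (hdisj : Pairwise fun i j => Disjoint (C i) (C j)) {L D : Set X} (hL : IsCompact L)
    (hDo : IsOpen D) (hDc : IsPreconnected D) (hLD : L ⊆ D) :
    ∃ N : ℕ, ∀ z₁ ∈ L, ∀ z₂ ∈ L, z₁ ≠ z₂ →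
      ∃ δ : Path z₁ z₂, Function.Injective δ ∧ range δ ⊆ D ∧
        (range δ ∩ ⋃ i, C i).encard ≤ N := by
  obtain ⟨N, hN⟩ := exists_forall_joinedInUpTo (G := ⋃ i, C i) hDc
    (fun p hp => (isFinitelyConnectedAt_compl_iUnion_jordanCurve hC hfin hdisj p).inter_nhds
      (hDo.mem_nhds hp))
    ((dense_compl_iUnion_jordanCurve hC hfin hdisj).open_subset_closure_inter hDo) hL hLD
  refine ⟨N, fun z₁ hz₁ z₂ hz₂ hne => ?_⟩
  obtain ⟨γ, hγD, hγN⟩ := hN z₁ hz₁ z₂ hz₂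
  obtain ⟨δ, hδ, hδγ⟩ := exists_path_injective γ hne
  exact ⟨δ, hδ, hδγ.trans hγD, (encard_le_encard (inter_subset_inter_left _ hδγ)).trans hγN⟩

end JordanCurves

section RiemannSphere

/-- The homeomorphism of `ℂ̂` with the unit sphere of `ℝ³`, through which `ℂ̂` gets its structure
of metrizable surface. -/
def onePointComplexHomeomorphSphere : OnePoint ℂ ≃ₜ sphere (0 : EuclideanSpace ℝ (Fin 3)) 1 :=
  onePointEquivSphereOfFinrankEq (by simp [Complex.finrank_real_complex])

instance : TopologicalSpace.MetrizableSpace (OnePoint ℂ) :=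
  onePointComplexHomeomorphSphere.isEmbedding.metrizableSpace

/-- The atlas of `ℂ̂` transported from the stereographic projections of the unit sphere. -/
instance : ChartedSpace (EuclideanSpace ℝ (Fin 2)) (OnePoint ℂ) :=
  have : Fact (Module.finrank ℝ (EuclideanSpace ℝ (Fin 3)) = 2 + 1) := ⟨by simp⟩
  onePointComplexHomeomorphSphere.symm.chartedSpace

lemma isJordanArcS_range {z₁ z₂ : OnePoint ℂ} (δ : Path z₁ z₂) (hδ : Function.Injective δ) :
    IsJordanArcS (range δ) z₁ z₂ := by
  refine ⟨δ.extend, δ.continuous_extend.continuousOn, fun s hs t ht h => ?_,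
    δ.image_extend_of_subset Subset.rfl, δ.extend_zero, δ.extend_one⟩
  rw [δ.extend_apply hs, δ.extend_apply ht] at h
  exact congrArg Subtype.val (hδ h)

end RiemannSphere

end

/-!
STATEMENT 14 (Lemma 4.1): Let `Γ ⊆ ℂ̂` be a finite disjoint union of Jordan
curves, `L ⊆ ℂ̂` compact, and `D` a Jordan domain containing `L`.  Then there
is `N ≥ 0` such that any two distinct points of `L` can be joined by a Jordan
arc `δ ⊆ D` meeting `Γ` in at most `N` points.
-/
theorem jordan_arc_bounded_intersections (Γ L D : Set (OnePoint ℂ))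
    (hΓ : ∃ (k : ℕ) (C : Fin k → Set (OnePoint ℂ)),
      (∀ i, IsJordanCurveS (C i)) ∧
      (Pairwise fun i i' => Disjoint (C i) (C i')) ∧ Γ = ⋃ i, C i)
    (hL : IsCompact L)
    (hD : ∃ C : Set (OnePoint ℂ), IsJordanCurveS C ∧
      ∃ x ∈ Cᶜ, D = connectedComponentIn Cᶜ x)
    (hLD : L ⊆ D) :
    ∃ N : ℕ, ∀ z₁ ∈ L, ∀ z₂ ∈ L, z₁ ≠ z₂ →
      ∃ δ : Set (OnePoint ℂ), IsJordanArcS δ z₁ z₂ ∧ δ ⊆ D ∧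
        (δ ∩ Γ).Finite ∧ (δ ∩ Γ).ncard ≤ N := by
  obtain ⟨k, C, hC, hdisj, rfl⟩ := hΓ
  obtain ⟨J, hJ, x, -, rfl⟩ := hD
  have := ChartedSpace.locallyConnectedSpace (EuclideanSpace ℝ (Fin 2)) (OnePoint ℂ)
  have hDo : IsOpen (connectedComponentIn Jᶜ x) :=
    IsJordanCurve.isOpen_connectedComponentIn_compl hJ x
  obtain ⟨N, hN⟩ := jordan_arc_bounded_intersections_general hC (locallyFinite_of_finite C) hdisj
    hL hDo isPreconnected_connectedComponentIn hLD
  refine ⟨N, fun z₁ hz₁ z₂ hz₂ hne => ?_⟩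
  obtain ⟨δ, hδ, hδD, hδN⟩ := hN z₁ hz₁ z₂ hz₂ hne
  exact ⟨Set.range δ, isJordanArcS_range δ hδ, hδD, Set.finite_of_encard_le_coe hδN,
    ENat.toNat_le_of_le_natCast hδN⟩

end
end

section
/- Let U and V be nonempty connected open subsets of ℂ such that the closure of U is compact and contained in V, and such that each of ℂ̂ ∖ U and ℂ̂ ∖ V has only finitely many connected components, where ℂ̂ = ℂ ∪ {∞} is the one-point compactification of ℂ. Let g : U → ℂ be a holomorphic map with g(U) = V that is proper as a map from U to V (preimages under g of compact subsets of V are compact) and not injective (so its degree is at least 2). Assume: (i) every critical point c ∈ U of g (a point with g′(c) = 0) has its entire forward orbit in U (inductively, g^k(c) ∈ U for all k ≥ 0); and (ii) every connected component of ℂ̂ ∖ U contains at most one connected component of ℂ̂ ∖ V. Define V_0 := V and V_{k+1} := {z ∈ U : g(z) ∈ V_k} (so V_1 = U). Then V_k is connected for every k ≥ 1, and the filled Julia set K_g := ⋂_{k≥0} V_k is a continuum: a nonempty, compact, connected set containing more than one point. -/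
noncomputable section

/-- A subset of `ℂ` viewed inside the Riemann sphere `ℂ̂ = OnePoint ℂ`. -/
def sph (s : Set ℂ) : Set (OnePoint ℂ) := (fun z : ℂ => (z : OnePoint ℂ)) '' s

/-- The sets `V₀ = V`, `V_{k+1} = {z ∈ U : g z ∈ V_k}` (so `V₁ = U` when
`g '' U = V ⊇ U`). -/
def Vseq (g : ℂ → ℂ) (U V : Set ℂ) : ℕ → Set ℂ
  | 0 => V
  | k + 1 => {z | z ∈ U ∧ g z ∈ Vseq g U V k}

/-!
`V_{k+1}` is the preimage of `U` under `g^k : V_k → V`, a proper holomorphic map whose critical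
values lie in a compact `K ⊆ U`, so `g^k` is a covering over `V ∖ K`. Around each component `A` of
`ℂ̂ ∖ U` there is a ring in `V` avoiding `K`, whose inner boundary is the component of `ℂ̂ ∖ V`
inside `A`, or a point of `A` if there is none. The coverings of a ring are quotients of the
exponential covering, and simply connected plane domains are unicoherent; hence each component of
the preimage of the ring meets the preimage of its outer part, which lies in `U`, in a connected
set. Adjoining these components to `V_{k+1}` gives `V_k` minus finitely many points, which is
connected, hence `V_{k+1}` is connected.

`K_g` is the decreasing intersection of the compact connected sets `closure V_k`. If it were one
point, a critical point would be a superattracting fixed point, whose basin lies in `K_g`; and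
without critical points `g` would be a covering with a one-point fibre, hence injective.
-/

section Lattice

/-- Neighbouring lattice cells, diagonal neighbours and the cell itself included. -/
def KingAdj (v w : ℤ × ℤ) : Prop := |v.1 - w.1| ≤ 1 ∧ |v.2 - w.2| ≤ 1

lemma kingAdj_iff {v w : ℤ × ℤ} : KingAdj v w ↔
    (v.1 - w.1 ≤ 1 ∧ w.1 - v.1 ≤ 1) ∧ (v.2 - w.2 ≤ 1 ∧ w.2 - v.2 ≤ 1) := by
  rw [KingAdj, abs_le, abs_le]
  omega

lemma KingAdj.symm {v w : ℤ × ℤ} (h : KingAdj v w) : KingAdj w v := by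
  rw [kingAdj_iff] at *
  omega

lemma KingAdj.refl (v : ℤ × ℤ) : KingAdj v v := by
  simp [KingAdj]

/-- The signed number of crossings, by a king step from `v` to `w`, of the vertical ray going up
from `c`, pushed slightly to the right of the column of `c`. -/
def rayCrossing (c v w : ℤ × ℤ) : ℤ :=
  if v.1 = c.1 ∧ w.1 = c.1 + 1 ∧ c.2 < v.2 then 1
  else if w.1 = c.1 ∧ v.1 = c.1 + 1 ∧ c.2 < w.2 then -1 else 0

lemma rayCrossing_below_of_kingAdj {q v : ℤ × ℤ} (h : KingAdj v q) :
    rayCrossing (q.1, q.2 - 1) v q = if q.1 < v.1 then -1 else 0 := by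
  rw [kingAdj_iff] at h
  simp only [rayCrossing, true_and]
  split_ifs <;> omega

/-- The king paths in `Q` do not wind around `c`: the crossings of the ray above `c` are the
differences of an integer function on `Q`. -/
def IsUnlinked (Q : Finset (ℤ × ℤ)) (c : ℤ × ℤ) : Prop :=
  ∃ n : ℤ × ℤ → ℤ, ∀ v ∈ Q, ∀ w ∈ Q, KingAdj v w → n w - n v = rayCrossing c v w

lemma IsUnlinked.mono {Q Q' : Finset (ℤ × ℤ)} {c : ℤ × ℤ} (h : IsUnlinked Q c) (hQ : Q' ⊆ Q) :
    IsUnlinked Q' c :=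
  let ⟨n, hn⟩ := h
  ⟨n, fun v hv w hw => hn v (hQ hv) w (hQ hw)⟩

lemma isUnlinked_of_forall_snd_le {Q : Finset (ℤ × ℤ)} {c : ℤ × ℤ} (h : ∀ v ∈ Q, v.2 ≤ c.2) :
    IsUnlinked Q c := by
  refine ⟨0, fun v hv w hw _ => ?_⟩
  have := h v hv
  have := h w hw
  simp only [rayCrossing, Pi.zero_apply]
  split_ifs <;> omega

variable {G : Type*} [Group G] {T : ℤ × ℤ → ℤ × ℤ → G} {Q : Finset (ℤ × ℤ)} {φ : ℤ × ℤ → G}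
  {q : ℤ × ℤ}

/-- `T` is multiplicative around the triangles of king-adjacent cells of `Q`. -/
def IsCocycleOn (T : ℤ × ℤ → ℤ × ℤ → G) (Q : Finset (ℤ × ℤ)) : Prop :=
  ∀ v ∈ Q, ∀ w ∈ Q, ∀ u ∈ Q, KingAdj v w → KingAdj w u → KingAdj v u → T v w * T w u = T v u

/-- On the king edges of `Q`, the function `T` is the coboundary of `φ`. -/
def IsPotentialOn (φ : ℤ × ℤ → G) (T : ℤ × ℤ → ℤ × ℤ → G) (Q : Finset (ℤ × ℤ)) : Prop :=
  ∀ v ∈ Q, ∀ w ∈ Q, KingAdj v w → T v w = (φ v)⁻¹ * φ w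

lemma IsCocycleOn.mono {Q' : Finset (ℤ × ℤ)} (hT : IsCocycleOn T Q) (hQ : Q' ⊆ Q) :
    IsCocycleOn T Q' :=
  fun v hv w hw u hu => hT v (hQ hv) w (hQ hw) u (hQ hu)

lemma IsCocycleOn.apply_self (hT : IsCocycleOn T Q) {v : ℤ × ℤ} (hv : v ∈ Q) : T v v = 1 := by
  simpa using hT v hv v hv v hv (.refl v) (.refl v) (.refl v)

lemma IsCocycleOn.apply_swap (hT : IsCocycleOn T Q) {v w : ℤ × ℤ} (hv : v ∈ Q) (hw : w ∈ Q)
    (h : KingAdj v w) : T w v = (T v w)⁻¹ := by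
  have := hT v hv w hw v hv h h.symm (.refl v)
  rw [hT.apply_self hv] at this
  exact eq_inv_of_mul_eq_one_right this

lemma IsPotentialOn.update (hφ : IsPotentialOn φ T (Q.erase q)) (hT : IsCocycleOn T Q)
    (hq : q ∈ Q) {x : G} (hx : ∀ v ∈ Q.erase q, KingAdj v q → φ v * T v q = x) :
    IsPotentialOn (Function.update φ q x) T Q := by
  have hne {v : ℤ × ℤ} (hv : v ∈ Q) (h : v ≠ q) : v ∈ Q.erase q := Finset.mem_erase.2 ⟨h, hv⟩
  intro v hv w hw h
  by_cases hvq : v = q <;> by_cases hwq : w = q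
  · subst hvq hwq
    simp [hT.apply_self hv]
  · subst hvq
    rw [Function.update_self, Function.update_of_ne hwq, ← hx w (hne hw hwq) h.symm,
      hT.apply_swap hw hv h.symm]
    group
  · subst hwq
    rw [Function.update_self, Function.update_of_ne hvq, ← hx v (hne hv hvq) h]
    group
  · rw [Function.update_of_ne hvq, Function.update_of_ne hwq]
    exact hφ v (hne hv hvq) w (hne hw hwq) h

lemma IsPotentialOn.mul_eq_mul (hφ : IsPotentialOn φ T (Q.erase q)) (hT : IsCocycleOn T Q)
    (hq : q ∈ Q) {v w : ℤ × ℤ} (hv : v ∈ Q.erase q) (hw : w ∈ Q.erase q) (hvq : KingAdj v q)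
    (hwq : KingAdj w q) (hvw : KingAdj v w) : φ v * T v q = φ w * T w q := by
  rw [← hT v (Finset.mem_of_mem_erase hv) w (Finset.mem_of_mem_erase hw) q hq hvw hwq hvq,
    hφ v hv w hw hvw]
  group

lemma exists_forall_mem_eq_of_forall_eq {α β : Type*} [Nonempty β] {s : Set α} {f : α → β}
    (h : ∀ a ∈ s, ∀ b ∈ s, f a = f b) : ∃ y, ∀ a ∈ s, f a = y := by
  rcases s.eq_empty_or_nonempty with rfl | ⟨b, hb⟩
  · simp
  · exact ⟨f b, fun a ha => h a ha b hb⟩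

/-- Without the cell below `q`, the neighbours of the topmost cell `q` form a left and a right
clique. The winding number around the missing cell tells them apart, so the potential can be
rescaled near the right clique only, to match there the value prescribed at `q` by the left one. -/
lemma IsPotentialOn.exists_isPotentialOn_of_notMem (hφ : IsPotentialOn φ T (Q.erase q))
    (hT : IsCocycleOn T Q) (hq : q ∈ Q) (htop : ∀ v ∈ Q, v.2 ≤ q.2)
    (hbelow : (q.1, q.2 - 1) ∉ Q) (hunl : IsUnlinked Q (q.1, q.2 - 1)) :
    ∃ ψ, IsPotentialOn ψ T Q := by
  obtain ⟨n, hn⟩ := hunl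
  have hcell (v) (hv : v ∈ Q.erase q) :
      v ∈ Q ∧ v.2 ≤ q.2 ∧ ¬(v.1 = q.1 ∧ v.2 = q.2) ∧ ¬(v.1 = q.1 ∧ v.2 = q.2 - 1) := by
    have hvQ := Finset.mem_of_mem_erase hv
    refine ⟨hvQ, htop v hvQ, fun h => Finset.ne_of_mem_erase hv (Prod.ext h.1 h.2), fun h => ?_⟩
    exact hbelow ((Prod.ext h.1 h.2 : v = (q.1, q.2 - 1)) ▸ hvQ)
  have hn_edge (v) (hv : v ∈ Q.erase q) (w) (hw : w ∈ Q.erase q) (h : KingAdj v w) : n v = n w := by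
    have := hn v (hcell v hv).1 w (hcell w hw).1 h
    have := hcell v hv
    have := hcell w hw
    simp only [rayCrossing] at *
    split_ifs at * <;> omega
  have hn_top (v) (hv : v ∈ Q.erase q) (h : KingAdj v q) :
      n q - n v = if q.1 < v.1 then -1 else 0 :=
    (hn v (hcell v hv).1 q hq h).trans (rayCrossing_below_of_kingAdj h)
  have hclique (s : ℤ) (v) (hv : v ∈ Q.erase q ∧ KingAdj v q ∧ v.1 = q.1 + s)
      (w) (hw : w ∈ Q.erase q ∧ KingAdj w q ∧ w.1 = q.1 + s) : φ v * T v q = φ w * T w q := by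
    refine hφ.mul_eq_mul hT hq hv.1 hw.1 hv.2.1 hw.2.1 ?_
    have := hcell v hv.1
    have := hcell w hw.1
    simp only [kingAdj_iff] at *
    omega
  obtain ⟨x, hx⟩ := exists_forall_mem_eq_of_forall_eq (hclique (-1))
  obtain ⟨y, hy⟩ := exists_forall_mem_eq_of_forall_eq (hclique 1)
  refine ⟨_, IsPotentialOn.update (φ := fun v => if n v = n q then φ v else x * y⁻¹ * φ v)
    (x := x) (fun v hv w hw h => ?_) hT hq fun v hv h => ?_⟩
  · simp only [hφ v hv w hw h, hn_edge v hv w hw h]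
    split_ifs <;> group
  · have hside : v.1 = q.1 + -1 ∨ v.1 = q.1 + 1 := by
      have := hcell v hv
      have := kingAdj_iff.1 h
      omega
    have hnv := hn_top v hv h
    rcases hside with hl | hr
    · rw [if_neg (by omega)] at hnv
      simp only [if_pos (show n v = n q by omega), hx v ⟨hv, h, hl⟩]
    · rw [if_pos (by omega)] at hnv
      rw [if_neg (by omega), mul_assoc, hy v ⟨hv, h, hr⟩, inv_mul_cancel_right]

lemma IsPotentialOn.exists_isPotentialOn_of_mem (hφ : IsPotentialOn φ T (Q.erase q))
    (hT : IsCocycleOn T Q) (hq : q ∈ Q) (htop : ∀ v ∈ Q, v.2 ≤ q.2)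
    (hbelow : (q.1, q.2 - 1) ∈ Q) : ∃ ψ, IsPotentialOn ψ T Q := by
  have hb : (q.1, q.2 - 1) ∈ Q.erase q :=
    Finset.mem_erase.2 ⟨fun h => by simpa using congrArg Prod.snd h, hbelow⟩
  refine ⟨_, hφ.update hT hq fun v hv h => hφ.mul_eq_mul hT hq hv hb h ?_ ?_⟩
  · simp [KingAdj]
  · have := htop v (Finset.mem_of_mem_erase hv)
    simp only [kingAdj_iff] at *
    omega

/-- Discrete simple connectivity: remove the topmost cell and induct. -/
theorem IsCocycleOn.exists_isPotentialOn (hT : IsCocycleOn T Q)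
    (hQ : ∀ c ∉ Q, IsUnlinked Q c) : ∃ φ, IsPotentialOn φ T Q := by
  induction hk : Q.card generalizing Q with
  | zero =>
    rw [Finset.card_eq_zero] at hk
    exact ⟨1, by simp [IsPotentialOn, hk]⟩
  | succ k ih =>
    obtain ⟨q, hq, htop⟩ := Q.exists_max_image (fun v => v.2) (Finset.card_pos.1 (by omega))
    have hQ' : ∀ c ∉ Q.erase q, IsUnlinked (Q.erase q) c := by
      intro c hc
      by_cases hcQ : c ∈ Q
      · obtain rfl : c = q := by_contra fun h => hc (Finset.mem_erase.2 ⟨h, hcQ⟩)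
        exact (isUnlinked_of_forall_snd_le htop).mono (Q.erase_subset c)
      · exact (hQ c hcQ).mono (Q.erase_subset q)
    obtain ⟨φ, hφ⟩ := ih (hT.mono (Q.erase_subset q)) hQ'
      (by rw [Finset.card_erase_of_mem hq]; omega)
    by_cases hbelow : (q.1, q.2 - 1) ∈ Q
    · exact hφ.exists_isPotentialOn_of_mem hT hq htop hbelow
    · exact hφ.exists_isPotentialOn_of_notMem hT hq htop hbelow (hQ _ hbelow)

lemma isUnlinked_add_one_snd_iff {a b : ℤ} (h : (a, b + 1) ∉ Q) :
    IsUnlinked Q (a, b + 1) ↔ IsUnlinked Q (a, b) := by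
  have hcross (v) (hv : v ∈ Q) (w) (hw : w ∈ Q) :
      rayCrossing (a, b + 1) v w = rayCrossing (a, b) v w := by
    have hva := ne_of_mem_of_not_mem hv h
    have hwa := ne_of_mem_of_not_mem hw h
    simp only [ne_eq, Prod.ext_iff, rayCrossing] at *
    split_ifs <;> omega
  refine exists_congr fun n => forall₄_congr fun v hv w hw => ?_
  rw [hcross v hv w hw]

lemma isUnlinked_add_one_fst_iff {a b : ℤ} (h₀ : (a, b) ∉ Q) (h₁ : (a + 1, b) ∉ Q) :
    IsUnlinked Q (a + 1, b) ↔ IsUnlinked Q (a, b) := by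
  let e : ℤ × ℤ → ℤ := fun v => if v.1 = a + 1 ∧ b < v.2 then 1 else 0
  have hcross (v) (hv : v ∈ Q) (w) (hw : w ∈ Q) (h : KingAdj v w) :
      rayCrossing (a, b) v w = rayCrossing (a + 1, b) v w + (e w - e v) := by
    have hv₀ := ne_of_mem_of_not_mem hv h₀
    have hv₁ := ne_of_mem_of_not_mem hv h₁
    have hw₀ := ne_of_mem_of_not_mem hw h₀
    have hw₁ := ne_of_mem_of_not_mem hw h₁
    simp only [ne_eq, Prod.ext_iff, kingAdj_iff, rayCrossing, e] at *
    split_ifs <;> omega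
  refine ⟨fun ⟨n, hn⟩ => ⟨n + e, fun v hv w hw h => ?_⟩,
    fun ⟨n, hn⟩ => ⟨n - e, fun v hv w hw h => ?_⟩⟩
  · rw [hcross v hv w hw h, ← hn v hv w hw h]
    simp only [Pi.add_apply]
    ring
  · rw [← sub_eq_of_eq_add (hcross v hv w hw h), ← hn v hv w hw h]
    simp only [Pi.sub_apply]
    ring

lemma forall_uIcc_iff_of_forall_add_one_iff {p : ℤ → Prop} {a b : ℤ}
    (h : ∀ j ∈ Set.uIcc a b, j + 1 ∈ Set.uIcc a b → (p (j + 1) ↔ p j)) : p a ↔ p b := by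
  wlog hab : a ≤ b generalizing a b
  · exact (this (by rwa [Set.uIcc_comm]) (by omega)).symm
  rw [Set.uIcc_of_le hab] at h
  induction b, hab using Int.leInduction with
  | base => rfl
  | succ m hm ih =>
    rw [h m ⟨hm, by omega⟩ ⟨by omega, le_rfl⟩]
    exact ih fun j hj hj' => h j ⟨hj.1, by have := hj.2; omega⟩ ⟨hj'.1, by have := hj'.2; omega⟩

lemma isUnlinked_iff_of_disjoint_uIcc {c d : ℤ × ℤ} (h : ∀ v ∈ Set.uIcc c d, v ∉ Q) :
    IsUnlinked Q c ↔ IsUnlinked Q d := by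
  rw [← Set.uIcc_prod_uIcc] at h
  trans IsUnlinked Q (c.1, d.2)
  · exact forall_uIcc_iff_of_forall_add_one_iff (p := fun j => IsUnlinked Q (c.1, j))
      fun j _ hj => isUnlinked_add_one_snd_iff (h _ ⟨Set.left_mem_uIcc, hj⟩)
  · exact forall_uIcc_iff_of_forall_add_one_iff (p := fun j => IsUnlinked Q (j, d.2))
      fun j hj hj' => isUnlinked_add_one_fst_iff (h _ ⟨hj, Set.right_mem_uIcc⟩)
        (h _ ⟨hj', Set.right_mem_uIcc⟩)

lemma isUnlinked_of_abs_le {M : ℤ} (hM : ∀ v ∈ Q, |v.1| ≤ M ∧ |v.2| ≤ M) {c : ℤ × ℤ}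
    (hc : ¬(|c.1| ≤ M ∧ |c.2| ≤ M)) : IsUnlinked Q c := by
  by_cases h : c.2 < -M
  · refine ⟨fun v => if c.1 < v.1 then 1 else 0, fun v hv w hw hvw => ?_⟩
    have := hM v hv
    have := hM w hw
    simp only [abs_le, kingAdj_iff, rayCrossing] at *
    split_ifs <;> omega
  · refine ⟨0, fun v hv w hw hvw => ?_⟩
    have := hM v hv
    have := hM w hw
    simp only [abs_le, kingAdj_iff, rayCrossing, Pi.zero_apply] at *
    split_ifs <;> omega

end Lattice

section PlaneDomains

open Set Topology

section Homotopy

variable {X : Type*} [TopologicalSpace X]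

lemma quotient_symm_trans_cancel_left {x y z : X} (a : Path.Homotopic.Quotient x y)
    (b : Path.Homotopic.Quotient y z) : a.symm.trans (a.trans b) = b := by
  rw [← Path.Homotopic.Quotient.trans_assoc, Path.Homotopic.Quotient.symm_trans,
    Path.Homotopic.Quotient.refl_trans]

lemma exists_quotient_trans_eq_of_isUnlinked [PathConnectedSpace X] (x₀ : X) {pt : ℤ × ℤ → X}
    (e : ∀ v w, Path.Homotopic.Quotient (pt v) (pt w)) {Q : Finset (ℤ × ℤ)}
    (hQ : ∀ c ∉ Q, IsUnlinked Q c)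
    (he : ∀ v ∈ Q, ∀ w ∈ Q, ∀ u ∈ Q, KingAdj v w → KingAdj w u → KingAdj v u →
      (e v w).trans (e w u) = e v u) :
    ∃ p : ∀ v, Path.Homotopic.Quotient x₀ (pt v),
      ∀ v ∈ Q, ∀ w ∈ Q, KingAdj v w → (p v).trans (e v w) = p w := by
  let P (v) : Path.Homotopic.Quotient x₀ (pt v) := .mk (PathConnectedSpace.somePath x₀ (pt v))
  -- The product `p * q` of `FundamentalGroup` is `q` followed by `p`, hence the swapped indices.
  let T (v w : ℤ × ℤ) : FundamentalGroup X x₀ := (P w).trans ((e w v).trans (P v).symm)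
  have hT : IsCocycleOn T Q := by
    intro v hv w hw u hu hvw hwu hvu
    simp only [T, FundamentalGroup.mul_def, ← he u hu w hw v hv hwu.symm hvw.symm hvu.symm,
      Path.Homotopic.Quotient.trans_assoc, quotient_symm_trans_cancel_left]
  obtain ⟨φ, hφ⟩ := hT.exists_isPotentialOn hQ
  refine ⟨fun v => (φ v).toPath.symm.trans (P v), fun v hv w hw h => ?_⟩
  have hφvw : (P v).trans ((e v w).trans (P w).symm) = (φ v).toPath.trans (φ w).toPath.symm :=
    hφ w hw v hv h.symm
  calc ((φ v).toPath.symm.trans (P v)).trans (e v w)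
      = (φ v).toPath.symm.trans (((P v).trans ((e v w).trans (P w).symm)).trans (P w)) := by
        simp [Path.Homotopic.Quotient.trans_assoc]
    _ = (φ w).toPath.symm.trans (P w) := by
        rw [hφvw, Path.Homotopic.Quotient.trans_assoc, quotient_symm_trans_cancel_left]

lemma quotient_trans_mk_eq_of_eventually {x₀ x y : X} (p : ∀ z, Path.Homotopic.Quotient x₀ z)
    (σ : Path x y)
    (hp : ∀ t, ∀ᶠ s in 𝓝 t, p (σ s) = (p (σ t)).trans (.mk (σ.subpath t s))) :
    (p x).trans (.mk σ) = p y := by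
  let P (t : unitInterval) : Prop := (p (σ 0)).trans (.mk (σ.subpath 0 t)) = p (σ t)
  have hsub (a b c : unitInterval) : Path.Homotopic.Quotient.trans
      (.mk (σ.subpath a b)) (.mk (σ.subpath b c)) = .mk (σ.subpath a c) :=
    Path.Homotopic.Quotient.eq.2 ⟨Path.Homotopy.subpathTransSubpath σ a b c⟩
  have hP : IsLocallyConstant P := by
    refine (IsLocallyConstant.iff_eventually_eq P).2 fun t => ?_
    filter_upwards [hp t] with s hs
    simp only [P, eq_iff_iff, hs]
    refine ⟨fun h => ?_, fun h => by rw [← h, Path.Homotopic.Quotient.trans_assoc, hsub]⟩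
    simpa [hsub, Path.Homotopic.Quotient.trans_assoc] using
      congrArg (fun z => z.trans (.mk (σ.subpath s t))) h
  have h₁ : P 1 := by
    rw [hP.apply_eq_of_isPreconnected isPreconnected_univ (mem_univ 1) (mem_univ 0)]
    simp [P]
  simp only [P, Path.subpath_zero_one] at h₁
  clear hP hsub hp P
  obtain ⟨σ, rfl, rfl⟩ := σ
  exact h₁

end Homotopy

section Segments

variable {E : Type*} [AddCommGroup E] [Module ℝ E] [TopologicalSpace E] [IsTopologicalAddGroup E]
  [ContinuousSMul ℝ E] {N S : Set E}

lemma path_homotopic_of_convex (hS : Convex ℝ S) (hSN : S ⊆ N) {x y : N} {p q : Path x y}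
    (hp : ∀ t, (p t : E) ∈ S) (hq : ∀ t, (q t : E) ∈ S) : p.Homotopic q := by
  have hx : (x : E) ∈ S := by simpa using hp 0
  have hy : (y : E) ∈ S := by simpa using hp 1
  have := hS.contractibleSpace ⟨x, hx⟩
  let lift (r : Path x y) (hr : ∀ t, (r t : E) ∈ S) : Path (⟨x, hx⟩ : S) ⟨y, hy⟩ :=
    { toFun := fun t => ⟨r t, hr t⟩, source' := by simp, target' := by simp }
  exact (SimplyConnectedSpace.paths_homotopic (lift p hp) (lift q hq)).map
    ⟨inclusion hSN, continuous_inclusion hSN⟩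

open Classical in
/-- The homotopy class in `N` of the straight path from `x` to `y`; an arbitrary class if the
segment leaves `N`. -/
def segmentClass [PathConnectedSpace N] (x y : N) : Path.Homotopic.Quotient x y :=
  if h : range (Path.segment (x : E) y) ⊆ N then
    .mk { toFun := fun t => ⟨Path.segment (x : E) y t, h (mem_range_self t)⟩
          source' := by simp
          target' := by simp }
  else .mk (PathConnectedSpace.somePath x y)

variable [PathConnectedSpace N]

lemma mk_eq_segmentClass (hS : Convex ℝ S) (hSN : S ⊆ N) {x y : N} (σ : Path x y)
    (hσ : ∀ t, (σ t : E) ∈ S) : .mk σ = segmentClass x y := by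
  have hseg : range (Path.segment (x : E) y) ⊆ S := by
    rw [Path.range_segment]
    exact hS.segment_subset (by simpa using hσ 0) (by simpa using hσ 1)
  rw [segmentClass, dif_pos (hseg.trans hSN)]
  exact Path.Homotopic.Quotient.eq.2 <|
    path_homotopic_of_convex hS hSN hσ fun t => hseg (mem_range_self t)

lemma segmentClass_trans (hS : Convex ℝ S) (hSN : S ⊆ N) {x y z : N} (hx : (x : E) ∈ S)
    (hy : (y : E) ∈ S) (hz : (z : E) ∈ S) :
    (segmentClass x y).trans (segmentClass y z) = segmentClass x z := by
  have hjoin {a b : N} (ha : (a : E) ∈ S) (hb : (b : E) ∈ S) :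
      ∃ σ : Path a b, ∀ t, (σ t : E) ∈ S := by
    have hseg : range (Path.segment (a : E) b) ⊆ S := by
      rw [Path.range_segment]
      exact hS.segment_subset ha hb
    exact ⟨{ toFun := fun t => ⟨Path.segment (a : E) b t, hSN (hseg (mem_range_self t))⟩
             source' := by simp
             target' := by simp }, fun t => hseg (mem_range_self t)⟩
  obtain ⟨σ, hσ⟩ := hjoin hx hy
  obtain ⟨τ, hτ⟩ := hjoin hy hz
  rw [← mk_eq_segmentClass hS hSN σ hσ, ← mk_eq_segmentClass hS hSN τ hτ,
    ← Path.Homotopic.Quotient.mk_trans]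
  refine mk_eq_segmentClass hS hSN _ fun t => ?_
  rw [Path.trans_apply]
  split_ifs
  exacts [hσ _, hτ _]

end Segments

section Grid

lemma abs_sub_intCast_le_of_mem_uIcc {u : ℝ} {c j : ℤ} (hc : |u - c| ≤ 2)
    (hj : j ∈ uIcc ⌊u⌋ c) : |u - j| ≤ 2 := by
  have hle := Int.floor_le u
  have hlt := Int.lt_floor_add_one u
  rw [abs_le] at *
  rcases mem_uIcc.1 hj with ⟨h₁, h₂⟩ | ⟨h₁, h₂⟩ <;>
  · rify at h₁ h₂
    constructor <;> linarith

lemma abs_sub_floor_le_of_abs_sub_lt {u w : ℝ} (h : |u - w| < 1) : |u - ⌊w⌋| ≤ 2 := by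
  have hle := Int.floor_le w
  have hlt := Int.lt_floor_add_one w
  rw [abs_lt] at h
  rw [abs_le]
  constructor <;> linarith

lemma abs_floor_sub_floor_le {u w : ℝ} (h : |u - w| < 1) : |⌊u⌋ - ⌊w⌋| ≤ 1 := by
  rw [abs_lt] at h
  rw [abs_sub_le_iff, sub_le_iff_le_add', sub_le_iff_le_add', ← Int.lt_add_one_iff,
    ← Int.lt_add_one_iff, Int.floor_lt, Int.floor_lt]
  push_cast
  constructor <;> linarith [Int.lt_floor_add_one u, Int.lt_floor_add_one w]

variable {δ : ℝ} {N : Set ℂ}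

/-- The cell of the square grid of mesh `δ` containing `z`. -/
def gridCell (δ : ℝ) (z : ℂ) : ℤ × ℤ := (⌊z.re / δ⌋, ⌊z.im / δ⌋)

/-- The lower left corner of a cell. -/
def gridPoint (δ : ℝ) (v : ℤ × ℤ) : ℂ := ⟨δ * v.1, δ * v.2⟩

/-- The square of side `4δ` centred at the lower left corner of a cell: it is large enough to
contain the cell together with the corners of all neighbouring cells. -/
def gridSquare (δ : ℝ) (v : ℤ × ℤ) : Set ℂ := {z | |z.re / δ - v.1| ≤ 2 ∧ |z.im / δ - v.2| ≤ 2}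

lemma abs_re_div_sub_lt_and_abs_im_div_sub_lt (hδ : 0 < δ) {z w : ℂ} (h : dist z w < δ) :
    |z.re / δ - w.re / δ| < 1 ∧ |z.im / δ - w.im / δ| < 1 := by
  rw [Complex.dist_eq] at h
  rw [← sub_div, ← sub_div, abs_div, abs_div, abs_of_pos hδ, div_lt_one hδ, div_lt_one hδ]
  exact ⟨(Complex.abs_re_le_norm (z - w)).trans_lt h, (Complex.abs_im_le_norm (z - w)).trans_lt h⟩

lemma mem_gridSquare_gridCell (hδ : 0 < δ) {z w : ℂ} (h : dist z w < δ) :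
    z ∈ gridSquare δ (gridCell δ w) :=
  (abs_re_div_sub_lt_and_abs_im_div_sub_lt hδ h).imp
    abs_sub_floor_le_of_abs_sub_lt abs_sub_floor_le_of_abs_sub_lt

lemma kingAdj_gridCell (hδ : 0 < δ) {z w : ℂ} (h : dist z w < δ) :
    KingAdj (gridCell δ z) (gridCell δ w) :=
  (abs_re_div_sub_lt_and_abs_im_div_sub_lt hδ h).imp abs_floor_sub_floor_le abs_floor_sub_floor_le

lemma gridPoint_mem_gridSquare (hδ : 0 < δ) {v w : ℤ × ℤ} (h : KingAdj v w) :
    gridPoint δ w ∈ gridSquare δ v := by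
  obtain ⟨h₁, h₂⟩ := h
  rify at h₁ h₂
  simp only [gridSquare, gridPoint, mem_ofPred_eq, mul_div_cancel_left₀ _ hδ.ne']
  rw [abs_sub_comm, abs_sub_comm (w.2 : ℝ)]
  exact ⟨h₁.trans one_le_two, h₂.trans one_le_two⟩

lemma convex_gridSquare (δ : ℝ) (v : ℤ × ℤ) : Convex ℝ (gridSquare δ v) := by
  have hslab (l : ℂ →ₗ[ℝ] ℝ) (a : ℝ) : Convex ℝ {z | |l z / δ - a| ≤ 2} := by
    convert! (convex_closedBall a 2).linear_preimage (δ⁻¹ • l) using 1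
    ext z
    simp only [mem_ofPred_eq, mem_preimage, Metric.mem_closedBall, Real.dist_eq,
      LinearMap.smul_apply, smul_eq_mul, div_eq_inv_mul]
  exact (hslab Complex.reLm v.1).inter (hslab Complex.imLm v.2)

lemma exists_forall_abs_gridCell_le (hδ : 0 < δ) {R : Set ℂ} (hR : Bornology.IsBounded R) :
    ∃ M : ℤ, ∀ z ∈ R, |(gridCell δ z).1| ≤ M ∧ |(gridCell δ z).2| ≤ M := by
  obtain ⟨B, hB⟩ := hR.exists_norm_le
  have hcoord {x : ℝ} (hx : |x| ≤ B) : |⌊x / δ⌋| ≤ ⌈B / δ⌉ := by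
    have hxB : |x / δ| ≤ B / δ := by
      rw [abs_div, abs_of_pos hδ]
      gcongr
    rw [abs_le] at *
    rw [Int.le_floor]
    push_cast
    exact ⟨by linarith [Int.le_ceil (B / δ)], (Int.floor_mono hxB.2).trans (Int.floor_le_ceil _)⟩
  exact ⟨⌈B / δ⌉, fun z hz => ⟨hcoord ((Complex.abs_re_le_norm z).trans (hB z hz)),
    hcoord ((Complex.abs_im_le_norm z).trans (hB z hz))⟩⟩

lemma gridSquare_gridCell_subset_closedBall (hδ : 0 < δ) (z : ℂ) :
    gridSquare δ (gridCell δ z) ⊆ Metric.closedBall z (6 * δ) := by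
  have hcoord {x y : ℝ} (h : |y / δ - ⌊x / δ⌋| ≤ 2) : |y - x| ≤ 3 * δ := by
    rw [← div_le_iff₀ hδ, ← abs_of_pos hδ, ← abs_div, sub_div]
    rw [abs_le] at *
    constructor <;> linarith [Int.floor_le (x / δ), Int.lt_floor_add_one (x / δ)]
  intro y hy
  rw [Metric.mem_closedBall, Complex.dist_eq]
  calc ‖y - z‖ ≤ |y.re - z.re| + |y.im - z.im| := Complex.norm_le_abs_re_add_abs_im (y - z)
    _ ≤ 3 * δ + 3 * δ := add_le_add (hcoord hy.1) (hcoord hy.2)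
    _ = 6 * δ := by ring

lemma isUnlinked_gridCell_iff {Q : Finset (ℤ × ℤ)} (hQ : ∀ v ∈ Q, gridSquare δ v ⊆ N) {z : ℂ}
    (hz : z ∉ N) {c : ℤ × ℤ} (hc : z ∈ gridSquare δ c) :
    IsUnlinked Q (gridCell δ z) ↔ IsUnlinked Q c := by
  refine isUnlinked_iff_of_disjoint_uIcc fun v hv hvQ => hz (hQ v hvQ ?_)
  rw [← uIcc_prod_uIcc] at hv
  exact ⟨abs_sub_intCast_le_of_mem_uIcc hc.1 hv.1, abs_sub_intCast_le_of_mem_uIcc hc.2 hv.2⟩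

end Grid

section NoHoles

variable {N : Set ℂ}

/-- No nonempty compact piece splits off the complement of `N` in the plane. For an open
connected `N` this is simple connectivity. -/
def HasNoHoles (N : Set ℂ) : Prop :=
  ∀ C ⊆ Nᶜ, IsCompact C → IsClosed (Nᶜ \ C) → C = ∅

lemma isClosed_inter_setOf_of_forall_dist_lt {X : Type*} [PseudoMetricSpace X] {F : Set X}
    (hF : IsClosed F) {p : X → Prop} {δ : ℝ} (hδ : 0 < δ)
    (h : ∀ a ∈ F, ∀ b ∈ F, dist b a < δ → p b → p a) : IsClosed (F ∩ {a | p a}) := by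
  refine isClosed_of_closure_subset fun a ha => ?_
  have haF : a ∈ F := hF.closure_subset_iff.2 inter_subset_left ha
  obtain ⟨b, ⟨hbF, hb⟩, hab⟩ := Metric.mem_closure_iff.1 ha δ hδ
  exact ⟨haF, h a haF b hbF (by rwa [dist_comm]) hb⟩

/-- The points of `Nᶜ` around which `Q` winds would form a compact piece of `Nᶜ`. -/
lemma HasNoHoles.isUnlinked (hN : HasNoHoles N) (hNo : IsOpen N) {δ : ℝ} (hδ : 0 < δ) {M : ℤ}
    {Q : Finset (ℤ × ℤ)} (hQ : ∀ v, v ∈ Q ↔ (|v.1| ≤ M ∧ |v.2| ≤ M) ∧ gridSquare δ v ⊆ N)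
    {c : ℤ × ℤ} (hc : c ∉ Q) : IsUnlinked Q c := by
  have hQN (v) (hv : v ∈ Q) := ((hQ v).1 hv).2
  have hQM (v) (hv : v ∈ Q) := ((hQ v).1 hv).1
  let p (z : ℂ) : Prop := IsUnlinked Q (gridCell δ z)
  have hp (a) (ha : a ∈ Nᶜ) (b) (hab : dist b a < δ) : p a ↔ p b :=
    isUnlinked_gridCell_iff hQN ha (mem_gridSquare_gridCell hδ (by rwa [dist_comm]))
  have hbdd : Bornology.IsBounded {z | ¬p z} := by
    refine (Metric.isBounded_Icc (-(δ * (M + 1))) (δ * (M + 1))).reProdIm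
      (Metric.isBounded_Icc (-(δ * (M + 1))) (δ * (M + 1))) |>.subset fun z hz => ?_
    have hcell : |⌊z.re / δ⌋| ≤ M ∧ |⌊z.im / δ⌋| ≤ M :=
      by_contra fun h => hz (isUnlinked_of_abs_le hQM h)
    have hcoord {x : ℝ} (hx : |⌊x / δ⌋| ≤ M) : x ∈ Icc (-(δ * (M + 1))) (δ * (M + 1)) := by
      rw [mem_Icc, ← abs_le, mul_comm, ← div_le_iff₀ hδ]
      nth_rw 1 [← abs_of_pos hδ]
      rw [← abs_div]
      rw [abs_le] at *
      rify at hx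
      constructor <;> linarith [Int.floor_le (x / δ), Int.lt_floor_add_one (x / δ)]
    exact ⟨hcoord hcell.1, hcoord hcell.2⟩
  have hempty : Nᶜ ∩ {z | ¬p z} = ∅ := by
    refine hN _ inter_subset_left (Metric.isCompact_of_isClosed_isBounded ?_ ?_) ?_
    · exact isClosed_inter_setOf_of_forall_dist_lt hNo.isClosed_compl hδ
        fun a ha b _ hab hb ha' => hb ((hp a ha b hab).1 ha')
    · exact hbdd.subset inter_subset_right
    · convert! isClosed_inter_setOf_of_forall_dist_lt (p := p) hNo.isClosed_compl hδ
        fun a ha b _ hab hb => (hp a ha b hab).2 hb using 1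
      ext z
      simp
  by_cases hcM : |c.1| ≤ M ∧ |c.2| ≤ M
  · obtain ⟨z, hz, hzN⟩ := not_subset.1 fun h => hc ((hQ c).2 ⟨hcM, h⟩)
    rw [← isUnlinked_gridCell_iff hQN hzN hz]
    exact by_contra fun h => (hempty ▸ ⟨hzN, h⟩ : z ∈ (∅ : Set ℂ))
  · exact isUnlinked_of_abs_le hQM hcM

/-- A multivalued "path from `x₀` to `z`" which locally changes by straight segments only. -/
lemma HasNoHoles.exists_quotient_trans_segmentClass_eq [PathConnectedSpace N] (hN : HasNoHoles N)
    (hNo : IsOpen N) (x₀ : N) {R : Set ℂ} (hR : IsCompact R) (hRN : R ⊆ N) :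
    ∃ δ > 0, (∀ z ∈ R, Metric.ball z δ ⊆ N) ∧ ∃ p : ∀ z : N, Path.Homotopic.Quotient x₀ z,
      ∀ z w : N, (z : ℂ) ∈ R → (w : ℂ) ∈ R → dist (w : ℂ) z < δ →
        p w = (p z).trans (segmentClass z w) := by
  obtain ⟨ρ, hρ, hρN⟩ := hR.exists_cthickening_subset_open hNo hRN
  obtain ⟨δ, hδ, rfl⟩ : ∃ δ > 0, ρ = 6 * δ := ⟨ρ / 6, by positivity, by ring⟩
  have hball (z) (hz : z ∈ R) : Metric.closedBall z (6 * δ) ⊆ N :=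
    (Metric.closedBall_subset_cthickening hz _).trans hρN
  have hsquare (z) (hz : z ∈ R) : gridSquare δ (gridCell δ z) ⊆ N :=
    (gridSquare_gridCell_subset_closedBall hδ z).trans (hball z hz)
  obtain ⟨M, hM⟩ : ∃ M : ℤ, ∀ z ∈ R, |(gridCell δ z).1| ≤ M ∧ |(gridCell δ z).2| ≤ M :=
    exists_forall_abs_gridCell_le hδ hR.isBounded
  classical
  let Q : Finset (ℤ × ℤ) :=
    (Finset.Icc (-M) M ×ˢ Finset.Icc (-M) M).filter fun v => gridSquare δ v ⊆ N
  have hQ (v) : v ∈ Q ↔ (|v.1| ≤ M ∧ |v.2| ≤ M) ∧ gridSquare δ v ⊆ N := by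
    simp only [Q, Finset.mem_filter, Finset.mem_product, Finset.mem_Icc, abs_le]
  have hQN {v} (hv : v ∈ Q) : gridSquare δ v ⊆ N := ((hQ v).1 hv).2
  let pt (v : ℤ × ℤ) : N := if h : gridPoint δ v ∈ N then ⟨gridPoint δ v, h⟩ else x₀
  have hpt {v} (hv : v ∈ Q) {w} (h : KingAdj v w) : (pt w : ℂ) ∈ gridSquare δ v := by
    have hw := gridPoint_mem_gridSquare hδ h
    simpa only [pt, dif_pos (hQN hv hw)] using hw
  obtain ⟨p, hp⟩ := exists_quotient_trans_eq_of_isUnlinked x₀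
    (fun v w => segmentClass (pt v) (pt w))
    (fun c => hN.isUnlinked hNo hδ hQ) fun v hv w _ u _ hvw _ hvu =>
      segmentClass_trans (convex_gridSquare δ v) (hQN hv) (hpt hv (.refl v)) (hpt hv hvw)
        (hpt hv hvu)
  refine ⟨δ, hδ, fun z hz => Metric.ball_subset_closedBall.trans <|
    (Metric.closedBall_subset_closedBall (by linarith)).trans (hball z hz),
    fun z => (p (gridCell δ z)).trans (segmentClass (pt (gridCell δ z)) z), fun z w hz hw hzw => ?_⟩
  have hv : gridCell δ z ∈ Q := (hQ _).2 ⟨hM z hz, hsquare z hz⟩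
  have hv' : gridCell δ w ∈ Q := (hQ _).2 ⟨hM w hw, hsquare w hw⟩
  have hadj := (kingAdj_gridCell hδ hzw).symm
  have hzS := mem_gridSquare_gridCell hδ ((dist_self (z : ℂ)).trans_lt hδ)
  have hwS := mem_gridSquare_gridCell hδ hzw
  have hS := convex_gridSquare δ (gridCell δ z)
  beta_reduce
  rw [← hp _ hv _ hv' hadj, Path.Homotopic.Quotient.trans_assoc,
    Path.Homotopic.Quotient.trans_assoc,
    segmentClass_trans hS (hQN hv) (hpt hv (.refl _)) (hpt hv hadj) hwS,
    segmentClass_trans hS (hQN hv) (hpt hv (.refl _)) hzS hwS]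

/-- Extend the potential of `exists_quotient_trans_segmentClass_eq` along a loop: it must return to
its initial value. -/
lemma HasNoHoles.simplyConnectedSpace (hN : HasNoHoles N) (hNo : IsOpen N) (hc : IsConnected N) :
    SimplyConnectedSpace N := by
  have : PathConnectedSpace N :=
    isPathConnected_iff_pathConnectedSpace.1 (hNo.isConnected_iff_isPathConnected.1 hc)
  refine simply_connected_iff_loops_nullhomotopic.2 ⟨this, fun x γ => ?_⟩
  let R : Set ℂ := range fun t => (γ t : ℂ)
  have hR : IsCompact R := isCompact_range (by fun_prop)
  have hRN : R ⊆ N := range_subset_iff.2 fun t => (γ t).2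
  obtain ⟨δ, hδ, hball, p, hp⟩ := hN.exists_quotient_trans_segmentClass_eq hNo x hR hRN
  have hloop : (p x).trans (.mk γ) = p x := by
    refine quotient_trans_mk_eq_of_eventually p γ fun t => ?_
    have hcont : ContinuousAt (fun s => (γ s : ℂ)) t := by fun_prop
    filter_upwards [(tendsto_const_nhds.uIcc Filter.tendsto_id).eventually
      (Filter.eventually_smallSets_forall.2 <|
        hcont.eventually (Metric.ball_mem_nhds _ hδ))] with s hs
    rw [hp _ _ (mem_range_self t) (mem_range_self s) (hs s right_mem_uIcc),
      mk_eq_segmentClass (convex_ball _ _) (hball _ (mem_range_self t)) _ fun u => ?_]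
    obtain ⟨r, hr, hru⟩ : γ.subpath t s u ∈ γ '' uIcc t s :=
      Path.range_subpath γ t s ▸ mem_range_self u
    exact hru ▸ hs r hr
  refine Path.Homotopic.Quotient.eq.1 ?_
  rw [← quotient_symm_trans_cancel_left (p x) (.mk γ), hloop]
  exact Path.Homotopic.Quotient.symm_trans _

end NoHoles

end PlaneDomains

section Unicoherence

open Set Topology

variable {X : Type*} [TopologicalSpace X]

lemma sub_eq_sub_of_exp_eq {O : Set X} (hO : IsPreconnected O) {f g : X → ℂ}
    (hf : ContinuousOn f O) (hg : ContinuousOn g O)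
    (h : ∀ x ∈ O, Complex.exp (f x) = Complex.exp (g x)) {a b : X} (ha : a ∈ O) (hb : b ∈ O) :
    f b - g b = f a - g a := by
  have hshift : EqOn f (fun x => g x + (f a - g a)) O := by
    refine Complex.isCoveringMap_exp.eqOn_of_comp_eqOn hO hf (by fun_prop) (fun x hx => ?_) ha
      (add_sub_cancel _ _).symm
    refine Subtype.ext ?_
    change Complex.exp (f x) = Complex.exp (g x + (f a - g a))
    rw [Complex.exp_add, Complex.exp_sub, ← h x hx, ← h a ha,
      div_self (Complex.exp_ne_zero _), mul_one]
  rw [sub_eq_iff_eq_add', hshift hb]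

lemma continuousOn_indicator_of_inter_frontier {O W : Set X} {f : X → ℂ} (hf : Continuous f)
    (h : ∀ x ∈ O ∩ frontier W, f x = 0) : ContinuousOn (W.indicator f) O := by
  classical
  rw [← piecewise_eq_indicator]
  exact ContinuousOn.piecewise h hf.continuousOn continuousOn_const

lemma exists_continuous_zero_two_pi_I_of_isClosed [NormalSpace X] {F G : Set X} (hF : IsClosed F)
    (hG : IsClosed G) (hFG : Disjoint F G) :
    ∃ e : X → ℂ, Continuous e ∧ (∀ x ∈ F, e x = 0) ∧ ∀ x ∈ G, e x = 2 * Real.pi * Complex.I := by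
  obtain ⟨χ, hχF, hχG, -⟩ := exists_continuous_zero_one_of_isClosed hF hG hFG
  refine ⟨fun x => (χ x : ℂ) * (2 * Real.pi * Complex.I), by fun_prop, fun x hx => ?_,
    fun x hx => ?_⟩
  · simp [hχF hx]
  · simp [hχG hx]

lemma notMem_frontier_inter_of_subset_union {O u v : Set X} (hO : IsOpen O) (hu : IsOpen u)
    (hv : IsOpen v) (huv : O ⊆ u ∪ v) (hne : ¬(O ∩ (u ∩ v)).Nonempty) {x : X} (hx : x ∈ O) :
    x ∉ frontier (O ∩ u) := by
  rintro ⟨hxcl, hxint⟩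
  rw [(hO.inter hu).interior_eq] at hxint
  have hxv : x ∈ v := (huv hx).resolve_left fun hxu => hxint ⟨hx, hxu⟩
  obtain ⟨y, ⟨-, hyv⟩, hyO, hyu⟩ := mem_closure_iff.1 hxcl _ (hO.inter hv) ⟨hx, hxv⟩
  exact hne ⟨y, hyO, hyu, hyv⟩

/-- If `O₁ ∩ O₂` split into `W` and a remainder, a function equal to `1` off `W` and winding once
across `W` would have a logarithm, whose two expressions over `O₁` and `O₂` are incompatible. -/
lemma isPreconnected_inter_of_union_eq_univ [SimplyConnectedSpace X]
    [LocallyPathConnectedSpace X] [NormalSpace X] {O₁ O₂ : Set X} (hO₁ : IsOpen O₁)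
    (hO₂ : IsOpen O₂) (hc₁ : IsPreconnected O₁) (hc₂ : IsPreconnected O₂)
    (hO : O₁ ∪ O₂ = univ) : IsPreconnected (O₁ ∩ O₂) := by
  rintro u v hu hv huv ⟨a, haO, hau⟩ ⟨b, hbO, hbv⟩
  by_contra hne
  let W := O₁ ∩ O₂ ∩ u
  have hWfr : ∀ x ∈ O₁ ∩ O₂, x ∉ frontier W := fun x =>
    notMem_frontier_inter_of_subset_union (hO₁.inter hO₂) hu hv huv hne
  have hbW : b ∉ W := fun h => hne ⟨b, hbO, h.2, hbv⟩
  obtain ⟨e, he, he₂, he₁⟩ :=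
    exists_continuous_zero_two_pi_I_of_isClosed hO₂.isClosed_compl hO₁.isClosed_compl
      (disjoint_compl_left_iff_subset.2 (compl_subset_iff_union.2 hO))
  let l₁ : X → ℂ := W.indicator e
  let l₂ : X → ℂ := W.indicator fun x => e x - 2 * Real.pi * Complex.I
  have hl₁ : ContinuousOn l₁ O₁ := continuousOn_indicator_of_inter_frontier he
    fun x hx => he₂ x fun hx₂ => hWfr x ⟨hx.1, hx₂⟩ hx.2
  have hl₂ : ContinuousOn l₂ O₂ := continuousOn_indicator_of_inter_frontier (by fun_prop)
    fun x hx => sub_eq_zero.2 (he₁ x fun hx₁ => hWfr x ⟨hx₁, hx.1⟩ hx.2)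
  have hl (x) : Complex.exp (l₁ x) = Complex.exp (l₂ x) := by
    by_cases hx : x ∈ W
    · simp [l₁, l₂, hx, Complex.exp_sub]
    · simp [l₁, l₂, hx]
  have hcont : ContinuousOn (fun x => Complex.exp (l₁ x)) univ := by
    rw [← hO]
    refine ContinuousOn.union_of_isOpen hl₁.cexp ?_ hO₁ hO₂
    simpa only [hl] using hl₂.cexp
  have hX : IsSimplyConnected (univ : Set X) :=
    (Homeomorph.Set.univ X).toHomotopyEquiv.simplyConnectedSpace
  obtain ⟨l, hlc, hl'⟩ := Complex.exists_continuousOn_eqOn_exp_comp hX isOpen_univ hcont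
    (by simp [Complex.exp_ne_zero])
  have h₁ := sub_eq_sub_of_exp_eq hc₁ (hlc.mono (subset_univ _)) hl₁
    (fun x _ => hl' (mem_univ x)) haO.1 hbO.1
  have h₂ := sub_eq_sub_of_exp_eq hc₂ (hlc.mono (subset_univ _)) hl₂
    (fun x _ => (hl' (mem_univ x)).trans (hl x)) haO.2 hbO.2
  have haW : a ∈ W := ⟨haO, hau⟩
  simp only [l₁, l₂, indicator_of_mem haW, indicator_of_notMem hbW] at h₁ h₂
  exact Complex.two_pi_I_ne_zero (by linear_combination h₁ - h₂)

end Unicoherence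

section CoveringMaps

open Set Topology

variable {E M X : Type*} [TopologicalSpace E] [TopologicalSpace M] [TopologicalSpace X]
  {p : E → X} {q : M → X} {S D : Set X}

lemma existsUnique_lift_unitInterval (hp : IsCoveringMapOn p S) (γ : C(unitInterval, X))
    (hγ : ∀ t, γ t ∈ S) {e : E} (he : p e = γ 0) :
    ∃! Γ : C(unitInterval, E), Γ 0 = e ∧ p ∘ Γ = γ := by
  have : ContractibleSpace unitInterval := (convex_Icc 0 1).contractibleSpace ⟨0, by simp⟩
  have : LocallyPathConnectedSpace unitInterval :=
    (isQuotientMap_projIcc (h := zero_le_one)).locallyPathConnectedSpace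
  exact hp.existsUnique_continuousMap_lifts γ he hγ

lemma injOn_preimage_of_subsingleton_fiber (hp : IsCoveringMapOn p S) (hS : IsPathConnected S)
    {x : X} (hx : x ∈ S) (hsub : (p ⁻¹' {x}).Subsingleton) : InjOn p (p ⁻¹' S) := by
  intro e he e' _ hee'
  obtain ⟨γ, hγ⟩ := hS.joinedIn (p e) he x hx
  obtain ⟨Γ, ⟨rfl, hΓ⟩, -⟩ := existsUnique_lift_unitInterval hp γ.toContinuousMap hγ
    (e := e) (by simp)
  obtain ⟨Γ', ⟨rfl, hΓ'⟩, -⟩ := existsUnique_lift_unitInterval hp γ.toContinuousMap hγ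
    (e := e') (by simp [hee'])
  have hpΓ (t) : p (Γ t) = γ t := congrFun hΓ t
  have hpΓ' (t) : p (Γ' t) = γ t := congrFun hΓ' t
  have hend : Γ' 1 = Γ 1 := hsub (by simp [hpΓ']) (by simp [hpΓ])
  let σ : C(unitInterval, unitInterval) := ⟨unitInterval.symm, unitInterval.continuous_symm⟩
  have hlift : Γ.comp σ = Γ'.comp σ :=
    (existsUnique_lift_unitInterval hp γ.symm.toContinuousMap (fun t => hγ _)
      (e := Γ 1) (by simp [hpΓ])).unique
      ⟨by simp [σ], by ext t; simp [σ, hpΓ]⟩ ⟨by simp [σ, hend], by ext t; simp [σ, hpΓ']⟩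
  simpa [σ] using congrArg (fun h => h 1) hlift

lemma exists_joinedIn_preimage (hp : IsCoveringMapOn p S) {e : E} {b : X}
    (h : JoinedIn S (p e) b) : ∃ e', p e' = b ∧ JoinedIn (p ⁻¹' S) e e' := by
  obtain ⟨γ, hγ⟩ := h
  obtain ⟨Γ, ⟨hΓ₀, hΓ⟩, -⟩ := existsUnique_lift_unitInterval hp γ.toContinuousMap hγ
    (e := e) (by simp)
  have hpΓ (t) : p (Γ t) = γ t := congrFun hΓ t
  exact ⟨Γ 1, by simp [hpΓ], ⟨⟨Γ, hΓ₀, rfl⟩, fun t => by simpa [hpΓ] using hγ t⟩⟩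

lemma isPreconnected_preimage_of_isPathConnected (hp : IsCoveringMapOn p S)
    (hS : IsPathConnected S) (hDS : D ⊆ S) (hD : D.Nonempty) (hpD : IsPreconnected (p ⁻¹' D)) :
    IsPreconnected (p ⁻¹' S) := by
  obtain ⟨d, hd⟩ := hD
  have hjoin (e) (he : e ∈ p ⁻¹' S) : ∃ e' ∈ p ⁻¹' D, JoinedIn (p ⁻¹' S) e e' := by
    obtain ⟨e', rfl, h⟩ := exists_joinedIn_preimage hp (hS.joinedIn _ he _ (hDS hd))
    exact ⟨e', hd, h⟩
  refine isPreconnected_of_forall_pair fun x hx y hy => ?_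
  obtain ⟨x', hx', hxx'⟩ := hjoin x hx
  obtain ⟨y', hy', hyy'⟩ := hjoin y hy
  obtain ⟨σ, hσ⟩ := hxx'
  obtain ⟨τ, hτ⟩ := hyy'
  refine ⟨range σ ∪ p ⁻¹' D ∪ range τ, ?_, .inl (.inl ⟨0, σ.source⟩), .inr ⟨0, τ.source⟩, ?_⟩
  · exact union_subset (union_subset (range_subset_iff.2 hσ) (preimage_mono hDS))
      (range_subset_iff.2 hτ)
  · exact .union y' (.inr hy') ⟨1, τ.target⟩ (.union x' ⟨1, σ.target⟩ hx'
      (isPreconnected_range σ.continuous) hpD) (isPreconnected_range τ.continuous)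

lemma pathComponentIn_eq_range_lift [PathConnectedSpace (q ⁻¹' S)] (hp : IsCoveringMapOn p S)
    (hq : IsCoveringMapOn q S) {s : C(q ⁻¹' S, E)} (hs : ∀ z, p (s z) = q z) (z₀ : q ⁻¹' S) :
    pathComponentIn (p ⁻¹' S) (s z₀) = range s := by
  refine subset_antisymm ?_ ?_
  · rintro x ⟨γ, hγ⟩
    have hpγ : Continuous (p ∘ γ) := hp.continuousOn.comp_continuous γ.continuous hγ
    obtain ⟨Γ, ⟨hΓ₀, hΓ⟩, -⟩ := existsUnique_lift_unitInterval hq ⟨p ∘ γ, hpγ⟩ hγ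
      (e := z₀) (by simp [hs])
    have hqΓ (t) : q (Γ t) = p (γ t) := congrFun hΓ t
    have hΓS (t) : Γ t ∈ q ⁻¹' S := by simpa [hqΓ] using hγ t
    let sΓ : C(unitInterval, E) := s.comp ⟨fun t => ⟨Γ t, hΓS t⟩, by fun_prop⟩
    have hlift : γ.toContinuousMap = sΓ :=
      (existsUnique_lift_unitInterval hp ⟨p ∘ γ, hpγ⟩ hγ (e := s z₀) (by simp)).unique
        ⟨γ.source, rfl⟩ ⟨by simp [sΓ, hΓ₀], by ext t; simp [sΓ, hs, hqΓ]⟩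
    exact ⟨⟨Γ 1, hΓS 1⟩, by simpa [sΓ] using (congrArg (fun h => h 1) hlift).symm⟩
  · rintro _ ⟨z, rfl⟩
    obtain ⟨γ⟩ := PathConnectedSpace.joined z₀ z
    exact ⟨γ.map s.continuous, fun t => by
      rw [mem_preimage, Path.map_coe, Function.comp_apply, hs]
      exact (γ t).2⟩

lemma isPreconnected_pathComponentIn_inter_preimage (hp : IsCoveringMapOn p S)
    (hq : IsCoveringMapOn q S) (hqS : S ⊆ range q) [SimplyConnectedSpace (q ⁻¹' S)]
    [LocallyPathConnectedSpace (q ⁻¹' S)] (hDS : D ⊆ S) (hqD : IsPreconnected (q ⁻¹' D)) (x : E) :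
    IsPreconnected (pathComponentIn (p ⁻¹' S) x ∩ p ⁻¹' D) := by
  by_cases hx : x ∈ p ⁻¹' S
  swap
  · rw [not_nonempty_iff_eq_empty.1 (mt pathComponentIn_nonempty_iff.1 hx), empty_inter]
    exact isPreconnected_empty
  obtain ⟨m, hm⟩ := hqS hx
  let q' : C(q ⁻¹' S, X) := ⟨fun z => q z, hq.continuousOn.comp_continuous continuous_subtype_val
    fun z => z.2⟩
  obtain ⟨s, ⟨hsm, hs⟩, -⟩ := hp.existsUnique_continuousMap_lifts q'
    (a₀ := ⟨m, by rwa [mem_preimage, hm]⟩) hm.symm fun z => z.2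
  have hps (z) : p (s z) = q z := congrFun hs z
  have himage : pathComponentIn (p ⁻¹' S) x ∩ p ⁻¹' D = s '' (Subtype.val ⁻¹' (q ⁻¹' D)) := by
    rw [← hsm, pathComponentIn_eq_range_lift hp hq hps, inter_comm, ← image_preimage_eq_inter_range]
    congr 1
    ext z
    simp [hps]
  rw [himage]
  refine IsPreconnected.image ?_ s s.continuous.continuousOn
  rwa [← IsInducing.subtypeVal.isPreconnected_image,
    Subtype.image_preimage_coe, inter_eq_right.2 (preimage_mono hDS)]

end CoveringMaps

section GeneralTopology

open Set Topology

variable {X : Type*} [TopologicalSpace X]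

lemma isPreconnected_union_diff_of_isOpen [PreconnectedSpace X] {A u v : Set X}
    (hA : IsPreconnected A) (hne : A.Nonempty) (hu : IsOpen u) (hv : IsOpen v)
    (hcover : Aᶜ ⊆ u ∪ v) (hdisj : Aᶜ ∩ (u ∩ v) = ∅) : IsPreconnected (A ∪ Aᶜ ∩ v) := by
  have huv {z : X} (hz : z ∉ A) (hzu : z ∈ u) (hzv : z ∈ v) : False :=
    hdisj.subset ⟨hz, hzu, hzv⟩
  -- The part of a separation which does not contain `A` is clopen in `X`.
  have key (r t : Set X) (hr : IsOpen r) (ht : IsOpen t) (hrt : A ∪ Aᶜ ∩ v ⊆ r ∪ t)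
      (hd : (A ∪ Aᶜ ∩ v) ∩ (r ∩ t) = ∅) (hAr : A ⊆ r) : A ∪ Aᶜ ∩ v ⊆ r := by
    have hAt {z : X} (hzA : z ∈ A) : z ∉ t := fun hzt => hd.subset ⟨.inl hzA, hAr hzA, hzt⟩
    have hcompl : (t ∩ v)ᶜ = r ∪ u := by
      ext z
      refine ⟨fun hz => ?_, ?_⟩
      · by_cases hzA : z ∈ A
        · exact .inl (hAr hzA)
        · refine (hcover hzA).elim .inr fun hzv => .inl ?_
          exact (hrt (.inr ⟨hzA, hzv⟩)).resolve_right fun hzt => hz ⟨hzt, hzv⟩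
      · rintro hz ⟨hzt, hzv⟩
        have hzA : z ∉ A := fun hzA => hAt hzA hzt
        exact hz.elim (fun hzr => hd.subset ⟨.inr ⟨hzA, hzv⟩, hzr, hzt⟩) fun hzu => huv hzA hzu hzv
    have hclopen : IsClopen (t ∩ v) := ⟨⟨hcompl ▸ hr.union hu⟩, ht.inter hv⟩
    obtain ⟨a, ha⟩ := hne
    have hempty : t ∩ v = ∅ := (isClopen_iff.1 hclopen).resolve_right fun h =>
      hAt ha (h.symm.subset (mem_univ a)).1
    rintro z (hz | hz)
    · exact hAr hz
    · exact (hrt (.inr hz)).resolve_right fun hzt => hempty.subset ⟨hzt, hz.2⟩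
  rw [isPreconnected_iff_subset_of_disjoint]
  intro r t hr ht hrt hd
  rcases isPreconnected_iff_subset_of_disjoint.1 hA r t hr ht (subset_union_left.trans hrt)
    (subset_eq_empty (inter_subset_inter_left _ subset_union_left) hd) with h | h
  · exact .inl (key r t hr ht hrt hd h)
  · exact .inr (key t r ht hr (by rwa [union_comm t]) (by rwa [inter_comm t]) h)

lemma isPreconnected_compl_connectedComponentIn_compl [PreconnectedSpace X] {U : Set X}
    (hU : IsPreconnected U) (x : X) : IsPreconnected (connectedComponentIn Uᶜ x)ᶜ := by
  by_cases hx : x ∈ Uᶜ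
  swap
  · simpa [connectedComponentIn_eq_empty hx] using isPreconnected_univ
  set A := connectedComponentIn Uᶜ x
  have hxA : x ∈ A := mem_connectedComponentIn hx
  have hUA : U ⊆ Aᶜ := subset_compl_comm.1 (connectedComponentIn_subset _ _)
  have key (u v : Set X) (hu : IsOpen u) (hv : IsOpen v) (hcover : Aᶜ ⊆ u ∪ v)
      (hdisj : Aᶜ ∩ (u ∩ v) = ∅) (hUu : U ⊆ u) : Aᶜ ⊆ u := by
    have hAv : IsPreconnected (A ∪ Aᶜ ∩ v) := isPreconnected_union_diff_of_isOpen
      isPreconnected_connectedComponentIn ⟨x, hxA⟩ hu hv hcover hdisj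
    have hsub : A ∪ Aᶜ ∩ v ⊆ A := hAv.subset_connectedComponentIn (.inl hxA) <|
      union_subset (connectedComponentIn_subset _ _) fun z hz hzU =>
        hdisj.subset ⟨hz.1, hUu hzU, hz.2⟩
    exact fun z hz => (hcover hz).resolve_right fun hzv => hz (hsub (.inr ⟨hz, hzv⟩))
  rw [isPreconnected_iff_subset_of_disjoint]
  intro u v hu hv hcover hdisj
  rcases isPreconnected_iff_subset_of_disjoint.1 hU u v hu hv (hUA.trans hcover)
    (subset_eq_empty (inter_subset_inter_left _ hUA) hdisj) with h | h
  · exact .inl (key u v hu hv hcover hdisj h)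
  · exact .inr (key v u hv hu (by rwa [union_comm]) (by rwa [inter_comm v]) h)

lemma isPreconnected_of_isPreconnected_union_sUnion {O : Set X} {𝒬 : Set (Set X)}
    (hO : IsOpen O) (h𝒬 : ∀ Q ∈ 𝒬, IsOpen Q) (hconn : ∀ Q ∈ 𝒬, IsPreconnected (Q ∩ O))
    (hpair : ∀ Q ∈ 𝒬, ∀ Q' ∈ 𝒬, Q ≠ Q' → Q ∩ Q' ⊆ O) (hunion : IsPreconnected (O ∪ ⋃₀ 𝒬)) :
    IsPreconnected O := by
  intro u v hu hv hcover ⟨x, hxO, hxu⟩ ⟨y, hyO, hyv⟩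
  by_contra hdisj
  rw [not_nonempty_iff_eq_empty] at hdisj
  -- Each `Q` goes to the side of the separation which contains `Q ∩ O`.
  let u' := O ∩ u ∪ ⋃₀ {Q ∈ 𝒬 | Q ∩ O ⊆ u}
  let v' := O ∩ v ∪ ⋃₀ {Q ∈ 𝒬 | ¬ Q ∩ O ⊆ u}
  have hu' : IsOpen u' := (hO.inter hu).union (isOpen_sUnion fun Q hQ => h𝒬 Q hQ.1)
  have hv' : IsOpen v' := (hO.inter hv).union (isOpen_sUnion fun Q hQ => h𝒬 Q hQ.1)
  have hcover' : O ∪ ⋃₀ 𝒬 ⊆ u' ∪ v' := by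
    rintro z (hz | ⟨Q, hQ, hzQ⟩)
    · exact (hcover hz).imp (fun h => .inl ⟨hz, h⟩) (fun h => .inl ⟨hz, h⟩)
    · by_cases h : Q ∩ O ⊆ u
      · exact .inl (.inr ⟨Q, ⟨hQ, h⟩, hzQ⟩)
      · exact .inr (.inr ⟨Q, ⟨hQ, h⟩, hzQ⟩)
  have hQv {Q} (hQ : Q ∈ 𝒬) (hQu : ¬ Q ∩ O ⊆ u) : Q ∩ O ⊆ v :=
    (isPreconnected_iff_subset_of_disjoint.1 (hconn Q hQ) u v hu hv
      (inter_subset_right.trans hcover)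
      (subset_eq_empty (inter_subset_inter_left _ inter_subset_right) hdisj)).resolve_left hQu
  obtain ⟨z, -, hzu, hzv⟩ := hunion u' v' hu' hv' hcover' ⟨x, .inl hxO, .inl ⟨hxO, hxu⟩⟩
    ⟨y, .inl hyO, .inl ⟨hyO, hyv⟩⟩
  have hzO : z ∈ O := by
    rcases hzu with h | ⟨Q, ⟨hQ, hQu⟩, hzQ⟩
    · exact h.1
    rcases hzv with h | ⟨Q', ⟨hQ', hQ'u⟩, hzQ'⟩
    · exact h.1
    exact hpair Q hQ Q' hQ' (fun h => hQ'u (h ▸ hQu)) ⟨hzQ, hzQ'⟩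
  have hzu' : z ∈ u := hzu.elim And.right fun ⟨Q, hQ, hzQ⟩ => hQ.2 ⟨hzQ, hzO⟩
  have hzv' : z ∈ v := hzv.elim And.right fun ⟨Q, hQ, hzQ⟩ => hQv hQ.1 hQ.2 ⟨hzQ, hzO⟩
  exact hdisj.subset ⟨hzO, hzu', hzv'⟩

lemma isPreconnected_diff_singleton [T1Space X] {W D : Set X} {a : X} (hW : IsOpen W)
    (hWc : IsPreconnected W) (hD : IsOpen D) (haD : a ∈ D) (hDW : D ⊆ W)
    (hDa : IsPreconnected (D \ {a})) : IsPreconnected (W \ {a}) := by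
  have hDO : D ∩ (W \ {a}) = D \ {a} := by rw [← inter_sdiff_assoc, inter_eq_left.2 hDW]
  refine isPreconnected_of_isPreconnected_union_sUnion (𝒬 := {D}) (hW.sdiff isClosed_singleton)
    (by simpa) (by simpa [hDO]) (by rintro _ rfl _ rfl h; exact absurd rfl h) ?_
  rwa [sUnion_singleton, ← union_eq_right.2 (singleton_subset_iff.2 haD), ← union_assoc,
    sdiff_union_of_subset (singleton_subset_iff.2 (hDW haD)), union_eq_left.2 hDW]

lemma isClosed_connectedComponentIn {F : Set X} (hF : IsClosed F) (x : X) :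
    IsClosed (connectedComponentIn F x) := by
  by_cases hx : x ∈ F
  · exact closure_subset_iff_isClosed.1 <|
      isPreconnected_connectedComponentIn.closure.subset_connectedComponentIn
        (subset_closure (mem_connectedComponentIn hx))
        (closure_minimal (connectedComponentIn_subset _ _) hF)
  · simp [connectedComponentIn_eq_empty hx]

lemma exists_isClosed_isPreconnected_mem_nhds [RegularSpace X] [LocallyConnectedSpace X]
    {Ω : Set X} (hΩ : IsOpen Ω) {x : X} (hx : x ∈ Ω) :
    ∃ N ∈ 𝓝 x, IsClosed N ∧ IsPreconnected N ∧ N ⊆ Ω := by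
  obtain ⟨T, hT, hTc, hTΩ⟩ := exists_mem_nhds_isClosed_subset (hΩ.mem_nhds hx)
  exact ⟨_, connectedComponentIn_mem_nhds hT, isClosed_connectedComponentIn hTc x,
    isPreconnected_connectedComponentIn, (connectedComponentIn_subset _ _).trans hTΩ⟩

lemma exists_isClosed_isPreconnected_mem_mem [RegularSpace X] [LocallyConnectedSpace X]
    {Ω : Set X} (hΩ : IsOpen Ω) (hΩc : IsPreconnected Ω) {x y : X} (hx : x ∈ Ω) (hy : y ∈ Ω) :
    ∃ R, IsClosed R ∧ IsPreconnected R ∧ R ⊆ Ω ∧ x ∈ R ∧ y ∈ R := by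
  refine hΩc.induction₂ (fun x y => ∃ R, IsClosed R ∧ IsPreconnected R ∧ R ⊆ Ω ∧ x ∈ R ∧ y ∈ R)
    (fun x hx => ?_) ?_ ?_ hx hy
  · obtain ⟨N, hN, hNc, hNp, hNΩ⟩ := exists_isClosed_isPreconnected_mem_nhds hΩ hx
    filter_upwards [mem_nhdsWithin_of_mem_nhds hN] with y hy
    exact ⟨N, hNc, hNp, hNΩ, mem_of_mem_nhds hN, hy⟩
  · rintro x y z - - - ⟨R, hRc, hRp, hRΩ, hxR, hyR⟩ ⟨R', hRc', hRp', hRΩ', hyR', hzR'⟩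
    exact ⟨R ∪ R', hRc.union hRc', hRp.union y hyR hyR' hRp', union_subset hRΩ hRΩ', .inl hxR,
      .inr hzR'⟩
  · rintro x y - - ⟨R, hRc, hRp, hRΩ, hxR, hyR⟩
    exact ⟨R, hRc, hRp, hRΩ, hyR, hxR⟩

lemma exists_isClosed_isPreconnected_between [CompactSpace X] [RegularSpace X]
    [LocallyConnectedSpace X] {Ω F : Set X} (hΩ : IsOpen Ω) (hΩc : IsPreconnected Ω)
    (hF : IsClosed F) (hFΩ : F ⊆ Ω) :
    ∃ Z, IsClosed Z ∧ IsPreconnected Z ∧ F ⊆ Z ∧ Z ⊆ Ω := by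
  obtain rfl | ⟨x₀, hx₀⟩ := F.eq_empty_or_nonempty
  · exact ⟨∅, isClosed_empty, isPreconnected_empty, subset_rfl, empty_subset _⟩
  have hnhds (x) (hx : x ∈ F) : ∃ R ∈ 𝓝 x, IsClosed R ∧ IsPreconnected R ∧ R ⊆ Ω ∧ x₀ ∈ R := by
    obtain ⟨N, hN, hNc, hNp, hNΩ⟩ := exists_isClosed_isPreconnected_mem_nhds hΩ (hFΩ hx)
    obtain ⟨R, hRc, hRp, hRΩ, hx₀R, hxR⟩ :=
      exists_isClosed_isPreconnected_mem_mem hΩ hΩc (hFΩ hx₀) (hFΩ hx)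
    exact ⟨R ∪ N, Filter.mem_of_superset hN subset_union_right, hRc.union hNc,
      hRp.union x hxR (mem_of_mem_nhds hN) hNp, union_subset hRΩ hNΩ, .inl hx₀R⟩
  choose! R hR hRc hRp hRΩ hx₀R using hnhds
  obtain ⟨t, htF, ht⟩ := hF.isCompact.elim_nhds_subcover R hR
  exact ⟨⋃ x ∈ t, R x, t.finite_toSet.isClosed_biUnion fun x hx => hRc x (htF x hx),
    isPreconnected_of_forall x₀ fun y hy => by
      obtain ⟨x, hx, hyx⟩ := mem_iUnion₂.1 hy
      exact ⟨R x, subset_biUnion_of_mem (u := R) hx, hx₀R x (htF x hx), hyx, hRp x (htF x hx)⟩,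
    ht, iUnion₂_subset fun x hx => hRΩ x (htF x hx)⟩

/-- A closed connected set which does not separate the space: in a compact space, a nonseparating
continuum. The empty set is allowed. -/
structure IsNonseparatingContinuum (A : Set X) : Prop where
  isClosed : IsClosed A
  isPreconnected : IsPreconnected A
  isPreconnected_compl : IsPreconnected Aᶜ

lemma isNonseparatingContinuum_connectedComponentIn_compl [PreconnectedSpace X] {U : Set X}
    (hU : IsOpen U) (hUc : IsPreconnected U) (x : X) :
    IsNonseparatingContinuum (connectedComponentIn Uᶜ x) where
  isClosed := isClosed_connectedComponentIn hU.isClosed_compl x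
  isPreconnected := isPreconnected_connectedComponentIn
  isPreconnected_compl := isPreconnected_compl_connectedComponentIn_compl hUc x

lemma IsNonseparatingContinuum.exists_superset_disjoint [CompactSpace X] [RegularSpace X]
    [LocallyConnectedSpace X] [PreconnectedSpace X] {A F : Set X}
    (hA : IsNonseparatingContinuum A) (hAne : A.Nonempty) (hF : IsClosed F) (hFA : Disjoint F A) :
    ∃ Z, IsNonseparatingContinuum Z ∧ F ⊆ Z ∧ Disjoint Z A := by
  obtain ⟨Y, hY, hYp, hFY, hYA⟩ := exists_isClosed_isPreconnected_between
    hA.isClosed.isOpen_compl hA.isPreconnected_compl hF hFA.subset_compl_right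
  obtain ⟨a, ha⟩ := hAne
  have hAO : A ⊆ connectedComponentIn Yᶜ a :=
    hA.isPreconnected.subset_connectedComponentIn ha (subset_compl_comm.1 hYA)
  refine ⟨(connectedComponentIn Yᶜ a)ᶜ,
    ⟨hY.isOpen_compl.connectedComponentIn.isClosed_compl,
      isPreconnected_compl_connectedComponentIn_compl hYp a, ?_⟩,
    hFY.trans (subset_compl_comm.1 (connectedComponentIn_subset _ _)),
    disjoint_compl_left_iff_subset.2 hAO⟩
  rw [compl_compl]
  exact isPreconnected_connectedComponentIn

end GeneralTopology

section ExponentialCovering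

open Set Topology

/-- The universal covering of `ℂ \ {c}`; on the sphere it omits exactly `c` and `∞`. -/
def expAbout (c ζ : ℂ) : ℂ := c + Complex.exp ζ

variable {c : ℂ} {s : OnePoint ℂ} {A B Z P Q : Set (OnePoint ℂ)}

lemma continuous_expAbout (c : ℂ) : Continuous (expAbout c) := by
  unfold expAbout
  fun_prop

lemma isOpenMap_expAbout (c : ℂ) : IsOpenMap (expAbout c) :=
  (isOpenMap_add_left c).comp Complex.isOpenMap_exp

lemma isCoveringMapOn_expAbout (c : ℂ) : IsCoveringMapOn (expAbout c) {c}ᶜ := by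
  convert! Complex.isCoveringMapOn_exp.homeomorph_comp (Homeomorph.addLeft c) using 1
  ext z
  change z ≠ c ↔ -c + z ≠ 0
  rw [ne_eq, ne_eq, neg_add_eq_zero, eq_comm]

lemma range_expAbout (c : ℂ) : range (expAbout c) = {c}ᶜ := by
  ext z
  refine ⟨?_, fun hz => ⟨Complex.log (z - c), ?_⟩⟩
  · rintro ⟨ζ, rfl⟩
    simp [expAbout]
  · rw [expAbout, Complex.exp_log (sub_ne_zero.2 hz), add_sub_cancel]

lemma coe_expAbout_ne (hs : s = c ∨ s = OnePoint.infty) (ζ : ℂ) :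
    (expAbout c ζ : OnePoint ℂ) ≠ s := by
  rcases hs with rfl | rfl
  · simp [expAbout]
  · exact OnePoint.coe_ne_infty _

lemma norm_expAbout_sub (c ζ : ℂ) : ‖expAbout c ζ - c‖ = Real.exp ζ.re := by
  rw [expAbout, add_sub_cancel_left, Complex.norm_exp]

lemma preimage_expAbout_ball (c : ℂ) {r : ℝ} (hr : 0 < r) :
    expAbout c ⁻¹' Metric.ball c r = {ζ : ℂ | ζ.re < Real.log r} := by
  ext ζ
  rw [mem_preimage, mem_ball_iff_norm, norm_expAbout_sub, mem_ofPred_eq,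
    Real.lt_log_iff_exp_lt hr]

lemma exists_isOpen_isConnected_preimage_expAbout_center (hP : IsOpen P)
    (hcP : (c : OnePoint ℂ) ∈ P) :
    ∃ D ⊆ P, IsOpen D ∧ (c : OnePoint ℂ) ∈ D ∧ IsConnected (expAbout c ⁻¹' ((↑) ⁻¹' D)) := by
  obtain ⟨r, hr, hrP⟩ := Metric.isOpen_iff.1 (hP.preimage OnePoint.continuous_coe) c hcP
  refine ⟨(↑) '' Metric.ball c r, image_subset_iff.2 hrP,
    OnePoint.isOpen_image_coe.2 Metric.isOpen_ball, ⟨c, Metric.mem_ball_self hr, rfl⟩, ?_⟩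
  rw [preimage_image_eq _ OnePoint.coe_injective, preimage_expAbout_ball c hr]
  exact ⟨⟨(Real.log r - 1 : ℝ), by simp⟩, (convex_halfSpace_re_lt _).isPreconnected⟩

lemma exists_isOpen_isConnected_preimage_expAbout_infty (c : ℂ) (hP : IsOpen P)
    (hP' : OnePoint.infty ∈ P) :
    ∃ D ⊆ P, IsOpen D ∧ OnePoint.infty ∈ D ∧ IsConnected (expAbout c ⁻¹' ((↑) ⁻¹' D)) := by
  obtain ⟨r, hr, hrP⟩ :=
    ((OnePoint.isOpen_iff_of_mem hP').1 hP).2.isBounded.subset_closedBall_lt 0 c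
  have hpre : expAbout c ⁻¹' ((↑) ⁻¹' ((↑) '' Metric.closedBall c r : Set (OnePoint ℂ))ᶜ) =
      {ζ : ℂ | Real.log r < ζ.re} := by
    ext ζ
    rw [preimage_compl, preimage_image_eq _ OnePoint.coe_injective, preimage_compl, mem_compl_iff,
      mem_preimage, mem_closedBall_iff_norm, norm_expAbout_sub, not_le, mem_ofPred_eq,
      Real.log_lt_iff_lt_exp hr]
  refine ⟨((↑) '' Metric.closedBall c r)ᶜ, ?_, OnePoint.isOpen_compl_image_coe.2
    ⟨Metric.isClosed_closedBall, isCompact_closedBall c r⟩, by simp, ?_⟩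
  · rw [compl_subset_comm]
    intro z hz
    obtain ⟨z, rfl⟩ := OnePoint.ne_infty_iff_exists.1 (ne_of_mem_of_not_mem hP' hz).symm
    exact ⟨z, hrP hz, rfl⟩
  · rw [hpre]
    exact ⟨⟨(Real.log r + 1 : ℝ), by simp⟩, (convex_halfSpace_re_gt _).isPreconnected⟩

lemma image_coe_expAbout_preimage (hs : s = c ∨ s = OnePoint.infty)
    (hP : P ⊆ insert s {(c : OnePoint ℂ), OnePoint.infty}ᶜ) :
    (↑) '' (expAbout c '' (expAbout c ⁻¹' ((↑) ⁻¹' P))) = P \ {s} := by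
  ext z
  constructor
  · rintro ⟨_, ⟨ζ, hζ, rfl⟩, rfl⟩
    exact ⟨hζ, coe_expAbout_ne hs ζ⟩
  · rintro ⟨hzP, hzs⟩
    have hz := (hP hzP).resolve_left hzs
    simp only [mem_compl_iff, mem_insert_iff, mem_singleton_iff, not_or] at hz
    obtain ⟨z, rfl⟩ := OnePoint.ne_infty_iff_exists.1 hz.2
    obtain ⟨ζ, rfl⟩ : z ∈ range (expAbout c) := by
      rw [range_expAbout]
      exact fun h => hz.1 (congrArg _ h)
    exact ⟨_, ⟨ζ, hzP, rfl⟩, rfl⟩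

/-- `P \ {s}` is path connected and the preimage of a small punctured neighbourhood of `s` is a half
plane, so all sheets over `P \ {s}` are joined over that neighbourhood. -/
lemma isPreconnected_preimage_expAbout (hs : s = c ∨ s = OnePoint.infty) (hP : IsOpen P)
    (hPc : IsPreconnected P) (hsP : s ∈ P)
    (hPs : P ⊆ insert s {(c : OnePoint ℂ), OnePoint.infty}ᶜ) :
    IsPreconnected (expAbout c ⁻¹' ((↑) ⁻¹' P)) := by
  obtain ⟨D, hDP, hD, hsD, ⟨ζ, hζ⟩, hDc⟩ : ∃ D ⊆ P, IsOpen D ∧ s ∈ D ∧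
      IsConnected (expAbout c ⁻¹' ((↑) ⁻¹' D)) := by
    rcases hs with rfl | rfl
    · exact exists_isOpen_isConnected_preimage_expAbout_center hP hsP
    · exact exists_isOpen_isConnected_preimage_expAbout_infty c hP hsP
  have hDs : IsPreconnected (D \ {s}) := by
    rw [← image_coe_expAbout_preimage hs (hDP.trans hPs)]
    exact (hDc.image _ (continuous_expAbout c).continuousOn).image _
      OnePoint.continuous_coe.continuousOn
  set S : Set ℂ := expAbout c '' (expAbout c ⁻¹' ((↑) ⁻¹' P)) with hSdef
  have hSP : (↑) '' S = P \ {s} := image_coe_expAbout_preimage hs hPs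
  have hS : IsPreconnected S := by
    rw [← OnePoint.isOpenEmbedding_coe.isInducing.isPreconnected_image, hSP]
    exact isPreconnected_diff_singleton hP hPc hD hsD hDP hDs
  have hSo : IsOpen S := isOpenMap_expAbout c _
    ((hP.preimage OnePoint.continuous_coe).preimage (continuous_expAbout c))
  have hSpath : IsPathConnected S := hSo.isConnected_iff_isPathConnected.1
    ⟨⟨_, ζ, hDP hζ, rfl⟩, hS⟩
  have hSc : S ⊆ {c}ᶜ := (image_subset_range _ _).trans (range_expAbout c).subset
  have := isPreconnected_preimage_of_isPathConnected ((isCoveringMapOn_expAbout c).mono hSc) hSpath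
    (D := expAbout c '' (expAbout c ⁻¹' ((↑) ⁻¹' D)))
    (image_mono (preimage_mono (preimage_mono hDP))) ⟨_, ζ, hζ, rfl⟩
    (by rw [preimage_image_preimage]; exact hDc)
  rwa [hSdef, preimage_image_preimage] at this

lemma isPreconnected_preimage_expAbout_compl_union (hP : IsClosed P) (hQ : IsClosed Q)
    (hPc : IsPreconnected Pᶜ) (hQc : IsPreconnected Qᶜ) (hPQ : Disjoint P Q)
    (hcP : (c : OnePoint ℂ) ∈ P) (hQ' : OnePoint.infty ∈ Q) :
    IsPreconnected (expAbout c ⁻¹' ((↑) ⁻¹' (P ∪ Q)ᶜ)) := by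
  have hc : IsPreconnected (expAbout c ⁻¹' ((↑) ⁻¹' Qᶜ)) := by
    refine isPreconnected_preimage_expAbout (.inl rfl) hQ.isOpen_compl hQc
      (disjoint_left.1 hPQ hcP) fun z hz => ?_
    have : z ≠ OnePoint.infty := (ne_of_mem_of_not_mem hQ' hz).symm
    simp only [mem_insert_iff, mem_compl_iff, mem_singleton_iff]
    tauto
  have hinfty : IsPreconnected (expAbout c ⁻¹' ((↑) ⁻¹' Pᶜ)) := by
    refine isPreconnected_preimage_expAbout (.inr rfl) hP.isOpen_compl hPc
      (disjoint_right.1 hPQ hQ') fun z hz => ?_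
    have : z ≠ c := (ne_of_mem_of_not_mem hcP hz).symm
    simp only [mem_insert_iff, mem_compl_iff, mem_singleton_iff]
    tauto
  rw [compl_union, preimage_inter, preimage_inter]
  refine isPreconnected_inter_of_union_eq_univ
    ((hP.isOpen_compl.preimage OnePoint.continuous_coe).preimage (continuous_expAbout c))
    ((hQ.isOpen_compl.preimage OnePoint.continuous_coe).preimage (continuous_expAbout c)) hinfty
    hc ?_
  rw [← preimage_union, ← preimage_union, ← compl_inter, hPQ.inter_eq, compl_empty, preimage_univ,
    preimage_univ]

/-- Otherwise the image of `C` would be a proper nonempty clopen subset of `P`, missing `s`. -/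
lemma eq_empty_of_isCompact_of_subset_preimage_expAbout (hs : s = c ∨ s = OnePoint.infty)
    (hPc : IsPreconnected P) (hsP : s ∈ P) {C : Set ℂ} (hC : C ⊆ expAbout c ⁻¹' ((↑) ⁻¹' P))
    (hCc : IsCompact C) (hdiff : IsClosed (expAbout c ⁻¹' ((↑) ⁻¹' P) \ C)) : C = ∅ := by
  let e (ζ : ℂ) : OnePoint ℂ := expAbout c ζ
  have he : Continuous e := OnePoint.continuous_coe.comp (continuous_expAbout c)
  have heo : IsOpenMap e := OnePoint.isOpenMap_coe.comp (isOpenMap_expAbout c)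
  by_contra hne
  obtain ⟨ζ, hζ⟩ := nonempty_iff_ne_empty.2 hne
  have hCo : IsOpen (e '' (e ⁻¹' P \ C)ᶜ) := heo _ hdiff.isOpen_compl
  have hCcl : IsClosed (e '' C) := (hCc.image he).isClosed
  have hcover : P ⊆ e '' (e ⁻¹' P \ C)ᶜ ∪ (e '' C)ᶜ := fun z _ => by
    refine or_iff_not_imp_right.2 fun h => ?_
    exact image_mono (fun ξ hξ h => h.2 hξ) (not_not.1 h)
  obtain ⟨_, hz, ⟨ξ, hξ, rfl⟩, hξC⟩ := hPc _ _ hCo hCcl.isOpen_compl hcover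
    ⟨e ζ, hC hζ, ζ, fun h => h.2 hζ, rfl⟩ ⟨s, hsP, fun ⟨ξ, _, h⟩ => coe_expAbout_ne hs ξ h⟩
  exact hξ ⟨hz, fun h => hξC ⟨ξ, h, rfl⟩⟩

lemma hasNoHoles_preimage_expAbout_compl_union (hP : IsClosed P) (hQ : IsClosed Q)
    (hPc : IsPreconnected P) (hQc : IsPreconnected Q) (hcP : (c : OnePoint ℂ) ∈ P)
    (hQ' : OnePoint.infty ∈ Q) : HasNoHoles (expAbout c ⁻¹' ((↑) ⁻¹' (P ∪ Q)ᶜ)) := by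
  intro C hC hCc hdiff
  have hclosed {R : Set (OnePoint ℂ)} (hR : IsClosed R) :
      IsClosed (expAbout c ⁻¹' ((↑) ⁻¹' R)) :=
    (hR.preimage OnePoint.continuous_coe).preimage (continuous_expAbout c)
  have hpart {R : Set (OnePoint ℂ)} (hR : IsClosed R) (hRc : IsPreconnected R) (hRPQ : R ⊆ P ∪ Q)
      {s : OnePoint ℂ} (hs : s = c ∨ s = OnePoint.infty) (hsR : s ∈ R) :
      C ∩ expAbout c ⁻¹' ((↑) ⁻¹' R) = ∅ := by
    refine eq_empty_of_isCompact_of_subset_preimage_expAbout hs hRc hsR inter_subset_right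
      (hCc.inter_right (hclosed hR)) ?_
    convert hdiff.inter (hclosed hR) using 1
    ext ζ
    have := @hRPQ (expAbout c ζ)
    simp only [mem_sdiff, mem_inter_iff, mem_preimage, mem_compl_iff, not_not] at *
    tauto
  refine eq_empty_of_forall_notMem fun ζ hζ => ?_
  rcases not_not.1 (hC hζ) with h | h
  · exact (hpart hP hPc subset_union_left (.inl rfl) hcP).subset ⟨hζ, h⟩
  · exact (hpart hQ hQc subset_union_right (.inr rfl) hQ').subset ⟨hζ, h⟩

lemma simplyConnectedSpace_preimage_expAbout_compl_union (hP : IsNonseparatingContinuum P)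
    (hQ : IsNonseparatingContinuum Q) (hPQ : Disjoint P Q) (hcP : (c : OnePoint ℂ) ∈ P)
    (hQ' : OnePoint.infty ∈ Q) (hne : (expAbout c ⁻¹' ((↑) ⁻¹' (P ∪ Q)ᶜ)).Nonempty) :
    SimplyConnectedSpace (expAbout c ⁻¹' ((↑) ⁻¹' (P ∪ Q)ᶜ)) :=
  have hopen : IsOpen (expAbout c ⁻¹' ((↑) ⁻¹' (P ∪ Q)ᶜ)) :=
    ((hP.isClosed.union hQ.isClosed).isOpen_compl.preimage OnePoint.continuous_coe).preimage
      (continuous_expAbout c)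
  (hasNoHoles_preimage_expAbout_compl_union hP.isClosed hQ.isClosed hP.isPreconnected
    hQ.isPreconnected hcP hQ').simplyConnectedSpace hopen
    ⟨hne, isPreconnected_preimage_expAbout_compl_union hP.isClosed hQ.isClosed
      hP.isPreconnected_compl hQ.isPreconnected_compl hPQ hcP hQ'⟩

lemma isPreconnected_pathComponentIn_inter_preimage_of_expAbout {E : Type*} [TopologicalSpace E]
    {p : E → ℂ} {D : Set ℂ} (hP : IsNonseparatingContinuum P) (hQ : IsNonseparatingContinuum Q)
    (hPQ : Disjoint P Q) (hcP : (c : OnePoint ℂ) ∈ P) (hQ' : OnePoint.infty ∈ Q)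
    (hp : IsCoveringMapOn p ((↑) ⁻¹' (P ∪ Q)ᶜ)) (hDS : D ⊆ (↑) ⁻¹' (P ∪ Q)ᶜ)
    (hD : IsPreconnected (expAbout c ⁻¹' D)) (x : E) :
    IsPreconnected (pathComponentIn (p ⁻¹' ((↑) ⁻¹' (P ∪ Q)ᶜ)) x ∩ p ⁻¹' D) := by
  set S : Set ℂ := (↑) ⁻¹' (P ∪ Q)ᶜ
  obtain hx | hx := (pathComponentIn (p ⁻¹' S) x).eq_empty_or_nonempty
  · rw [hx, empty_inter]
    exact isPreconnected_empty
  have hSc : S ⊆ {c}ᶜ := fun z hz hzc => hz (.inl (by rwa [hzc]))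
  have hSr : S ⊆ range (expAbout c) := (range_expAbout c).symm ▸ hSc
  have hxS : x ∈ p ⁻¹' S := pathComponentIn_nonempty_iff.1 hx
  obtain ⟨ζ, hζ⟩ := hSr hxS
  have hne : (expAbout c ⁻¹' S).Nonempty := ⟨ζ, by rwa [mem_preimage, hζ]⟩
  have hopen : IsOpen (expAbout c ⁻¹' S) :=
    ((hP.isClosed.union hQ.isClosed).isOpen_compl.preimage OnePoint.continuous_coe).preimage
      (continuous_expAbout c)
  have := hopen.locallyPathConnectedSpace
  have := simplyConnectedSpace_preimage_expAbout_compl_union hP hQ hPQ hcP hQ' hne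
  exact isPreconnected_pathComponentIn_inter_preimage hp ((isCoveringMapOn_expAbout c).mono hSc) hSr
    hDS hD x

lemma isPreconnected_pathComponentIn_inter_preimage_compl_union {E : Type*} [TopologicalSpace E]
    {p : E → ℂ} (hA : IsClosed A) (hAc : IsPreconnected Aᶜ) (hB : IsNonseparatingContinuum B)
    (hZ : IsNonseparatingContinuum Z) (hBA : B ⊆ A) (hZA : Disjoint Z A)
    (hc : (c : OnePoint ℂ) ∈ B ∧ OnePoint.infty ∈ Z ∨ (c : OnePoint ℂ) ∈ Z ∧ OnePoint.infty ∈ B)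
    (hp : IsCoveringMapOn p ((↑) ⁻¹' (Z ∪ B)ᶜ)) (x : E) :
    IsPreconnected (pathComponentIn (p ⁻¹' ((↑) ⁻¹' (Z ∪ B)ᶜ)) x ∩ p ⁻¹' ((↑) ⁻¹' (Z ∪ A)ᶜ)) := by
  have hZB : Disjoint Z B := hZA.mono_right hBA
  have hDS : ((↑) ⁻¹' (Z ∪ A)ᶜ : Set ℂ) ⊆ (↑) ⁻¹' (Z ∪ B)ᶜ :=
    preimage_mono (compl_subset_compl.2 (union_subset_union_right Z hBA))
  rcases hc with ⟨hcB, hZ'⟩ | ⟨hcZ, hB'⟩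
  · rw [union_comm Z B] at hp hDS ⊢
    refine isPreconnected_pathComponentIn_inter_preimage_of_expAbout hB hZ hZB.symm hcB hZ' hp
      hDS ?_ x
    rw [union_comm Z A]
    exact isPreconnected_preimage_expAbout_compl_union hA hZ.isClosed hAc hZ.isPreconnected_compl
      hZA.symm (hBA hcB) hZ'
  · exact isPreconnected_pathComponentIn_inter_preimage_of_expAbout hZ hB hZB hcZ hB' hp hDS
      (isPreconnected_preimage_expAbout_compl_union hZ.isClosed hA hZ.isPreconnected_compl hAc
        hZA hcZ (hBA hB')) x

end ExponentialCovering

section SphereComponents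

open Set Topology

/-- The connected components of a subset `F` of a topological space. -/
def componentsIn {X : Type*} [TopologicalSpace X] (F : Set X) : Set (Set X) :=
  {C | ∃ x ∈ F, C = connectedComponentIn F x}

lemma subset_of_mem_componentsIn {X : Type*} [TopologicalSpace X] {F A : Set X}
    (hA : A ∈ componentsIn F) : A ⊆ F := by
  obtain ⟨x, -, rfl⟩ := hA
  exact connectedComponentIn_subset F x

lemma eq_connectedComponentIn_of_mem {X : Type*} [TopologicalSpace X] {F A : Set X}
    (hA : A ∈ componentsIn F) {x : X} (hx : x ∈ A) : A = connectedComponentIn F x := by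
  obtain ⟨y, -, rfl⟩ := hA
  exact connectedComponentIn_eq hx

lemma eq_of_mem_componentsIn {X : Type*} [TopologicalSpace X] {F A B : Set X}
    (hA : A ∈ componentsIn F) (hB : B ∈ componentsIn F) {x : X} (hxA : x ∈ A) (hxB : x ∈ B) :
    A = B :=
  (eq_connectedComponentIn_of_mem hA hxA).trans (eq_connectedComponentIn_of_mem hB hxB).symm

lemma isClosed_of_mem_componentsIn {X : Type*} [TopologicalSpace X] {F A : Set X}
    (hF : IsClosed F) (hA : A ∈ componentsIn F) : IsClosed A := by
  obtain ⟨x, -, rfl⟩ := hA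
  exact isClosed_connectedComponentIn hF x

lemma isClosed_diff_of_mem_componentsIn {X : Type*} [TopologicalSpace X] {F A : Set X}
    (hF : IsClosed F) (hfin : (componentsIn F).Finite) (hA : A ∈ componentsIn F) :
    IsClosed (F \ A) := by
  have hunion : F \ A = ⋃₀ (componentsIn F \ {A}) := by
    ext y
    constructor
    · rintro ⟨hy, hyA⟩
      refine ⟨connectedComponentIn F y, ⟨⟨y, hy, rfl⟩, ?_⟩, mem_connectedComponentIn hy⟩
      rintro rfl
      exact hyA (mem_connectedComponentIn hy)
    · rintro ⟨C, ⟨hC, hCA⟩, hy⟩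
      exact ⟨subset_of_mem_componentsIn hC hy, fun hyA => hCA (eq_of_mem_componentsIn hC hA hy hyA)⟩
  rw [hunion, sUnion_eq_biUnion]
  exact hfin.sdiff.isClosed_biUnion fun C hC => isClosed_of_mem_componentsIn hF hC.1

lemma coe_mem_sph {s : Set ℂ} {z : ℂ} : (z : OnePoint ℂ) ∈ sph s ↔ z ∈ s :=
  OnePoint.coe_injective.mem_set_image

lemma infty_notMem_sph (s : Set ℂ) : OnePoint.infty ∉ sph s :=
  OnePoint.infty_notMem_image_coe

lemma isOpen_sph {s : Set ℂ} (hs : IsOpen s) : IsOpen (sph s) :=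
  OnePoint.isOpen_image_coe.2 hs

lemma isPreconnected_sph {s : Set ℂ} (hs : IsPreconnected s) : IsPreconnected (sph s) :=
  hs.image _ OnePoint.continuous_coe.continuousOn

lemma locallyConnectedSpace_onePoint_complex : LocallyConnectedSpace (OnePoint ℂ) := by
  have : Fact (Module.finrank ℝ (EuclideanSpace ℝ (Fin 3)) = 2 + 1) := ⟨by simp⟩
  have : LocallyConnectedSpace (Metric.sphere (0 : EuclideanSpace ℝ (Fin 3)) 1) :=
    ChartedSpace.locallyConnectedSpace (EuclideanSpace ℝ (Fin 2)) _
  let e : OnePoint ℂ ≃ₜ Metric.sphere (0 : EuclideanSpace ℝ (Fin 3)) 1 :=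
    onePointEquivSphereOfFinrankEq (V := ℂ) (by simp [Complex.finrank_real_complex])
  exact e.isOpenEmbedding.locallyConnectedSpace

lemma isNonseparatingContinuum_singleton_coe (b : ℂ) :
    IsNonseparatingContinuum {(b : OnePoint ℂ)} where
  isClosed := isClosed_singleton
  isPreconnected := isPreconnected_singleton
  isPreconnected_compl := by
    have hb : IsPreconnected ({b}ᶜ : Set ℂ) :=
      (isConnected_compl_singleton_of_one_lt_rank (by simp [Complex.rank_real_complex]) b).2
    refine (isPreconnected_sph hb).subset_closure ?_ ?_
    · rintro _ ⟨z, hz, rfl⟩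
      simpa using hz
    · have hdense : Dense (sph {b}ᶜ) :=
        OnePoint.denseRange_coe.dense_image OnePoint.continuous_coe (dense_compl_singleton b)
      rw [hdense.closure_eq]
      exact subset_univ _

lemma isNonseparatingContinuum_of_mem_componentsIn_compl_sph {U : Set ℂ}
    {A : Set (OnePoint ℂ)} (hU : IsOpen U) (hUc : IsPreconnected U)
    (hA : A ∈ componentsIn (sph U)ᶜ) : IsNonseparatingContinuum A := by
  obtain ⟨x, -, rfl⟩ := hA
  exact isNonseparatingContinuum_connectedComponentIn_compl (isOpen_sph hU)
    (isPreconnected_sph hUc) x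

/-- For a set `A` of the sphere disjoint from `U ⊆ V`, the set `ℂ̂ ∖ (Z ∪ B)` is a ring domain
contained in `V`, disjoint from `K`, and contained in `U` outside `A`. At most finitely many points
of `V` lie in the inner boundary continuum `B ⊆ A`, and one of `B`, `Z` contains `∞` while the
other contains a finite point. -/
structure IsRingAround (U V K : Set ℂ) (A B Z : Set (OnePoint ℂ)) : Prop where
  inner : IsNonseparatingContinuum B
  outer : IsNonseparatingContinuum Z
  subset : B ⊆ A
  disjoint : Disjoint Z A
  exists_center : ∃ c : ℂ, (c : OnePoint ℂ) ∈ B ∧ OnePoint.infty ∈ Z ∨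
    (c : OnePoint ℂ) ∈ Z ∧ OnePoint.infty ∈ B
  sph_subset : sph K ⊆ Z
  compl_union_subset : (Z ∪ A)ᶜ ⊆ sph U
  ring_subset : (Z ∪ B)ᶜ ⊆ sph V
  finite : ((↑) ⁻¹' B ∩ V).Finite

/-- If `A` meets `ℂ̂ ∖ V`, take the unique component of `ℂ̂ ∖ V` inside `A`, otherwise a point. -/
lemma exists_isNonseparatingContinuum_subset {U V : Set ℂ} {A : Set (OnePoint ℂ)}
    (hVo : IsOpen V) (hVc : IsPreconnected V) (hUV : U ⊆ V) (hA : A ∈ componentsIn (sph U)ᶜ)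
    (huniq : {B ∈ componentsIn (sph V)ᶜ | B ⊆ A}.Subsingleton) :
    ∃ B ⊆ A, IsNonseparatingContinuum B ∧ B.Nonempty ∧ A \ sph V ⊆ B ∧
      ((↑) ⁻¹' B ∩ V).Finite := by
  have hcomp {y} (hyA : y ∈ A) (hyV : y ∉ sph V) :
      connectedComponentIn (sph V)ᶜ y ∈ {B ∈ componentsIn (sph V)ᶜ | B ⊆ A} := by
    refine ⟨⟨y, hyV, rfl⟩, ?_⟩
    rw [eq_connectedComponentIn_of_mem hA hyA]
    exact connectedComponentIn_mono y (compl_subset_compl.2 (image_mono hUV))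
  obtain ⟨y, hyA, hyV⟩ | hAV := (A \ sph V).eq_empty_or_nonempty.symm
  · refine ⟨_, (hcomp hyA hyV).2, isNonseparatingContinuum_of_mem_componentsIn_compl_sph hVo hVc
      (hcomp hyA hyV).1, ⟨y, mem_connectedComponentIn hyV⟩, fun y' hy' => ?_, ?_⟩
    · rw [huniq (hcomp hyA hyV) (hcomp hy'.1 hy'.2)]
      exact mem_connectedComponentIn hy'.2
    · convert finite_empty
      exact disjoint_iff_inter_eq_empty.1 <| disjoint_left.2 fun z hz hzV =>
        connectedComponentIn_subset _ _ hz (coe_mem_sph.2 hzV)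
  · obtain ⟨x, hx, rfl⟩ := id hA
    have hxA := mem_connectedComponentIn hx
    obtain ⟨b, -, rfl⟩ : x ∈ sph V := sdiff_eq_empty.1 hAV hxA
    refine ⟨{↑b}, singleton_subset_iff.2 hxA, isNonseparatingContinuum_singleton_coe b,
      singleton_nonempty _, by simp [hAV], (finite_singleton b).subset fun z hz => ?_⟩
    exact OnePoint.coe_injective hz.1

lemma exists_isRingAround {U V K : Set ℂ} {A : Set (OnePoint ℂ)} (hUo : IsOpen U)
    (hUc : IsConnected U) (hVo : IsOpen V) (hVc : IsPreconnected V) (hUV : U ⊆ V)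
    (hK : IsCompact K) (hKU : K ⊆ U) (hfin : (componentsIn (sph U)ᶜ).Finite)
    (hA : A ∈ componentsIn (sph U)ᶜ)
    (huniq : {B ∈ componentsIn (sph V)ᶜ | B ⊆ A}.Subsingleton) :
    ∃ B Z, IsRingAround U V K A B Z := by
  have := locallyConnectedSpace_onePoint_complex
  obtain ⟨B, hBA, hB, ⟨y, hyB⟩, hAVB, hBfin⟩ :=
    exists_isNonseparatingContinuum_subset hVo hVc hUV hA huniq
  obtain ⟨u, hu⟩ := hUc.nonempty
  have hAU := subset_of_mem_componentsIn hA
  have hclosed : IsClosed (sph (insert u K) ∪ ((sph U)ᶜ \ A)) :=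
    ((hK.insert u).image OnePoint.continuous_coe).isClosed.union
      (isClosed_diff_of_mem_componentsIn (isOpen_sph hUo).isClosed_compl hfin hA)
  have hdisj : Disjoint (sph (insert u K) ∪ ((sph U)ᶜ \ A)) A :=
    .union_left (disjoint_compl_right.mono (image_mono (insert_subset hu hKU)) hAU)
      disjoint_sdiff_left
  obtain ⟨Z, hZ, hFZ, hZA⟩ :=
    (isNonseparatingContinuum_of_mem_componentsIn_compl_sph hUo hUc.isPreconnected hA
      ).exists_superset_disjoint ⟨y, hBA hyB⟩ hclosed hdisj
  have hcompl {z} (hz : z ∉ Z) (hzU : z ∉ sph U) : z ∈ A :=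
    not_not.1 fun hzA => hz (hFZ (.inr ⟨hzU, hzA⟩))
  refine ⟨B, Z, hB, hZ, hBA, hZA, ?_, ?_, ?_, ?_, hBfin⟩
  · by_cases hinf : OnePoint.infty ∈ A
    · exact ⟨u, .inr ⟨hFZ (.inl (coe_mem_sph.2 (mem_insert u K))),
        hAVB ⟨hinf, infty_notMem_sph V⟩⟩⟩
    · obtain ⟨c, rfl⟩ := OnePoint.ne_infty_iff_exists.1 fun h => hinf (h ▸ hBA hyB)
      exact ⟨c, .inl ⟨hyB, hFZ (.inr ⟨infty_notMem_sph U, hinf⟩)⟩⟩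
  · exact ((image_mono (subset_insert u K)).trans subset_union_left).trans hFZ
  · exact fun z hz => not_not.1 fun hzU => hz (.inr (hcompl (fun h => hz (.inl h)) hzU))
  · refine fun z hz => not_not.1 fun hzV => hz (.inr (hAVB ⟨hcompl (fun h => hz (.inl h)) ?_, hzV⟩))
    exact fun hzU => hzV (image_mono hUV hzU)

end SphereComponents

section RingLemma

open Set Topology

variable {E : Type*} [TopologicalSpace E] {p : E → ℂ} {U V K : Set ℂ} {A B Z : Set (OnePoint ℂ)}

lemma IsRingAround.mem_of_notMem (h : IsRingAround U V K A B Z) {z : ℂ}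
    (hz : z ∈ ((↑) ⁻¹' (Z ∪ B)ᶜ : Set ℂ)) (hzU : z ∉ U) : (z : OnePoint ℂ) ∈ A := by
  by_contra hzA
  refine hzU (coe_mem_sph.1 (h.compl_union_subset ?_))
  rintro (hzZ | hzA')
  exacts [hz (.inl hzZ), hzA hzA']

lemma IsRingAround.ring_inter (h : IsRingAround U V K A B Z) (hAU : A ⊆ (sph U)ᶜ) :
    ((↑) ⁻¹' (Z ∪ B)ᶜ : Set ℂ) ∩ U = (↑) ⁻¹' (Z ∪ A)ᶜ := by
  ext z
  constructor
  · rintro ⟨hz, hzU⟩ (hzZ | hzA)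
    exacts [hz (.inl hzZ), hAU hzA (coe_mem_sph.2 hzU)]
  · exact fun hz => ⟨fun hzB => hz (union_subset_union_right Z h.subset hzB),
      coe_mem_sph.1 (h.compl_union_subset hz)⟩

lemma IsRingAround.isPreconnected_pathComponentIn_inter (h : IsRingAround U V K A B Z)
    (hA : IsNonseparatingContinuum A) (hAU : A ⊆ (sph U)ᶜ) (hcov : IsCoveringMapOn p (V \ K))
    (x : E) : IsPreconnected (pathComponentIn (p ⁻¹' ((↑) ⁻¹' (Z ∪ B)ᶜ)) x ∩ p ⁻¹' U) := by
  have hring : IsCoveringMapOn p ((↑) ⁻¹' (Z ∪ B)ᶜ) := hcov.mono fun z hz =>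
    ⟨coe_mem_sph.1 (h.ring_subset hz), fun hzK => hz (.inl (h.sph_subset (coe_mem_sph.2 hzK)))⟩
  have hinter : pathComponentIn (p ⁻¹' ((↑) ⁻¹' (Z ∪ B)ᶜ)) x ∩ p ⁻¹' U =
      pathComponentIn (p ⁻¹' ((↑) ⁻¹' (Z ∪ B)ᶜ)) x ∩ p ⁻¹' ((↑) ⁻¹' (Z ∪ A)ᶜ) := by
    rw [← h.ring_inter hAU, preimage_inter, ← inter_assoc,
      inter_eq_self_of_subset_left pathComponentIn_subset]
  obtain ⟨c, hc⟩ := h.exists_center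
  rw [hinter]
  exact isPreconnected_pathComponentIn_inter_preimage_compl_union hA.isClosed
    hA.isPreconnected_compl h.inner h.outer h.subset h.disjoint hc hring x

lemma union_iUnion_ring_eq {B Z : Set (OnePoint ℂ) → Set (OnePoint ℂ)} (hUV : U ⊆ V)
    (h : ∀ A ∈ componentsIn (sph U)ᶜ, IsRingAround U V K A (B A) (Z A)) :
    U ∪ ⋃ A ∈ componentsIn (sph U)ᶜ, (↑) ⁻¹' (Z A ∪ B A)ᶜ =
      V \ ⋃ A ∈ componentsIn (sph U)ᶜ, (↑) ⁻¹' B A := by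
  have hUB {A} (hA : A ∈ componentsIn (sph U)ᶜ) {z : ℂ} (hz : z ∈ U) : (z : OnePoint ℂ) ∉ B A :=
    fun hzB => subset_of_mem_componentsIn hA ((h A hA).subset hzB) (coe_mem_sph.2 hz)
  refine subset_antisymm (union_subset ?_ (iUnion₂_subset ?_)) ?_
  · exact fun z hz => ⟨hUV hz, by simpa using fun A hA => hUB hA hz⟩
  · refine fun A hA z hz => ⟨coe_mem_sph.1 ((h A hA).ring_subset hz), fun hzB => ?_⟩
    obtain ⟨A', hA', hzB⟩ := mem_iUnion₂.1 hzB
    have hzA := (h A hA).mem_of_notMem hz fun hzU => hUB hA' hzU hzB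
    obtain rfl := eq_of_mem_componentsIn hA hA' hzA ((h A' hA').subset hzB)
    exact hz (.inr hzB)
  · refine fun z ⟨_, hzB⟩ => or_iff_not_imp_left.2 fun hzU => ?_
    have hz : (z : OnePoint ℂ) ∈ (sph U)ᶜ := fun h => hzU (coe_mem_sph.1 h)
    have hA : connectedComponentIn (sph U)ᶜ (z : OnePoint ℂ) ∈ componentsIn (sph U)ᶜ :=
      ⟨_, hz, rfl⟩
    refine mem_biUnion hA ?_
    rintro (hzZ | hzB')
    · exact disjoint_left.1 (h _ hA).disjoint hzZ (mem_connectedComponentIn hz)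
    · exact hzB (mem_biUnion hA hzB')

/-- Every component `A` of `ℂ̂ ∖ U` has a ring domain around it over which `p` is a covering.
Adjoining to `p ⁻¹' U` the components of the preimages of these rings gives `E` without finitely
many fibres, which is connected; as each adjoined component meets `p ⁻¹' U` in a connected set,
`p ⁻¹' U` is connected as well. -/
lemma isPreconnected_preimage_of_isCoveringMapOn_diff [LocallyPathConnectedSpace E]
    (hp : Continuous p) (hpV : ∀ e, p e ∈ V) (hUo : IsOpen U) (hUc : IsConnected U)
    (hVo : IsOpen V) (hVc : IsPreconnected V) (hUV : U ⊆ V)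
    (hfin : (componentsIn (sph U)ᶜ).Finite)
    (huniq : ∀ A ∈ componentsIn (sph U)ᶜ, {B ∈ componentsIn (sph V)ᶜ | B ⊆ A}.Subsingleton)
    (hK : IsCompact K) (hKU : K ⊆ U) (hcov : IsCoveringMapOn p (V \ K))
    (hE : ∀ T : Set ℂ, T.Finite → IsPreconnected (p ⁻¹' T)ᶜ) : IsPreconnected (p ⁻¹' U) := by
  have hring (A) (hA : A ∈ componentsIn (sph U)ᶜ) : ∃ B Z, IsRingAround U V K A B Z :=
    exists_isRingAround hUo hUc hVo hVc hUV hK hKU hfin hA (huniq A hA)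
  choose! B Z hBZ using hring
  let R (A : Set (OnePoint ℂ)) : Set ℂ := (↑) ⁻¹' (Z A ∪ B A)ᶜ
  have hRo {A} (hA : A ∈ componentsIn (sph U)ᶜ) : IsOpen (p ⁻¹' R A) :=
    (((hBZ A hA).outer.isClosed.union (hBZ A hA).inner.isClosed).isOpen_compl.preimage
      OnePoint.continuous_coe).preimage hp
  refine isPreconnected_of_isPreconnected_union_sUnion (hUo.preimage hp)
    (𝒬 := {Q | ∃ A ∈ componentsIn (sph U)ᶜ, ∃ x ∈ p ⁻¹' R A, pathComponentIn (p ⁻¹' R A) x = Q})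
    ?_ ?_ ?_ ?_
  · rintro _ ⟨A, hA, x, -, rfl⟩
    exact (hRo hA).pathComponentIn x
  · rintro _ ⟨A, hA, x, -, rfl⟩
    exact (hBZ A hA).isPreconnected_pathComponentIn_inter
      (isNonseparatingContinuum_of_mem_componentsIn_compl_sph hUo hUc.isPreconnected hA)
      (subset_of_mem_componentsIn hA) hcov x
  · rintro _ ⟨A, hA, x, -, rfl⟩ _ ⟨A', hA', x', -, rfl⟩ hne e ⟨he, he'⟩
    by_contra heU
    have heR : e ∈ p ⁻¹' R A := pathComponentIn_subset he
    have heR' : e ∈ p ⁻¹' R A' := pathComponentIn_subset he'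
    obtain rfl := eq_of_mem_componentsIn hA hA' ((hBZ A hA).mem_of_notMem heR heU)
      ((hBZ A' hA').mem_of_notMem heR' heU)
    exact hne ((pathComponentIn_congr he).symm.trans (pathComponentIn_congr he'))
  · convert hE (⋃ A ∈ componentsIn (sph U)ᶜ, (↑) ⁻¹' B A ∩ V)
      (hfin.biUnion fun A hA => (hBZ A hA).finite) using 1
    ext e
    have hunion := Set.ext_iff.1 (union_iUnion_ring_eq hUV hBZ) (p e)
    simp only [mem_union, mem_sdiff, mem_iUnion₂, hpV e, true_and] at hunion
    simp only [mem_compl_iff, mem_preimage, mem_iUnion₂, mem_inter_iff, hpV e, and_true]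
    refine .trans (or_congr_right ⟨?_, ?_⟩) hunion
    · rintro ⟨_, ⟨A, hA, x, -, rfl⟩, he⟩
      exact ⟨A, hA, (pathComponentIn_subset he : e ∈ p ⁻¹' R A)⟩
    · exact fun ⟨A, hA, he⟩ => ⟨_, ⟨A, hA, e, he, rfl⟩, mem_pathComponentIn_self he⟩

end RingLemma

section ProperHolomorphic

open Set Topology

lemma isPreconnected_ball_diff_center (a : ℂ) (r : ℝ) :
    IsPreconnected (Metric.ball a r \ {a}) := by
  rcases le_or_gt r 0 with hr | hr
  · simpa [Metric.ball_eq_empty.2 hr] using isPreconnected_empty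
  rw [sdiff_eq, ← range_expAbout a, ← image_preimage_eq_inter_range, preimage_expAbout_ball a hr]
  exact (convex_halfSpace_re_lt _).isPreconnected.image _ (continuous_expAbout a).continuousOn

lemma isPreconnected_diff_of_finite {W F : Set ℂ} (hW : IsOpen W) (hWc : IsPreconnected W)
    (hF : F.Finite) : IsPreconnected (W \ F) := by
  induction F, hF using Set.Finite.induction_on with
  | empty => rwa [sdiff_empty]
  | @insert a F _ hF ih =>
    rw [insert_eq, union_comm, ← sdiff_sdiff]
    have hWF : IsOpen (W \ F) := hW.sdiff hF.isClosed
    by_cases ha : a ∈ W \ F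
    · obtain ⟨r, hr, hball⟩ := Metric.isOpen_iff.1 hWF a ha
      exact isPreconnected_diff_singleton hWF ih Metric.isOpen_ball (Metric.mem_ball_self hr) hball
        (isPreconnected_ball_diff_center a r)
    · rwa [sdiff_singleton_eq_self ha]

/-- A proper holomorphic map `f : W → V` between plane sets. Only the values of `f : ℂ → ℂ` on
`W` matter, and properness is stated through the preimages of compact sets in `W`. -/
structure IsProperHolomorphic (f : ℂ → ℂ) (W V : Set ℂ) : Prop where
  isOpen : IsOpen W
  differentiableOn : DifferentiableOn ℂ f W
  mapsTo : MapsTo f W V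
  isCompact_preimage : ∀ K ⊆ V, IsCompact K → IsCompact {z ∈ W | f z ∈ K}

namespace IsProperHolomorphic

variable {f g : ℂ → ℂ} {U V W : Set ℂ}

protected lemma id (hV : IsOpen V) : IsProperHolomorphic id V V where
  isOpen := hV
  differentiableOn := differentiableOn_id
  mapsTo := mapsTo_id V
  isCompact_preimage K hKV hK := by
    rwa [show {z ∈ V | id z ∈ K} = K from inter_eq_right.2 hKV]

protected lemma comp (hf : IsProperHolomorphic f W V) (hg : IsProperHolomorphic g U V)
    (hWV : W ⊆ V) :
    IsProperHolomorphic (f ∘ g) {z ∈ U | g z ∈ W} V where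
  isOpen := hg.differentiableOn.continuousOn.isOpen_inter_preimage hg.isOpen hf.isOpen
  differentiableOn := hf.differentiableOn.comp
    (hg.differentiableOn.mono fun _ hz => hz.1) fun _ hz => hz.2
  mapsTo _ hz := hf.mapsTo hz.2
  isCompact_preimage K hKV hK := by
    convert! hg.isCompact_preimage {z ∈ W | f z ∈ K} (fun z hz => hWV hz.1)
      (hf.isCompact_preimage K hKV hK) using 1
    exact ext fun z => and_assoc

lemma continuous_domRestrict (hf : IsProperHolomorphic f W V) : Continuous fun e : W => f e :=
  continuousOn_iff_continuous_domRestrict.1 hf.differentiableOn.continuousOn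

lemma isProperMap_restrict [LocallyCompactSpace V] (hf : IsProperHolomorphic f W V) :
    IsProperMap (hf.mapsTo.restrict f W V) := by
  refine isProperMap_iff_isCompact_preimage.2
    ⟨hf.differentiableOn.continuousOn.mapsToRestrict hf.mapsTo, fun K hK => ?_⟩
  rw [IsInducing.subtypeVal.isCompact_iff]
  convert! hf.isCompact_preimage (Subtype.val '' K) (Subtype.coe_image_subset V K)
    (hK.image continuous_subtype_val) using 1
  ext z
  simp only [mem_image, mem_preimage, Subtype.exists, exists_and_right, exists_eq_right,
    mem_ofPred_eq]
  exact ⟨fun ⟨hz, h⟩ => ⟨hz, hf.mapsTo hz, h⟩, fun ⟨hz, _, h⟩ => ⟨hz, h⟩⟩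

lemma finite_fiber (hf : IsProperHolomorphic f W V) (hWc : IsPreconnected W) {w : ℂ}
    (hw : w ∈ V) : {z ∈ W | f z = w}.Finite := by
  by_contra hinf
  have hK : IsCompact {z ∈ W | f z = w} :=
    hf.isCompact_preimage {w} (singleton_subset_iff.2 hw) isCompact_singleton
  obtain ⟨z₀, hz₀, hacc⟩ := Set.Infinite.exists_accPt_of_subset_isCompact hinf hK subset_rfl
  have hconst : EqOn f (fun _ => w) W :=
    (hf.differentiableOn.analyticOnNhd hf.isOpen).eqOn_of_preconnected_of_frequently_eq
      analyticOnNhd_const hWc hz₀.1 ((accPt_iff_frequently_nhdsNE.1 hacc).mono fun _ hz => hz.2)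
  rw [sep_eq_self_iff_mem_true.2 hconst] at hK
  rcases isClopen_iff.1 ⟨hK.isClosed, hf.isOpen⟩ with rfl | rfl
  · exact hz₀.1
  · exact noncompact_univ ℂ hK

lemma finite_preimage (hf : IsProperHolomorphic f W V) (hWc : IsPreconnected W) {T : Set ℂ}
    (hT : T.Finite) : {z ∈ W | f z ∈ T}.Finite := by
  refine ((hT.inter_of_right V).biUnion fun w hw => hf.finite_fiber hWc hw.1).subset ?_
  exact fun z hz => mem_biUnion ⟨hf.mapsTo hz.1, hz.2⟩ ⟨hz.1, rfl⟩

lemma isLocalHomeomorphOn_restrict (hf : IsProperHolomorphic f W V) (hV : IsOpen V) :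
    IsLocalHomeomorphOn (hf.mapsTo.restrict f W V) {e : W | deriv f e ≠ 0} := by
  have hloc : IsLocalHomeomorphOn f {z ∈ W | deriv f z ≠ 0} := fun z hz => by
    have hs := ((hf.differentiableOn.analyticOnNhd hf.isOpen)
      z hz.1).hasStrictDerivAt.hasStrictFDerivAt_equiv hz.2
    exact ⟨hs.toOpenPartialHomeomorph f, hs.mem_toOpenPartialHomeomorph_source, rfl⟩
  refine .of_comp_left (g := (Subtype.val : V → ℂ)) (hloc.comp
    hf.isOpen.isOpenEmbedding_subtypeVal.isLocalHomeomorph.isLocalHomeomorphOn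
    fun e he => ⟨e.2, he⟩)
    hV.isOpenEmbedding_subtypeVal.isLocalHomeomorph.isLocalHomeomorphOn
    fun e _ => (hf.differentiableOn.continuousOn.mapsToRestrict hf.mapsTo).continuousAt

lemma isCoveringMapOn (hf : IsProperHolomorphic f W V) (hWc : IsPreconnected W) (hV : IsOpen V) :
    IsCoveringMapOn (fun e : W => f e) (V \ f '' {z ∈ W | deriv f z = 0}) := by
  have : LocallyCompactSpace V := hV.locallyCompactSpace
  intro x hx
  suffices h : IsEvenlyCovered (hf.mapsTo.restrict f W V) ⟨x, hx.1⟩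
      (hf.mapsTo.restrict f W V ⁻¹' {⟨x, hx.1⟩}) from
    (h.subtypeVal_comp V hV).to_isEvenlyCovered_preimage
  refine hf.isProperMap_restrict.isClosedMap.isEvenlyCovered_of_openPartialHomeomorph ?_ ?_
  · refine ((hf.finite_fiber hWc hx.1).preimage Subtype.val_injective.injOn).subset ?_
    exact fun e he => ⟨e.2, congrArg Subtype.val he⟩
  · intro e he
    have hex : f e = x := congrArg Subtype.val he
    obtain ⟨φ, hφ, hφe⟩ := hf.isLocalHomeomorphOn_restrict hV e
      fun h => hx.2 ⟨e, ⟨e.2, h⟩, hex⟩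
    exact ⟨φ, hφ, hφe.symm⟩

lemma isCompact_setOf_deriv_eq_zero (hf : IsProperHolomorphic f W V)
    (hUcpt : IsCompact (closure U)) (hUV : closure U ⊆ V)
    (hcrit : ∀ z ∈ W, deriv f z = 0 → f z ∈ U) : IsCompact {z ∈ W | deriv f z = 0} := by
  have hM := hf.isCompact_preimage _ hUV hUcpt
  have hderiv : ContinuousOn (deriv f) {z ∈ W | f z ∈ closure U} :=
    (hf.differentiableOn.deriv hf.isOpen).continuousOn.mono fun _ hz => hz.1
  convert! hM.of_isClosed_subset
    (hderiv.preimage_isClosed_of_isClosed hM.isClosed isClosed_singleton) inter_subset_left using 1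
  exact ext fun z => ⟨fun h => ⟨⟨h.1, subset_closure (hcrit z h.1 h.2)⟩, h.2⟩,
    fun h => ⟨h.1.1, h.2⟩⟩

lemma isPreconnected_compl_preimage (hf : IsProperHolomorphic f W V) (hWc : IsPreconnected W)
    {T : Set ℂ} (hT : T.Finite) : IsPreconnected ((fun e : W => f e) ⁻¹' T)ᶜ := by
  rw [← IsInducing.subtypeVal.isPreconnected_image]
  convert! isPreconnected_diff_of_finite hf.isOpen hWc (hf.finite_preimage hWc hT) using 1
  ext z
  simp only [mem_image, mem_compl_iff, mem_preimage, Subtype.exists, mem_sdiff, mem_ofPred_eq]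
  grind

lemma isPreconnected_preimage (hf : IsProperHolomorphic f W V) (hWc : IsPreconnected W)
    (hUo : IsOpen U) (hUc : IsConnected U) (hVo : IsOpen V) (hVc : IsPreconnected V)
    (hUcpt : IsCompact (closure U)) (hUV : closure U ⊆ V)
    (hfin : (componentsIn (sph U)ᶜ).Finite)
    (huniq : ∀ A ∈ componentsIn (sph U)ᶜ, {B ∈ componentsIn (sph V)ᶜ | B ⊆ A}.Subsingleton)
    (hcrit : ∀ z ∈ W, deriv f z = 0 → f z ∈ U) : IsPreconnected {z ∈ W | f z ∈ U} := by
  have : LocallyPathConnectedSpace W := hf.isOpen.locallyPathConnectedSpace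
  have hK : IsCompact (f '' {z ∈ W | deriv f z = 0}) :=
    (hf.isCompact_setOf_deriv_eq_zero hUcpt hUV hcrit).image_of_continuousOn
      (hf.differentiableOn.continuousOn.mono fun _ hz => hz.1)
  have hpre : IsPreconnected ((fun e : W => f e) ⁻¹' U) :=
    isPreconnected_preimage_of_isCoveringMapOn_diff hf.continuous_domRestrict
      (fun e => hf.mapsTo e.2) hUo hUc hVo hVc (subset_closure.trans hUV) hfin huniq hK
      (image_subset_iff.2 fun z hz => hcrit z hz.1 hz.2) (hf.isCoveringMapOn hWc hVo)
      fun T hT => hf.isPreconnected_compl_preimage hWc hT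
  convert! hpre.image _ continuous_subtype_val.continuousOn using 1
  exact (Subtype.image_preimage_coe W (f ⁻¹' U)).symm

lemma injOn_of_subsingleton_fiber (hf : IsProperHolomorphic f W V) (hWc : IsPreconnected W)
    (hV : IsOpen V) (hVc : IsPreconnected V) (hcrit : ∀ z ∈ W, deriv f z ≠ 0) {q : ℂ}
    (hq : q ∈ V) (hsub : {z ∈ W | f z = q}.Subsingleton) : InjOn f W := by
  have hcov := hf.isCoveringMapOn hWc hV
  rw [sep_eq_empty_iff_mem_false.2 hcrit, image_empty, sdiff_empty] at hcov
  have hinj := injOn_preimage_of_subsingleton_fiber hcov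
    (hV.isConnected_iff_isPathConnected.1 ⟨⟨q, hq⟩, hVc⟩) hq fun e he e' he' =>
      Subtype.ext (hsub ⟨e.2, he⟩ ⟨e'.2, he'⟩)
  exact fun z hz z' hz' h => congrArg Subtype.val <|
    @hinj ⟨z, hz⟩ (hf.mapsTo hz) ⟨z', hz'⟩ (hf.mapsTo hz') h

end IsProperHolomorphic

end ProperHolomorphic

section FilledJuliaSet

open Set Topology

lemma isPreconnected_iInter_of_directed {X ι : Type*} [TopologicalSpace X] [T2Space X] [Nonempty ι]
    {t : ι → Set X} (hdir : Directed (· ⊇ ·) t) (hcpt : ∀ i, IsCompact (t i))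
    (hconn : ∀ i, IsPreconnected (t i)) : IsPreconnected (⋂ i, t i) := by
  have hT : IsCompact (⋂ i, t i) := (hcpt (Classical.arbitrary ι)).of_isClosed_subset
    (isClosed_iInter fun i => (hcpt i).isClosed) (iInter_subset _ _)
  rw [isPreconnected_closed_iff]
  rintro u v hu hv huv ⟨x, hx, hxu⟩ ⟨y, hy, hyv⟩
  by_contra hdisj
  obtain ⟨O, P, hO, hP, huO, hvP, hOP⟩ := SeparatedNhds.of_isCompact_isCompact
    (hT.inter_right hu) (hT.inter_right hv)
    (disjoint_left.2 fun z hz hz' => hdisj ⟨z, hz.1, hz.2, hz'.2⟩)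
  obtain ⟨i, hi⟩ := exists_subset_nhds_of_isCompact hdir hcpt (U := O ∪ P) fun z hz =>
    (hO.union hP).mem_nhds ((huv hz).imp (fun h => huO ⟨hz, h⟩) fun h => hvP ⟨hz, h⟩)
  obtain ⟨z, -, hzO, hzP⟩ := hconn i O P hO hP hi
    ⟨x, mem_iInter.1 hx i, huO ⟨hx, hxu⟩⟩ ⟨y, mem_iInter.1 hy i, hvP ⟨hy, hyv⟩⟩
  exact disjoint_left.1 hOP hzO hzP

/-- The filled Julia set `K_g` of `g : U → V`, the points all of whose iterates stay in `U`. -/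
def filledJuliaSet (g : ℂ → ℂ) (U V : Set ℂ) : Set ℂ := ⋂ k, Vseq g U V k

variable {g : ℂ → ℂ} {U V : Set ℂ} {z : ℂ}

lemma Vseq_subset (hUV : U ⊆ V) : ∀ k, Vseq g U V k ⊆ V
  | 0 => subset_rfl
  | _ + 1 => fun _ hz => hUV hz.1

lemma Vseq_succ_subset (hUV : U ⊆ V) (k : ℕ) : Vseq g U V (k + 1) ⊆ Vseq g U V k := by
  induction k with
  | zero => exact fun z hz => hUV hz.1
  | succ k ih => exact fun z hz => ⟨hz.1, ih hz.2⟩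

lemma Vseq_succ_eq (hmaps : MapsTo g U V) (hUV : U ⊆ V) (k : ℕ) :
    Vseq g U V (k + 1) = {z ∈ Vseq g U V k | g^[k] z ∈ U} := by
  induction k with
  | zero => exact ext fun z => ⟨fun h => ⟨hUV h.1, h.1⟩, fun h => ⟨h.2, hmaps h.2⟩⟩
  | succ k ih =>
    ext z
    change z ∈ U ∧ g z ∈ Vseq g U V (k + 1) ↔ (z ∈ U ∧ g z ∈ Vseq g U V k) ∧ g^[k] (g z) ∈ U
    rw [ih, and_assoc]
    rfl

lemma nonempty_Vseq (hUV : U ⊆ V) (hsurj : SurjOn g U V) (hV : V.Nonempty) (k : ℕ) :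
    (Vseq g U V k).Nonempty := by
  induction k with
  | zero => exact hV
  | succ k ih =>
    obtain ⟨w, hw⟩ := ih
    obtain ⟨z, hz, rfl⟩ := hsurj (Vseq_subset hUV k hw)
    exact ⟨z, hz, hw⟩

lemma mem_filledJuliaSet_of_forall_iterate_mem (hUV : U ⊆ V) (hz : ∀ j, g^[j] z ∈ U) :
    z ∈ filledJuliaSet g U V := by
  refine mem_iInter.2 fun k => ?_
  induction k generalizing z with
  | zero => exact hUV (hz 0)
  | succ k ih => exact ⟨hz 0, ih fun j => hz (j + 1)⟩

lemma apply_mem_filledJuliaSet (hz : z ∈ filledJuliaSet g U V) : g z ∈ filledJuliaSet g U V :=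
  mem_iInter.2 fun k => (mem_iInter.1 hz (k + 1)).2

lemma mem_filledJuliaSet_of_apply_mem (hUV : U ⊆ V) (hz : z ∈ U)
    (hgz : g z ∈ filledJuliaSet g U V) : z ∈ filledJuliaSet g U V :=
  mem_iInter.2 fun k => Vseq_succ_subset hUV k ⟨hz, mem_iInter.1 hgz k⟩

lemma antitone_closure_Vseq_succ (hUV : U ⊆ V) :
    Antitone fun k => closure (Vseq g U V (k + 1)) :=
  antitone_nat_of_succ_le fun k => closure_mono (Vseq_succ_subset hUV (k + 1))

lemma isCompact_closure_Vseq_succ (hU : IsCompact (closure U)) (k : ℕ) :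
    IsCompact (closure (Vseq g U V (k + 1))) :=
  hU.of_isClosed_subset isClosed_closure (closure_mono fun _ hz => hz.1)

namespace IsProperHolomorphic

lemma iterate (hg : IsProperHolomorphic g U V) (hV : IsOpen V) (hUV : U ⊆ V) (k : ℕ) :
    IsProperHolomorphic g^[k] (Vseq g U V k) V := by
  induction k with
  | zero => exact .id hV
  | succ k ih => exact ih.comp hg (Vseq_subset hUV k)

lemma iterate_mem_of_deriv_eq_zero (hg : IsProperHolomorphic g U V) (hV : IsOpen V)
    (hUV : U ⊆ V) (hcrit : ∀ c ∈ U, deriv g c = 0 → ∀ k, g^[k] c ∈ U) (k : ℕ)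
    (hz : z ∈ Vseq g U V k) (hd : deriv g^[k] z = 0) : g^[k] z ∈ U := by
  induction k generalizing z with
  | zero => simp at hd
  | succ k ih =>
    have hk := hg.iterate hV hUV k
    rw [Function.iterate_succ, deriv_comp z
      (hk.differentiableOn.differentiableAt (hk.isOpen.mem_nhds hz.2))
      (hg.differentiableOn.differentiableAt (hg.isOpen.mem_nhds hz.1)), mul_eq_zero] at hd
    exact hd.elim (ih hz.2) fun h => hcrit z hz.1 h (k + 1)

lemma isPreconnected_Vseq (hg : IsProperHolomorphic g U V) (hUc : IsConnected U) (hVo : IsOpen V)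
    (hVc : IsPreconnected V) (hUcpt : IsCompact (closure U)) (hUV : closure U ⊆ V)
    (hfin : (componentsIn (sph U)ᶜ).Finite)
    (huniq : ∀ A ∈ componentsIn (sph U)ᶜ, {B ∈ componentsIn (sph V)ᶜ | B ⊆ A}.Subsingleton)
    (hcrit : ∀ c ∈ U, deriv g c = 0 → ∀ k, g^[k] c ∈ U) (k : ℕ) :
    IsPreconnected (Vseq g U V k) := by
  have hUV' : U ⊆ V := subset_closure.trans hUV
  induction k with
  | zero => exact hVc
  | succ k ih =>
    rw [Vseq_succ_eq hg.mapsTo hUV']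
    exact (hg.iterate hVo hUV' k).isPreconnected_preimage ih hg.isOpen hUc hVo hVc hUcpt hUV
      hfin huniq fun z hz hd => hg.iterate_mem_of_deriv_eq_zero hVo hUV' hcrit k hz hd

lemma closure_Vseq_succ_subset (hg : IsProperHolomorphic g U V) (hUcpt : IsCompact (closure U))
    (hUV : closure U ⊆ V) (k : ℕ) : closure (Vseq g U V (k + 1)) ⊆ Vseq g U V k := by
  have hcl (k) : closure (Vseq g U V (k + 1)) ⊆ closure U := closure_mono fun z hz => hz.1
  induction k with
  | zero => exact (hcl 0).trans hUV
  | succ k ih =>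
    have hM : IsCompact {z ∈ U | g z ∈ closure (Vseq g U V (k + 1))} :=
      hg.isCompact_preimage _ ((hcl k).trans hUV)
        (hUcpt.of_isClosed_subset isClosed_closure (hcl k))
    have hsub : Vseq g U V (k + 2) ⊆ {z ∈ U | g z ∈ closure (Vseq g U V (k + 1))} :=
      fun z hz => ⟨hz.1, subset_closure hz.2⟩
    exact (closure_minimal hsub hM.isClosed).trans fun z hz => ⟨hz.1, ih hz.2⟩

lemma filledJuliaSet_eq_iInter_closure (hg : IsProperHolomorphic g U V)
    (hUcpt : IsCompact (closure U)) (hUV : closure U ⊆ V) :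
    filledJuliaSet g U V = ⋂ k, closure (Vseq g U V (k + 1)) :=
  subset_antisymm
    (subset_iInter fun k => (iInter_subset _ (k + 1)).trans subset_closure)
    (subset_iInter fun k => (iInter_subset _ k).trans (hg.closure_Vseq_succ_subset hUcpt hUV k))

lemma isCompact_filledJuliaSet (hg : IsProperHolomorphic g U V) (hUcpt : IsCompact (closure U))
    (hUV : closure U ⊆ V) : IsCompact (filledJuliaSet g U V) := by
  rw [hg.filledJuliaSet_eq_iInter_closure hUcpt hUV]
  exact (isCompact_closure_Vseq_succ hUcpt 0).of_isClosed_subset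
    (isClosed_iInter fun _ => isClosed_closure) (iInter_subset _ 0)

lemma isConnected_filledJuliaSet (hg : IsProperHolomorphic g U V) (hUcpt : IsCompact (closure U))
    (hUV : closure U ⊆ V) (hconn : ∀ k, IsConnected (Vseq g U V (k + 1))) :
    IsConnected (filledJuliaSet g U V) := by
  have hanti := antitone_closure_Vseq_succ (g := g) (subset_closure.trans hUV)
  rw [hg.filledJuliaSet_eq_iInter_closure hUcpt hUV]
  exact ⟨IsCompact.nonempty_iInter_of_directed_nonempty_isCompact_isClosed _ hanti.directed_ge
      (fun k => (hconn k).nonempty.closure) (isCompact_closure_Vseq_succ hUcpt)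
      fun _ => isClosed_closure,
    isPreconnected_iInter_of_directed hanti.directed_ge (isCompact_closure_Vseq_succ hUcpt)
      fun k => (hconn k).isPreconnected.closure⟩

end IsProperHolomorphic

lemma exists_ne_forall_iterate_mem_of_deriv_eq_zero (hU : U ∈ 𝓝 z)
    (hg : DifferentiableAt ℂ g z) (hfix : g z = z) (hd : deriv g z = 0) :
    ∃ w ≠ z, ∀ j, g^[j] w ∈ U := by
  have hlt : ∀ᶠ w in 𝓝 z, dist (g w) z ≤ dist w z := by
    have := (hasDerivAt_iff_isLittleO.1 (hd ▸ hg.hasDerivAt)).def one_pos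
    simpa [hfix, dist_eq_norm] using this
  obtain ⟨r, hr, hball⟩ := Metric.mem_nhds_iff.1 (Filter.inter_mem hlt hU)
  have hle (w) (hw : w ∈ Metric.ball z r) : dist (g w) z ≤ dist w z := (hball hw).1
  have hmaps : MapsTo g (Metric.ball z r) (Metric.ball z r) := fun w hw => (hle w hw).trans_lt hw
  obtain ⟨w, hw, hwz⟩ : ∃ w ∈ Metric.ball z r, w ≠ z :=
    ((infinite_of_mem_nhds z (Metric.ball_mem_nhds z hr)).nontrivial).exists_ne z
  exact ⟨w, hwz, fun j => (hball (hmaps.iterate j hw)).2⟩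

lemma IsProperHolomorphic.nontrivial_filledJuliaSet (hg : IsProperHolomorphic g U V)
    (hUc : IsPreconnected U) (hVo : IsOpen V) (hVc : IsPreconnected V) (hUV : U ⊆ V)
    (hninj : ¬ InjOn g U) (hcrit : ∀ c ∈ U, deriv g c = 0 → ∀ k, g^[k] c ∈ U)
    (hne : (filledJuliaSet g U V).Nonempty) : (filledJuliaSet g U V).Nontrivial := by
  by_contra htriv
  rw [not_nontrivial_iff] at htriv
  by_cases hc : ∃ c ∈ U, deriv g c = 0
  · obtain ⟨c, hcU, hc⟩ := hc
    have hcK := mem_filledJuliaSet_of_forall_iterate_mem hUV (hcrit c hcU hc)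
    have hfix : g c = c := htriv (apply_mem_filledJuliaSet hcK) hcK
    have hU := hg.isOpen.mem_nhds hcU
    obtain ⟨w, hwc, hw⟩ := exists_ne_forall_iterate_mem_of_deriv_eq_zero hU
      (hg.differentiableOn.differentiableAt hU) hfix hc
    exact hwc (htriv (mem_filledJuliaSet_of_forall_iterate_mem hUV hw) hcK)
  · push Not at hc
    obtain ⟨q, hq⟩ := hne
    refine hninj (hg.injOn_of_subsingleton_fiber hUc hVo hVc hc (mem_iInter.1 hq 0) ?_)
    rintro z ⟨hz, rfl⟩ z' ⟨hz', h⟩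
    exact htriv (mem_filledJuliaSet_of_apply_mem hUV hz hq)
      (mem_filledJuliaSet_of_apply_mem hUV hz' (h ▸ hq))

end FilledJuliaSet

/-!
STATEMENT 15 (Proposition 5.2): Let `g : U → V` be a rational-like map:
`U, V ⊆ ℂ` nonempty connected open with `closure U` compact and contained in
`V`, the complements of `U` and `V` in `ℂ̂` have finitely many components,
`g` holomorphic on `U`, proper onto `V`, not injective, all critical orbits
stay in `U`, and each component of `ℂ̂ ∖ U` contains at most one component of
`ℂ̂ ∖ V`.  Then every `V_k` (`k ≥ 1`) is connected and the filled Julia set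
`K_g = ⋂_k V_k` is a continuum: nonempty, compact, connected, with more than
one point.
-/
theorem rationalLike_filledJulia_is_continuum (U V : Set ℂ) (g : ℂ → ℂ)
    (hUne : U.Nonempty) (hUopen : IsOpen U) (hUconn : IsPreconnected U)
    (hVne : V.Nonempty) (hVopen : IsOpen V) (hVconn : IsPreconnected V)
    (hUcpt : IsCompact (closure U)) (hUV : closure U ⊆ V)
    (hfinU : {C : Set (OnePoint ℂ) |
      ∃ x ∈ (sph U)ᶜ, C = connectedComponentIn (sph U)ᶜ x}.Finite)
    (hfinV : {C : Set (OnePoint ℂ) |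
      ∃ x ∈ (sph V)ᶜ, C = connectedComponentIn (sph V)ᶜ x}.Finite)
    (hghol : DifferentiableOn ℂ g U) (hgonto : g '' U = V)
    (hgproper : ∀ K : Set ℂ, K ⊆ V → IsCompact K → IsCompact {z ∈ U | g z ∈ K})
    (hgnoninj : ¬ Set.InjOn g U)
    (hcrit : ∀ c ∈ U, deriv g c = 0 → ∀ k : ℕ, g^[k] c ∈ U)
    (hcompUV : ∀ x ∈ (sph U)ᶜ, ∀ y₁ ∈ (sph V)ᶜ, ∀ y₂ ∈ (sph V)ᶜ,
      connectedComponentIn (sph V)ᶜ y₁ ⊆ connectedComponentIn (sph U)ᶜ x →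
      connectedComponentIn (sph V)ᶜ y₂ ⊆ connectedComponentIn (sph U)ᶜ x →
      connectedComponentIn (sph V)ᶜ y₁ = connectedComponentIn (sph V)ᶜ y₂) :
    (∀ k : ℕ, 1 ≤ k → IsConnected (Vseq g U V k)) ∧
    IsCompact (⋂ k, Vseq g U V k) ∧
    IsConnected (⋂ k, Vseq g U V k) ∧
    (⋂ k, Vseq g U V k).Nontrivial := by
  have hg : IsProperHolomorphic g U V :=
    ⟨hUopen, hghol, Set.mapsTo_iff_image_subset.2 hgonto.subset, hgproper⟩
  have hUV' : U ⊆ V := subset_closure.trans hUV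
  have huniq : ∀ A ∈ componentsIn (sph U)ᶜ,
      {B ∈ componentsIn (sph V)ᶜ | B ⊆ A}.Subsingleton := by
    rintro _ ⟨x, hx, rfl⟩ _ ⟨⟨y, hy, rfl⟩, hyx⟩ _ ⟨⟨y', hy', rfl⟩, hyx'⟩
    exact hcompUV x hx y hy y' hy' hyx hyx'
  have hconn (k) : IsConnected (Vseq g U V k) :=
    ⟨nonempty_Vseq hUV' hgonto.superset hVne k, hg.isPreconnected_Vseq ⟨hUne, hUconn⟩ hVopen
      hVconn hUcpt hUV hfinU huniq hcrit k⟩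
  have hK : IsConnected (filledJuliaSet g U V) :=
    hg.isConnected_filledJuliaSet hUcpt hUV fun k => hconn (k + 1)
  exact ⟨fun k _ => hconn k, hg.isCompact_filledJuliaSet hUcpt hUV, hK,
    hg.nontrivial_filledJuliaSet hUconn hVopen hVconn hUV' hgnoninj hcrit hK.nonempty⟩

end
end
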